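/- arXiv:2104.13170 — 2 statements merged into one kernel-verified Lean document; each statement's English description precedes it below -/
import Mathlib

section
/- Let 𝕂 = ℚ(√d) be a real quadratic field of class number one with d > 1 squarefree, d ≡ 3 (mod 4), and fix 𝒞 ∈ ℕ. Then there is a constant c = c(𝒞, 𝕂) such that for all N ≥ 3, |∑_{𝔰∈ℙ} Ψ(𝔰) − (1/log N)·∑_{𝔫∈ℐ} Λ(𝔫)·Ψ(𝔫)| ≤ c · N·log log N / log² N. -/
open NumberField

open scoped Classical

set_option synthInstance.maxHeartbeats 1000000
set_option maxHeartbeats 1000000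

/-- The weight `f(x) = (exp(−πx²) − exp(−2πx²))^𝒞`. -/
noncomputable def fwt (C : ℕ) (x : ℝ) : ℝ :=
  (Real.exp (-Real.pi * x^2) - Real.exp (-2 * Real.pi * x^2)) ^ C

/-- The smooth weight `Ψ(𝔫) = ∑_{k ∈ 𝒪, (k) = 𝔫} f(σ₁(k)/√N) f(σ₂(k)/√N)`,
where `σ₁` is the inclusion `K ⊆ ℝ` and `σ₂` the second real embedding. -/
noncomputable def PsiW (K : Subfield ℝ) [NumberField K] (σ₂ : K →+* ℝ) (C : ℕ) (N : ℝ)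
    (n : Ideal (𝓞 K)) : ℝ :=
  ∑' k : 𝓞 K, if Ideal.span {k} = n then
    fwt C (((k : K) : ℝ) / Real.sqrt N) * fwt C (σ₂ (k : K) / Real.sqrt N) else 0

/-- The von Mangoldt function for ideals: `Λ(𝔫) = log 𝒩(𝔭)` if `𝔫 = 𝔭^k` with `𝔭` a
nonzero prime ideal and `k ≥ 1`, and `Λ(𝔫) = 0` otherwise. -/
noncomputable def LambdaIdeal (K : Subfield ℝ) [NumberField K] (n : Ideal (𝓞 K)) : ℝ :=
  if h : ∃ p : Ideal (𝓞 K), (∃ k : ℕ, 1 ≤ k ∧ n = p ^ k) ∧ p.IsPrime ∧ p ≠ ⊥ then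
    Real.log (Ideal.absNorm h.choose) else 0

/-! ### Analytic weight estimates -/

/-- The majorant `w(y) = min(1, y^{-3/2})`. -/
noncomputable def wmaj (y : ℝ) : ℝ := min 1 (1 / (Real.sqrt y) ^ 3)

lemma wmaj_nonneg (y : ℝ) : 0 ≤ wmaj y := by unfold wmaj; positivity

lemma gbase_bounds (x : ℝ) :
    0 ≤ Real.exp (-Real.pi * x^2) - Real.exp (-2 * Real.pi * x^2) ∧
    Real.exp (-Real.pi * x^2) - Real.exp (-2 * Real.pi * x^2) ≤ 1 ∧
    Real.exp (-Real.pi * x^2) - Real.exp (-2 * Real.pi * x^2) ≤ 4 * x^2 ∧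
    (Real.exp (-Real.pi * x^2) - Real.exp (-2 * Real.pi * x^2)) * x^2 ≤ 1 ∧
    (Real.exp (-Real.pi * x^2) - Real.exp (-2 * Real.pi * x^2)) * (x^2)^2 ≤ 2 := by
  have hpi := Real.pi_gt_three
  have hpi4 := Real.pi_le_four
  set z := Real.pi * x^2 with hz
  have hz0 : 0 ≤ z := by positivity
  have hxz : x^2 ≤ z := by nlinarith [sq_nonneg x]
  have hzx : z ≤ 4 * x^2 := by nlinarith [sq_nonneg x]
  have e1 : Real.exp (-Real.pi * x^2) = Real.exp (-z) := by rw [hz]; ring_nf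
  have e2 : Real.exp (-2 * Real.pi * x^2) = Real.exp (-z) * Real.exp (-z) := by
    rw [← Real.exp_add, hz]; ring_nf
  rw [e1, e2]
  set E := Real.exp (-z) with hE
  have hE0 : 0 < E := Real.exp_pos _
  have hE1 : E ≤ 1 := Real.exp_le_one_iff.mpr (by linarith)
  have hEz : 1 - z ≤ E := by have := Real.add_one_le_exp (-z); linarith
  have hq := Real.quadratic_le_exp_of_nonneg hz0
  have hEE : E * Real.exp z = 1 := by rw [hE, ← Real.exp_add]; simp
  have hEq : E * (1 + z + z^2/2) ≤ 1 := by
    exact (mul_le_mul_of_nonneg_left hq hE0.le).trans_eq hEE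
  have hx0 := sq_nonneg x
  have hgE : E - E * E ≤ E := by nlinarith
  have hEz0 : 0 ≤ E * z := by positivity
  have hEz2 : 0 ≤ E * z^2 := by positivity
  refine ⟨by nlinarith, by nlinarith, by nlinarith, ?_, ?_⟩
  · calc (E - E * E) * x^2 ≤ E * z := by gcongr
      _ ≤ 1 := by nlinarith
  · calc (E - E * E) * (x^2)^2 ≤ E * z^2 := by gcongr
      _ ≤ 2 := by nlinarith

lemma fwt_nonneg (C : ℕ) (x : ℝ) : 0 ≤ fwt C x := pow_nonneg (gbase_bounds x).1 C

lemma fwt_bounds (C : ℕ) (hC : 0 < C) (x : ℝ) :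
    fwt C x ≤ 1 ∧ fwt C x ≤ 4 * x^2 ∧ fwt C x * x^2 ≤ 1 ∧ fwt C x * (x^2)^2 ≤ 2 := by
  obtain ⟨h0, h1, h2, h3, h4⟩ := gbase_bounds x
  have h : fwt C x ≤ Real.exp (-Real.pi * x^2) - Real.exp (-2 * Real.pi * x^2) :=
    pow_le_of_le_one h0 h1 hC.ne'
  have hx0 := sq_nonneg x
  refine ⟨h.trans h1, h.trans h2, le_trans ?_ h3, le_trans ?_ h4⟩ <;> gcongr

lemma log_factor (y : ℝ) (hy : 0 < y) :
    y ≤ 1 ∧ (1 + |Real.log y|)^2 * y ≤ 4 ∨ 1 ≤ y ∧ (1 + |Real.log y|)^2 ≤ 4 * y := by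
  have hs : 0 < Real.sqrt y := Real.sqrt_pos.mpr hy
  have hss : Real.sqrt y ^ 2 = y := Real.sq_sqrt hy.le
  have hl : Real.log y = 2 * Real.log (Real.sqrt y) := by
    rw [Real.log_sqrt hy.le]; ring
  rcases le_total y 1 with h | h
  · left
    refine ⟨h, ?_⟩
    have h1 := Real.log_le_sub_one_of_pos (inv_pos.mpr hs)
    rw [Real.log_inv] at h1
    have h2 : |Real.log y| = - Real.log y := abs_of_nonpos (Real.log_nonpos hy.le h)
    have h3 : 1 + |Real.log y| ≤ 2 * (Real.sqrt y)⁻¹ := by rw [h2, hl]; linarith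
    calc (1 + |Real.log y|)^2 * y ≤ (2 * (Real.sqrt y)⁻¹)^2 * y := by gcongr
      _ = 4 := by rw [mul_pow, inv_pow, hss]; field_simp; norm_num
  · right
    refine ⟨h, ?_⟩
    have h1 := Real.log_le_sub_one_of_pos hs
    have h2 : |Real.log y| = Real.log y := abs_of_nonneg (Real.log_nonneg h)
    have h3 : 1 + |Real.log y| ≤ 2 * (Real.sqrt y) := by rw [h2, hl]; linarith
    calc (1 + |Real.log y|)^2 ≤ (2 * (Real.sqrt y))^2 := by gcongr
      _ = 4 * y := by rw [mul_pow, hss]; norm_num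

lemma pair_bound_aux (G y m : ℝ) (hy : 0 < y) (hm : 0 ≤ m)
    (h1 : G ≤ 4 * (y * m)) (h2 : G * y^3 ≤ 2 * m) :
    G * (1 + |Real.log y|)^2 ≤ 16 * wmaj y * m := by
  have hs : 0 < Real.sqrt y := Real.sqrt_pos.mpr hy
  have hss : Real.sqrt y ^ 2 = y := Real.sq_sqrt hy.le
  rcases log_factor y hy with ⟨hy1, h⟩ | ⟨hy1, h⟩
  · have hw : wmaj y = 1 := by
      unfold wmaj
      apply min_eq_left
      rw [le_div_iff₀ (by positivity), one_mul]
      exact pow_le_one₀ hs.le (Real.sqrt_le_one.mpr hy1)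
    rw [hw]
    calc G * (1 + |Real.log y|)^2 ≤ 4 * (y * m) * (1 + |Real.log y|)^2 := by gcongr
      _ = 4 * m * ((1 + |Real.log y|)^2 * y) := by ring
      _ ≤ 4 * m * 4 := by gcongr
      _ = _ := by ring
  · have hs1 : 1 ≤ Real.sqrt y := Real.one_le_sqrt.mpr hy1
    have hw : wmaj y = 1 / (Real.sqrt y)^3 := by
      unfold wmaj
      apply min_eq_right
      rw [div_le_one (by positivity)]
      exact one_le_pow₀ hs1
    have hG : G ≤ 2 * m / y^3 := by rwa [le_div_iff₀ (by positivity)]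
    rw [hw]
    calc G * (1 + |Real.log y|)^2 ≤ (2 * m / y^3) * (1 + |Real.log y|)^2 := by gcongr
      _ ≤ (2 * m / y^3) * (4 * y) := by gcongr
      _ = 8 * m * (1 / y^2) := by field_simp; ring
      _ ≤ 8 * m * (1 / (Real.sqrt y)^3) := by
          gcongr
          nth_rewrite 2 [← hss]
          rw [← pow_mul]
          exact pow_le_pow_right₀ hs1 (by norm_num)
      _ ≤ _ := by
          have : 0 ≤ m * (1 / (Real.sqrt y)^3) := by positivity
          linarith

lemma exp_neg_abs_log_div (a b : ℝ) (ha : 0 < a) (hab : a ≤ b) :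
    Real.exp (-|Real.log (a / b)|) = a / b := by
  have hb : 0 < b := ha.trans_le hab
  rw [abs_of_nonpos (Real.log_nonpos (by positivity) (div_le_one_of_le₀ hab hb.le)), neg_neg,
    Real.exp_log (by positivity)]

lemma pair_bound_le (C : ℕ) (hC : 0 < C) (s t N : ℝ) (hs : s ≠ 0) (hst : |s| ≤ |t|) (hN : 0 < N) :
    fwt C (s / Real.sqrt N) * fwt C (t / Real.sqrt N) * (1 + |Real.log (|s| * |t| / N)|)^2
      ≤ 16 * wmaj (|s| * |t| / N) * Real.exp (-|Real.log (|s| / |t|)|) := by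
  have ha : 0 < |s| := abs_pos.mpr hs
  have hb : 0 < |t| := ha.trans_le hst
  rw [exp_neg_abs_log_div _ _ ha hst]
  obtain ⟨f1, f2, f3, f4⟩ := fwt_bounds C hC (s / Real.sqrt N)
  obtain ⟨g1, g2, g3, g4⟩ := fwt_bounds C hC (t / Real.sqrt N)
  have hf := fwt_nonneg C (s / Real.sqrt N)
  have hg := fwt_nonneg C (t / Real.sqrt N)
  have hu : (s / Real.sqrt N)^2 = |s|^2 / N := by rw [div_pow, Real.sq_sqrt hN.le, sq_abs]
  have hv : (t / Real.sqrt N)^2 = |t|^2 / N := by rw [div_pow, Real.sq_sqrt hN.le, sq_abs]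
  rw [hu] at f2 f3 f4
  rw [hv] at g2 g3 g4
  set F := fwt C (s / Real.sqrt N)
  set G := fwt C (t / Real.sqrt N)
  set a := |s|
  set b := |t|
  apply pair_bound_aux _ _ _ (by positivity) (by positivity)
  · have : a * b / N * (a / b) = a^2 / N := by field_simp
    rw [this]
    calc F * G ≤ (4 * (a^2/N)) * 1 := by gcongr
      _ = _ := by ring
  · have : (F * (a^2/N)) * (G * (b^2/N)^2) ≤ 1 * 2 := by gcongr
    have h2 : F * G * (a * b / N)^3 = ((F * (a^2/N)) * (G * (b^2/N)^2)) * (a / b) := by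
      field_simp
    rw [h2]
    have : 0 < a / b := by positivity
    nlinarith

lemma pair_bound (C : ℕ) (hC : 0 < C) (s t N : ℝ) (hs : s ≠ 0) (ht : t ≠ 0) (hN : 0 < N) :
    fwt C (s / Real.sqrt N) * fwt C (t / Real.sqrt N) * (1 + |Real.log (|s| * |t| / N)|)^2
      ≤ 16 * wmaj (|s| * |t| / N) * Real.exp (-|Real.log (|s| / |t|)|) := by
  rcases le_total |s| |t| with h | h
  · exact pair_bound_le C hC s t N hs h hN
  · have := pair_bound_le C hC t s N ht h hN
    rw [mul_comm |t| |s|, mul_comm (fwt C (t / _))] at this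
    rwa [← inv_div |t| |s|, Real.log_inv, abs_neg]

/-! ### Arithmetic of the field -/

lemma embeddings_eq (K : Subfield ℝ) [NumberField K] (hdeg : Module.finrank ℚ K = 2)
    (σ₂ : K →+* ℝ) (hne : σ₂ ≠ K.subtype) :
    (Finset.univ : Finset (K →ₐ[ℚ] ℂ)) =
      {(Complex.ofRealHom.comp K.subtype).toRatAlgHom, (Complex.ofRealHom.comp σ₂).toRatAlgHom} ∧
    (Complex.ofRealHom.comp K.subtype).toRatAlgHom ≠ (Complex.ofRealHom.comp σ₂).toRatAlgHom := by
  have h : (Complex.ofRealHom.comp K.subtype).toRatAlgHom ≠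
      (Complex.ofRealHom.comp σ₂).toRatAlgHom := by
    intro h
    apply hne
    ext x
    have := DFunLike.congr_fun h x
    simpa using this.symm
  refine ⟨?_, h⟩
  symm
  apply Finset.eq_of_subset_of_card_le (Finset.subset_univ _)
  rw [Finset.card_univ, AlgHom.card, hdeg, Finset.card_pair h]

lemma absNorm_span_eq (K : Subfield ℝ) [NumberField K] (hdeg : Module.finrank ℚ K = 2)
    (σ₂ : K →+* ℝ) (hne : σ₂ ≠ K.subtype) (k : 𝓞 K) :
    (Ideal.absNorm (Ideal.span {k}) : ℝ) = |((k : K) : ℝ)| * |σ₂ (k : K)| := by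
  obtain ⟨hu, h⟩ := embeddings_eq K hdeg σ₂ hne
  have h1 := Algebra.norm_eq_prod_embeddings ℚ ℂ (k : K)
  rw [hu, Finset.prod_pair h] at h1
  have h2 : ((Algebra.norm ℚ (k : K) : ℚ) : ℝ) = ((k : K) : ℝ) * σ₂ (k : K) := by
    have : (((Algebra.norm ℚ (k : K) : ℚ) : ℝ) : ℂ) = ((((k : K) : ℝ) * σ₂ (k : K) : ℝ) : ℂ) := by
      simpa using h1
    exact_mod_cast this
  rw [Ideal.absNorm_span_singleton, ← abs_mul, ← h2, ← Algebra.coe_norm_int]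
  push_cast
  rw [Nat.cast_natAbs]
  push_cast
  rfl

lemma finite_bounded (K : Subfield ℝ) [NumberField K] (hdeg : Module.finrank ℚ K = 2)
    (σ₂ : K →+* ℝ) (hne : σ₂ ≠ K.subtype) (B : ℝ) :
    {k : 𝓞 K | |((k : K) : ℝ)| ≤ B ∧ |σ₂ (k : K)| ≤ B}.Finite := by
  obtain ⟨hu, h⟩ := embeddings_eq K hdeg σ₂ hne
  have hf := NumberField.Embeddings.finite_of_norm_le K ℂ B
  refine Set.Finite.of_finite_image (f := fun k : 𝓞 K => (k : K)) (hf.subset ?_)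
    (fun a _ b _ hab => RingOfIntegers.ext hab)
  rintro _ ⟨k, ⟨h1, h2⟩, rfl⟩
  refine ⟨k.2, fun φ => ?_⟩
  have : φ.toRatAlgHom ∈ (Finset.univ : Finset (K →ₐ[ℚ] ℂ)) := Finset.mem_univ _
  rw [hu, Finset.mem_insert, Finset.mem_singleton] at this
  rcases this with h3 | h3
  · have := DFunLike.congr_fun h3 (k : K)
    simp only [RingHom.toRatAlgHom_apply] at this
    rw [this]; simpa using h1
  · have := DFunLike.congr_fun h3 (k : K)
    simp only [RingHom.toRatAlgHom_apply] at this
    rw [this]; simpa using h2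

/-- The number of generators of a fixed ideal with prescribed `⌊log|σ₁/σ₂|⌋` is bounded. -/
lemma bin_bound (K : Subfield ℝ) [NumberField K] (hdeg : Module.finrank ℚ K = 2)
    (σ₂ : K →+* ℝ) (hne : σ₂ ≠ K.subtype) :
    ∃ A : ℕ, ∀ n : Ideal (𝓞 K), n ≠ ⊥ → ∀ S : Finset (𝓞 K), (∀ k ∈ S, Ideal.span {k} = n) →
      ∀ j : ℤ, (∀ k ∈ S, ⌊Real.log (|((k : K) : ℝ)| / |σ₂ (k : K)|)⌋ = j) → S.card ≤ A := by
  have hfin := finite_bounded K hdeg σ₂ hne (Real.exp 1)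
  refine ⟨hfin.toFinset.card, fun n hn S hS j hj => ?_⟩
  rcases S.eq_empty_or_nonempty with rfl | ⟨k₀, hk₀⟩
  · simp
  have hne0 : ∀ k ∈ S, (k : K) ≠ 0 := by
    intro k hk h0
    apply hn
    have : k = 0 := by exact_mod_cast h0
    rw [← hS k hk, this]; simp
  have key : ∀ k ∈ S, ∃ η : 𝓞 K, k = η * k₀ ∧ η ∈ hfin.toFinset := by
    intro k hk
    have hd : Associated k₀ k := by
      rw [← Ideal.span_singleton_eq_span_singleton, hS k hk, hS k₀ hk₀]
    obtain ⟨η, hη⟩ := hd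
    refine ⟨η, by rw [← hη, mul_comm], ?_⟩
    rw [Set.Finite.mem_toFinset]
    have hN := absNorm_span_eq K hdeg σ₂ hne (η : 𝓞 K)
    rw [Ideal.span_singleton_eq_top.mpr η.isUnit, Ideal.absNorm_top, Nat.cast_one] at hN
    have e1 : ((k : K) : ℝ) = ((k₀ : K) : ℝ) * (((η : 𝓞 K) : K) : ℝ) := by rw [← hη]; simp
    have e2 : σ₂ (k : K) = σ₂ (k₀ : K) * σ₂ ((η : 𝓞 K) : K) := by rw [← hη]; simp
    have p1 : 0 < |((k₀ : K) : ℝ)| := abs_pos.mpr (by exact_mod_cast hne0 k₀ hk₀)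
    have p2 : 0 < |σ₂ (k₀ : K)| := abs_pos.mpr ((map_ne_zero σ₂).mpr (hne0 k₀ hk₀))
    set a := |(((η : 𝓞 K) : K) : ℝ)| with ha
    set b := |σ₂ ((η : 𝓞 K) : K)| with hb
    have ha0 : 0 < a := by
      rcases (abs_nonneg (((η : 𝓞 K) : K) : ℝ)).eq_or_lt with h | h
      · rw [ha, ← h] at hN; simp at hN
      · exact h
    have hb0 : 0 < b := by
      rcases (abs_nonneg (σ₂ ((η : 𝓞 K) : K))).eq_or_lt with h | h
      · rw [hb, ← h] at hN; simp at hN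
      · exact h
    have hl : Real.log (|((k : K) : ℝ)| / |σ₂ (k : K)|) =
        Real.log (|((k₀ : K) : ℝ)| / |σ₂ (k₀ : K)|) + Real.log (a / b) := by
      rw [e1, e2, abs_mul, abs_mul, ← Real.log_mul (by positivity) (by positivity)]
      rw [← ha, ← hb]
      congr 1
      field_simp
    have j1 := hj k hk
    have j2 := hj k₀ hk₀
    rw [Int.floor_eq_iff] at j1 j2
    rw [hl] at j1
    have hlog : Real.log a + Real.log b = 0 := by
      rw [← Real.log_mul ha0.ne' hb0.ne', ← hN, Real.log_one]
    rw [Real.log_div ha0.ne' hb0.ne'] at j1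
    constructor
    · exact (Real.log_le_iff_le_exp ha0).mp (by linarith [j1.1, j1.2, j2.1, j2.2])
    · exact (Real.log_le_iff_le_exp hb0).mp (by linarith [j1.1, j1.2, j2.1, j2.2])
  choose! η hη using key
  apply Finset.card_le_card_of_injOn η (fun k hk => (hη k hk).2)
  intro k hk k' hk' h
  rw [(hη k hk).1, (hη k' hk').1, h]

lemma summable_exp_abs_int : Summable (fun j : ℤ => Real.exp (1 - |(j : ℝ)|)) := by
  have h : Summable (fun n : ℕ => Real.exp (1 - (n : ℝ))) := by
    have := (Real.summable_exp_neg_nat).mul_left (Real.exp 1)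
    refine this.congr fun n => ?_
    rw [← Real.exp_add]; ring_nf
  apply Summable.of_nat_of_neg
  · simpa using h
  · simpa using h

lemma gen_sum_bound (K : Subfield ℝ) [NumberField K] (hdeg : Module.finrank ℚ K = 2)
    (σ₂ : K →+* ℝ) (hne : σ₂ ≠ K.subtype) :
    ∃ M : ℝ, 0 ≤ M ∧ ∀ n : Ideal (𝓞 K), n ≠ ⊥ → ∀ S : Finset (𝓞 K),
      (∀ k ∈ S, Ideal.span {k} = n) →
      ∑ k ∈ S, Real.exp (-|Real.log (|((k : K) : ℝ)| / |σ₂ (k : K)|)|) ≤ M := by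
  obtain ⟨A, hA⟩ := bin_bound K hdeg σ₂ hne
  refine ⟨A * ∑' j : ℤ, Real.exp (1 - |(j : ℝ)|),
    mul_nonneg (Nat.cast_nonneg _) (tsum_nonneg fun j => (Real.exp_pos _).le), ?_⟩
  intro n hn S hS
  set b : 𝓞 K → ℤ := fun k => ⌊Real.log (|((k : K) : ℝ)| / |σ₂ (k : K)|)⌋ with hb
  rw [← Finset.sum_fiberwise_of_maps_to (g := b) (t := S.image b)
    (fun k hk => Finset.mem_image_of_mem b hk)]
  calc ∑ j ∈ S.image b, ∑ k ∈ S with b k = j,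
        Real.exp (-|Real.log (|((k : K) : ℝ)| / |σ₂ (k : K)|)|)
      ≤ ∑ j ∈ S.image b, (A : ℝ) * Real.exp (1 - |(j : ℝ)|) := by
        apply Finset.sum_le_sum
        intro j _
        have hc := hA n hn (S.filter (fun k => b k = j))
          (fun k hk => hS k (Finset.mem_filter.mp hk).1) j
          (fun k hk => (Finset.mem_filter.mp hk).2)
        calc _ ≤ ∑ k ∈ S with b k = j, Real.exp (1 - |(j : ℝ)|) := by
              apply Finset.sum_le_sum
              intro k hk
              have hk2 : ⌊Real.log (|((k : K) : ℝ)| / |σ₂ (k : K)|)⌋ = j :=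
                (Finset.mem_filter.mp hk).2
              rw [Int.floor_eq_iff] at hk2
              apply Real.exp_le_exp.mpr
              have : |(j : ℝ)| ≤ |Real.log (|((k : K) : ℝ)| / |σ₂ (k : K)|)| + 1 := by
                rw [abs_le]
                constructor
                · linarith [neg_abs_le (Real.log (|((k : K) : ℝ)| / |σ₂ (k : K)|))]
                · linarith [le_abs_self (Real.log (|((k : K) : ℝ)| / |σ₂ (k : K)|))]
              linarith
          _ = (S.filter (fun k => b k = j)).card * Real.exp (1 - |(j : ℝ)|) := by
              rw [Finset.sum_const, nsmul_eq_mul]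
          _ ≤ _ := by gcongr
    _ = A * ∑ j ∈ S.image b, Real.exp (1 - |(j : ℝ)|) := by rw [Finset.mul_sum]
    _ ≤ _ := by
        gcongr
        exact summable_exp_abs_int.sum_le_tsum _ (fun j _ => (Real.exp_pos _).le)

lemma PsiW_nonneg (K : Subfield ℝ) [NumberField K] (σ₂ : K →+* ℝ) (C : ℕ) (N : ℝ)
    (n : Ideal (𝓞 K)) : 0 ≤ PsiW K σ₂ C N n := by
  unfold PsiW
  apply tsum_nonneg
  intro k
  split_ifs
  · exact mul_nonneg (fwt_nonneg _ _) (fwt_nonneg _ _)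
  · exact le_rfl

lemma PsiW_bound (K : Subfield ℝ) [NumberField K] (hdeg : Module.finrank ℚ K = 2)
    (σ₂ : K →+* ℝ) (hne : σ₂ ≠ K.subtype) (C : ℕ) (hC : 0 < C) :
    ∃ c : ℝ, 0 ≤ c ∧ ∀ N : ℝ, 0 < N → ∀ n : Ideal (𝓞 K), n ≠ ⊥ →
      PsiW K σ₂ C N n * (1 + |Real.log (Ideal.absNorm n / N)|)^2 ≤
        c * wmaj (Ideal.absNorm n / N) := by
  obtain ⟨M, hM0, hM⟩ := gen_sum_bound K hdeg σ₂ hne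
  refine ⟨16 * M, by positivity, fun N hN n hn => ?_⟩
  set L := (1 + |Real.log (Ideal.absNorm n / N)|)^2 with hL
  set w := wmaj (Ideal.absNorm n / N) with hw
  have hw0 : 0 ≤ w := wmaj_nonneg _
  have hL0 : 0 < L := by positivity
  rw [← le_div_iff₀ hL0]
  unfold PsiW
  apply tsum_le_of_sum_le' (by positivity)
  intro S
  rw [le_div_iff₀ hL0, ← Finset.sum_filter, Finset.sum_mul]
  calc _ ≤ ∑ k ∈ S with Ideal.span {k} = n,
        16 * w * Real.exp (-|Real.log (|((k : K) : ℝ)| / |σ₂ (k : K)|)|) := by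
        apply Finset.sum_le_sum
        intro k hk
        have hk2 := (Finset.mem_filter.mp hk).2
        have hk0 : (k : K) ≠ 0 := by
          intro h0
          apply hn
          have : k = 0 := by exact_mod_cast h0
          rw [← hk2, this]; simp
        have := pair_bound C hC ((k : K) : ℝ) (σ₂ (k : K)) N (by exact_mod_cast hk0)
          ((map_ne_zero σ₂).mpr hk0) hN
        rw [← absNorm_span_eq K hdeg σ₂ hne, hk2] at this
        exact this
    _ = 16 * w * ∑ k ∈ S with Ideal.span {k} = n,
        Real.exp (-|Real.log (|((k : K) : ℝ)| / |σ₂ (k : K)|)|) := by rw [Finset.mul_sum]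
    _ ≤ 16 * w * M := by
        gcongr
        exact hM n hn _ (fun k hk => (Finset.mem_filter.mp hk).2)
    _ = 16 * M * w := by ring

/-! ### Chebyshev bound for prime ideals -/

/-- The set of nonzero prime ideals. -/
def PrSet (K : Subfield ℝ) [NumberField K] : Set (Ideal (𝓞 K)) := {p | p ≠ ⊥ ∧ p.IsPrime}

lemma two_le_absNorm (K : Subfield ℝ) [NumberField K] (P : Ideal (𝓞 K)) (hP : P ∈ PrSet K) :
    2 ≤ Ideal.absNorm P := by
  have h0 : Ideal.absNorm P ≠ 0 := fun h => hP.1 (Ideal.absNorm_eq_zero_iff.mp h)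
  have h1 : Ideal.absNorm P ≠ 1 := fun h => hP.2.ne_top (Ideal.absNorm_eq_one_iff.mp h)
  omega

lemma exists_prime_under (K : Subfield ℝ) [NumberField K] (P : Ideal (𝓞 K)) (hP : P ∈ PrSet K) :
    ∃ p : ℕ, p.Prime ∧ p ≤ Ideal.absNorm P ∧ P ∣ Ideal.span {(p : 𝓞 K)} := by
  have h2 := two_le_absNorm K P hP
  have := hP.2
  have : NeZero P := ⟨hP.1⟩
  refine ⟨Ideal.absNorm (Ideal.under ℤ P), Nat.absNorm_under_prime P,
    Nat.le_of_dvd (by omega) (Int.absNorm_under_dvd_absNorm P), ?_⟩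
  rw [Ideal.dvd_span_singleton]
  have := Int.absNorm_under_mem P
  exact_mod_cast this

lemma theta_ideal (K : Subfield ℝ) [NumberField K] (hdeg : Module.finrank ℚ K = 2)
    (S : Finset (Ideal (𝓞 K))) (hS : ∀ P ∈ S, P ∈ PrSet K) (x : ℝ) (hx : 0 ≤ x)
    (hSx : ∀ P ∈ S, (Ideal.absNorm P : ℝ) ≤ x) :
    ∑ P ∈ S, Real.log (Ideal.absNorm P) ≤ 2 * Real.log 4 * x := by
  have key := fun P (hP : P ∈ S) => exists_prime_under K P (hS P hP)
  choose! r hr using key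
  rw [← Finset.sum_fiberwise_of_maps_to (g := r) (t := S.image r)
    (fun k hk => Finset.mem_image_of_mem r hk)]
  have hfib : ∀ p ∈ S.image r, ∑ P ∈ S with r P = p, Real.log (Ideal.absNorm P)
      ≤ 2 * Real.log p := by
    intro p hp
    obtain ⟨P₀, hP₀, rfl⟩ := Finset.mem_image.mp hp
    set p := r P₀
    have hpp : p.Prime := (hr P₀ hP₀).1
    have hdvd : ∏ P ∈ S with r P = p, P ∣ Ideal.span {(p : 𝓞 K)} := by
      apply Finset.prod_primes_dvd
      · intro P hP
        have := hS P (Finset.mem_filter.mp hP).1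
        exact Ideal.prime_of_isPrime this.1 this.2
      · intro P hP
        obtain ⟨h1, h2⟩ := Finset.mem_filter.mp hP
        rw [← h2]
        exact (hr P h1).2.2
    have hn : Ideal.absNorm (∏ P ∈ S with r P = p, P) ∣ p ^ 2 := by
      have := map_dvd Ideal.absNorm hdvd
      rwa [Ideal.absNorm_span_natCast, RingOfIntegers.rank, hdeg] at this
    have hle := Nat.le_of_dvd (pow_pos hpp.pos 2) hn
    rw [map_prod] at hle
    rw [← Real.log_prod]
    · have h1 : (∏ P ∈ S with r P = p, (Ideal.absNorm P : ℝ)) ≤ (p : ℝ)^2 := by exact_mod_cast hle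
      have h0 : 0 < (∏ P ∈ S with r P = p, (Ideal.absNorm P : ℝ)) := by
        apply Finset.prod_pos
        intro P hP
        have := two_le_absNorm K P (hS P (Finset.mem_filter.mp hP).1)
        exact_mod_cast (by omega : 0 < Ideal.absNorm P)
      calc _ ≤ Real.log ((p : ℝ)^2) := Real.log_le_log h0 h1
        _ = _ := by rw [Real.log_pow]; norm_num
    · intro P hP
      have := two_le_absNorm K P (hS P (Finset.mem_filter.mp hP).1)
      exact_mod_cast (by omega : Ideal.absNorm P ≠ 0)
  calc _ ≤ ∑ p ∈ S.image r, 2 * Real.log p := Finset.sum_le_sum hfib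
    _ = 2 * ∑ p ∈ S.image r, Real.log p := by rw [Finset.mul_sum]
    _ ≤ 2 * Chebyshev.theta x := by
        gcongr
        unfold Chebyshev.theta
        apply Finset.sum_le_sum_of_subset_of_nonneg
        · intro p hp
          obtain ⟨P₀, hP₀, rfl⟩ := Finset.mem_image.mp hp
          obtain ⟨h1, h2, h3⟩ := hr P₀ hP₀
          rw [Finset.mem_filter, Finset.mem_Ioc]
          refine ⟨⟨h1.pos, Nat.le_floor (le_trans ?_ (hSx P₀ hP₀))⟩, h1⟩
          exact_mod_cast h2
        · intro p hp _
          exact Real.log_natCast_nonneg p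
    _ ≤ 2 * (Real.log 4 * x) := by gcongr; exact Chebyshev.theta_le_log4_mul_x hx
    _ = _ := by ring

lemma wmaj_dyadic (y : ℝ) (_hy : 0 < y) : ∃ j : ℕ, y ≤ 4 ^ j ∧ wmaj y ≤ 8 * (1 / 8) ^ j := by
  rcases le_total y 1 with h | h
  · refine ⟨0, by simpa using h, ?_⟩
    have : wmaj y ≤ 1 := min_le_left _ _
    simp; linarith
  · obtain ⟨m, h1, h2⟩ := exists_nat_pow_near h (by norm_num : (1 : ℝ) < 4)
    refine ⟨m + 1, h2.le, (min_le_right _ _).trans ?_⟩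
    have : (2 : ℝ)^m ≤ Real.sqrt y := by
      apply Real.le_sqrt_of_sq_le
      rw [← pow_mul, mul_comm, pow_mul]; norm_num; exact h1
    calc 1 / Real.sqrt y ^ 3 ≤ 1 / ((2 : ℝ)^m)^3 := by gcongr
      _ = 8 * (1/8)^(m+1) := by
        rw [← pow_mul, mul_comm m 3, pow_mul, one_div_pow, pow_succ]; norm_num; field_simp; ring

lemma prime_sum_wmaj (K : Subfield ℝ) [NumberField K] (hdeg : Module.finrank ℚ K = 2)
    (S : Finset (Ideal (𝓞 K))) (hS : ∀ P ∈ S, P ∈ PrSet K) (N : ℝ) (hN : 0 < N) :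
    ∑ P ∈ S, Real.log (Ideal.absNorm P) * wmaj (Ideal.absNorm P / N)
      ≤ 32 * Real.log 4 * N := by
  have hpos : ∀ P ∈ S, (0 : ℝ) < Ideal.absNorm P := by
    intro P hP
    have := two_le_absNorm K P (hS P hP)
    exact_mod_cast (by omega : 0 < Ideal.absNorm P)
  have key := fun P (hP : P ∈ S) => wmaj_dyadic (Ideal.absNorm P / N) (div_pos (hpos P hP) hN)
  choose! r hr using key
  have hl4 : 0 ≤ Real.log 4 := Real.log_nonneg (by norm_num)
  rw [← Finset.sum_fiberwise_of_maps_to (g := r) (t := S.image r)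
    (fun k hk => Finset.mem_image_of_mem r hk)]
  have hfib : ∀ j ∈ S.image r, ∑ P ∈ S with r P = j,
      Real.log (Ideal.absNorm P) * wmaj (Ideal.absNorm P / N)
      ≤ 16 * Real.log 4 * N * (1/2)^j := by
    intro j _
    calc _ ≤ ∑ P ∈ S with r P = j, Real.log (Ideal.absNorm P) * (8 * (1/8)^j) := by
          apply Finset.sum_le_sum
          intro P hP
          obtain ⟨h1, h2⟩ := Finset.mem_filter.mp hP
          have := (hr P h1).2
          rw [h2] at this
          have := Real.log_natCast_nonneg (Ideal.absNorm P)
          gcongr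
      _ = (∑ P ∈ S with r P = j, Real.log (Ideal.absNorm P)) * (8 * (1/8)^j) := by
          rw [Finset.sum_mul]
      _ ≤ (2 * Real.log 4 * (4^j * N)) * (8 * (1/8)^j) := by
          gcongr
          apply theta_ideal K hdeg _ _ _ (by positivity)
          · intro P hP
            obtain ⟨h1, h2⟩ := Finset.mem_filter.mp hP
            have := (hr P h1).1
            rwa [h2, div_le_iff₀ hN] at this
          · intro P hP
            exact hS P (Finset.mem_filter.mp hP).1
      _ = 16 * Real.log 4 * N * (4^j * (1/8)^j) := by ring
      _ = _ := by rw [← mul_pow]; norm_num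
  calc _ ≤ ∑ j ∈ S.image r, 16 * Real.log 4 * N * (1/2)^j := Finset.sum_le_sum hfib
    _ = 16 * Real.log 4 * N * ∑ j ∈ S.image r, (1/2 : ℝ)^j := by rw [Finset.mul_sum]
    _ ≤ 16 * Real.log 4 * N * 2 := by
        gcongr
        exact (summable_geometric_two.sum_le_tsum _ (fun j _ => by positivity)).trans_eq
          tsum_geometric_two
    _ = _ := by ring

/-- `Λ`-type majorant on prime ideals. -/
noncomputable def Bmaj (K : Subfield ℝ) [NumberField K] (N : ℝ) : Ideal (𝓞 K) → ℝ :=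
  (PrSet K).indicator (fun P => Real.log (Ideal.absNorm P) * wmaj (Ideal.absNorm P / N))

lemma Bmaj_nonneg (K : Subfield ℝ) [NumberField K] (N : ℝ) (P : Ideal (𝓞 K)) :
    0 ≤ Bmaj K N P :=
  Set.indicator_nonneg (fun P _ => mul_nonneg (Real.log_natCast_nonneg _) (wmaj_nonneg _)) P

lemma Bmaj_sum (K : Subfield ℝ) [NumberField K] (hdeg : Module.finrank ℚ K = 2)
    (S : Finset (Ideal (𝓞 K))) (N : ℝ) (hN : 0 < N) :
    ∑ P ∈ S, Bmaj K N P ≤ 32 * Real.log 4 * N := by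
  have : ∑ P ∈ S, Bmaj K N P = ∑ P ∈ S with P ∈ PrSet K,
      Real.log (Ideal.absNorm P) * wmaj (Ideal.absNorm P / N) := by
    rw [Finset.sum_filter]
    rfl
  rw [this]
  exact prime_sum_wmaj K hdeg _ (fun P hP => (Finset.mem_filter.mp hP).2) N hN

lemma Bmaj_summable (K : Subfield ℝ) [NumberField K] (hdeg : Module.finrank ℚ K = 2)
    (N : ℝ) (hN : 0 < N) : Summable (Bmaj K N) :=
  summable_of_sum_le (Bmaj_nonneg K N) (fun S => Bmaj_sum K hdeg S N hN)

lemma Bmaj_tsum (K : Subfield ℝ) [NumberField K] (hdeg : Module.finrank ℚ K = 2)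
    (N : ℝ) (hN : 0 < N) : ∑' P, Bmaj K N P ≤ 32 * Real.log 4 * N :=
  Real.tsum_le_of_sum_le (Bmaj_nonneg K N) (fun S => Bmaj_sum K hdeg S N hN)

/-! ### Comparison of the two sums -/

lemma LambdaIdeal_nonneg (K : Subfield ℝ) [NumberField K] (n : Ideal (𝓞 K)) :
    0 ≤ LambdaIdeal K n := by
  unfold LambdaIdeal
  split_ifs
  · exact Real.log_natCast_nonneg _
  · exact le_rfl

lemma LambdaIdeal_prime (K : Subfield ℝ) [NumberField K] (n : Ideal (𝓞 K)) (hn : n ∈ PrSet K) :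
    LambdaIdeal K n = Real.log (Ideal.absNorm n) := by
  have h : ∃ p : Ideal (𝓞 K), (∃ k : ℕ, 1 ≤ k ∧ n = p ^ k) ∧ p.IsPrime ∧ p ≠ ⊥ :=
    ⟨n, ⟨1, le_rfl, (pow_one n).symm⟩, hn.2, hn.1⟩
  unfold LambdaIdeal
  rw [dif_pos h]
  obtain ⟨⟨k, hk1, hk⟩, hp, hp0⟩ := h.choose_spec
  have hnp := hn.2
  have e : h.choose = n := by
    apply le_antisymm
    · exact Ideal.IsPrime.le_of_pow_le (n := k) hk.symm.le
    · conv_lhs => rw [hk]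
      exact Ideal.pow_le_self (by omega)
  rw [e]

lemma LambdaIdeal_not_prime (K : Subfield ℝ) [NumberField K] (n : Ideal (𝓞 K))
    (hn : n ∉ PrSet K) (h0 : LambdaIdeal K n ≠ 0) :
    ∃ P ∈ PrSet K, ∃ j : ℕ, n = P ^ (j + 2) ∧ LambdaIdeal K n = Real.log (Ideal.absNorm P) := by
  by_cases h : ∃ p : Ideal (𝓞 K), (∃ k : ℕ, 1 ≤ k ∧ n = p ^ k) ∧ p.IsPrime ∧ p ≠ ⊥
  · obtain ⟨⟨k, hk1, hk⟩, hp, hp0⟩ := h.choose_spec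
    refine ⟨h.choose, ⟨hp0, hp⟩, k - 2, ?_, ?_⟩
    · have : k ≠ 1 := by
        rintro rfl
        apply hn
        rw [hk, pow_one]
        exact ⟨hp0, hp⟩
      have e : k - 2 + 2 = k := by omega
      rw [e]; exact hk
    · unfold LambdaIdeal; rw [dif_pos h]
  · exfalso; apply h0; unfold LambdaIdeal; rw [dif_neg h]

lemma log_two_gt_half : 1 / 2 < Real.log 2 := by linarith [Real.log_two_gt_d9]

lemma logN_le (q N : ℝ) (hq : 2 ≤ q) (hN : 0 < N) :
    Real.log N ≤ 2 * Real.log q * (1 + |Real.log (q / N)|) := by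
  have h1 : Real.log (q / N) = Real.log q - Real.log N :=
    Real.log_div (by linarith) hN.ne'
  have h2 : Real.log 2 ≤ Real.log q := Real.log_le_log (by norm_num) hq
  have h3 := log_two_gt_half
  have h4 := neg_abs_le (Real.log (q / N))
  have h5 := abs_nonneg (Real.log (q / N))
  nlinarith

lemma wmaj_le_inv (y : ℝ) (hy : 0 < y) : wmaj y ≤ 1 / y := by
  rcases le_total y 1 with h | h
  · exact (min_le_left _ _).trans (by rw [le_div_iff₀ hy]; linarith)
  · refine (min_le_right _ _).trans ?_
    have hs1 : 1 ≤ Real.sqrt y := Real.one_le_sqrt.mpr h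
    have hss : Real.sqrt y ^ 2 = y := Real.sq_sqrt hy.le
    gcongr
    nth_rewrite 1 [← hss]
    exact pow_le_pow_right₀ hs1 (by norm_num)

lemma log_div_sq_le (q : ℝ) (hq : 2 ≤ q) : Real.log q / q^2 ≤ 2 * wmaj q := by
  have hy : 0 < q := by linarith
  have hs : 0 < Real.sqrt q := Real.sqrt_pos.mpr hy
  have hs1 : 1 ≤ Real.sqrt q := Real.one_le_sqrt.mpr (by linarith)
  have hss : Real.sqrt q ^ 2 = q := Real.sq_sqrt hy.le
  have hw : wmaj q = 1 / (Real.sqrt q)^3 := by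
    unfold wmaj
    apply min_eq_right
    rw [div_le_one (by positivity)]
    exact one_le_pow₀ hs1
  have hl : Real.log q ≤ 2 * Real.sqrt q := by
    have h1 := Real.log_le_sub_one_of_pos hs
    have : Real.log q = 2 * Real.log (Real.sqrt q) := by
      rw [Real.log_sqrt hy.le]; ring
    linarith
  rw [hw]
  calc Real.log q / q^2 ≤ 2 * Real.sqrt q / q^2 := by gcongr
    _ = 2 * Real.sqrt q / (Real.sqrt q ^ 2)^2 := by rw [hss]
    _ = _ := by field_simp

/-- The numerical factor in the prime-power sum. -/
noncomputable def Dmaj (j : ℕ) : ℝ := ((j : ℝ) + 2) * (1 / 2) ^ j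

lemma Dmaj_nonneg (j : ℕ) : 0 ≤ Dmaj j := by unfold Dmaj; positivity

lemma Dmaj_summable : Summable Dmaj := by
  have h1 := summable_pow_mul_geometric_of_norm_lt_one (R := ℝ) 1 (r := 1/2) (by norm_num)
  have h2 := summable_geometric_two.mul_left 2
  refine (h1.add h2).congr fun j => ?_
  unfold Dmaj; ring

lemma prime_power_term (q : ℝ) (hq : 2 ≤ q) (N : ℝ) (hN : 3 ≤ N) (j : ℕ) (psi c : ℝ)
    (hpsi : 0 ≤ psi) (hc : 0 ≤ c)
    (h : psi * (1 + |Real.log (q^(j+2) / N)|)^2 ≤ c * wmaj (q^(j+2) / N)) :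
    Real.log q * psi ≤ (4 * c * N / Real.log N) * ((Real.log q * wmaj (q / 1)) * Dmaj j) := by
  have hq0 : 0 < q := by linarith
  have hN0 : 0 < N := by linarith
  have hlN : 0 < Real.log N := Real.log_pos (by linarith)
  have hlq : 0 < Real.log q := Real.log_pos (by linarith)
  have hQ : 2 ≤ q^(j+2) := by
    calc (2 : ℝ) ≤ q := hq
      _ = q^1 := (pow_one q).symm
      _ ≤ q^(j+2) := pow_le_pow_right₀ (by linarith) (by omega)
  have h1 := logN_le _ N hQ hN0
  rw [Real.log_pow] at h1
  set L := 1 + |Real.log (q^(j+2) / N)| with hL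
  have hL1 : 1 ≤ L := by rw [hL]; linarith [abs_nonneg (Real.log (q^(j+2) / N))]
  have h2 : psi * L ≤ c * wmaj (q^(j+2) / N) :=
    le_trans (mul_le_mul_of_nonneg_left (le_self_pow₀ hL1 two_ne_zero) hpsi) h
  have h3 : wmaj (q^(j+2) / N) ≤ N / q^(j+2) := by
    refine (wmaj_le_inv _ (by positivity)).trans_eq ?_
    rw [one_div_div]
  have h4 : (1 : ℝ) / q^j ≤ (1/2)^j := by
    rw [← one_div_pow]
    gcongr
  rw [div_one, div_mul_eq_mul_div, le_div_iff₀ hlN]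
  push_cast at h1
  calc Real.log q * psi * Real.log N
      ≤ Real.log q * psi * (2 * (((j : ℝ) + 2) * Real.log q) * L) := by gcongr
    _ = 2 * ((j : ℝ) + 2) * Real.log q ^ 2 * (psi * L) := by ring
    _ ≤ 2 * ((j : ℝ) + 2) * Real.log q ^ 2 * (c * (N / q^(j+2))) := by
        exact mul_le_mul_of_nonneg_left (h2.trans (mul_le_mul_of_nonneg_left h3 hc))
          (by positivity)
    _ = 2 * c * N * (Real.log q * (Real.log q / q^2)) * (((j : ℝ) + 2) * (1 / q^j)) := by
        rw [pow_add]; field_simp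
    _ ≤ 2 * c * N * (Real.log q * (2 * wmaj q)) * (((j : ℝ) + 2) * (1/2)^j) := by
        have := log_div_sq_le q hq
        have := wmaj_nonneg q
        gcongr
    _ = _ := by unfold Dmaj; ring

lemma prime_term (q : ℝ) (hq : 2 ≤ q) (N : ℝ) (hN : 3 ≤ N) (psi c : ℝ) (hpsi : 0 ≤ psi)
    (h : psi * (1 + |Real.log (q / N)|)^2 ≤ c * wmaj (q / N)) :
    psi ≤ 2 * c * (Real.log q * wmaj (q / N)) ∧
    Real.log q * psi ≤ c * (Real.log q * wmaj (q / N)) ∧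
    |psi - 1 / Real.log N * (Real.log q * psi)| ≤
      (2 * c / Real.log N ^ 2) * (Real.log q * wmaj (q / N)) := by
  have hN0 : 0 < N := by linarith
  have hlN : 0 < Real.log N := Real.log_pos (by linarith)
  have hlq : 0 < Real.log q := Real.log_pos (by linarith)
  have hlq2 : 1 / 2 < Real.log q :=
    log_two_gt_half.trans_le (Real.log_le_log (by norm_num) hq)
  have h1 := logN_le _ N hq hN0
  have hl : Real.log (q / N) = Real.log q - Real.log N :=
    Real.log_div (by linarith) hN0.ne'
  have ha := abs_nonneg (Real.log (q / N))
  set L := 1 + |Real.log (q / N)| with hL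
  have hL1 : 1 ≤ L := by linarith
  have h2 : psi ≤ c * wmaj (q / N) :=
    le_trans (le_mul_of_one_le_right hpsi (one_le_pow₀ hL1)) h
  have h20 : 0 ≤ c * wmaj (q / N) := hpsi.trans h2
  refine ⟨by nlinarith, by nlinarith, ?_⟩
  have e : psi - 1 / Real.log N * (Real.log q * psi) = -(psi * Real.log (q / N) / Real.log N) := by
    rw [hl]; field_simp; ring
  rw [e, abs_neg, abs_div, abs_mul, abs_of_nonneg hpsi, abs_of_pos hlN, div_mul_eq_mul_div,
    div_le_div_iff₀ hlN (by positivity)]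
  calc psi * |Real.log (q / N)| * Real.log N ^ 2
      = psi * |Real.log (q / N)| * Real.log N * Real.log N := by ring
    _ ≤ psi * L * (2 * Real.log q * L) * Real.log N := by
        gcongr
        linarith
    _ = 2 * Real.log q * (psi * L^2) * Real.log N := by ring
    _ ≤ 2 * Real.log q * (c * wmaj (q / N)) * Real.log N := by gcongr
    _ = _ := by ring

lemma final_bound (K : Subfield ℝ) [NumberField K] (hdeg : Module.finrank ℚ K = 2)
    (σ₂ : K →+* ℝ) (C : ℕ) (c : ℝ) (hc : 0 ≤ c) (N : ℝ) (hN : 3 ≤ N)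
    (hpsi : ∀ n : Ideal (𝓞 K), n ≠ ⊥ →
      PsiW K σ₂ C N n * (1 + |Real.log (Ideal.absNorm n / N)|)^2 ≤
        c * wmaj (Ideal.absNorm n / N)) :
    |(∑' s : {p : Ideal (𝓞 K) // p ≠ ⊥ ∧ p.IsPrime}, PsiW K σ₂ C N s.1) -
          (1 / Real.log N) *
            ∑' n : Ideal (𝓞 K), if n ≠ ⊥ then LambdaIdeal K n * PsiW K σ₂ C N n else 0|
      ≤ (64 * c * Real.log 4 + 4 * c * (∑' x : Ideal (𝓞 K) × ℕ, Bmaj K 1 x.1 * Dmaj x.2)) *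
          (N / Real.log N ^ 2) := by
  have hN0 : 0 < N := by linarith
  have hlN : 0 < Real.log N := Real.log_pos (by linarith)
  have hsub : ∑' s : {p : Ideal (𝓞 K) // p ≠ ⊥ ∧ p.IsPrime}, PsiW K σ₂ C N s.1 =
      ∑' n, (PrSet K).indicator (PsiW K σ₂ C N) n := tsum_subtype (PrSet K) (PsiW K σ₂ C N)
  rw [hsub]
  set psi := PsiW K σ₂ C N with hpsidef
  have hp0 : ∀ n, 0 ≤ psi n := PsiW_nonneg K σ₂ C N
  set A : Ideal (𝓞 K) → ℝ := (PrSet K).indicator psi with hA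
  set G : Ideal (𝓞 K) → ℝ :=
    (PrSet K).indicator (fun n => Real.log (Ideal.absNorm n) * psi n) with hG
  set F : Ideal (𝓞 K) → ℝ := fun n => if n ≠ ⊥ then LambdaIdeal K n * psi n else 0 with hF
  set R : Ideal (𝓞 K) → ℝ := fun n => if n ∈ PrSet K then 0 else F n with hR
  have hF0 : ∀ n, 0 ≤ F n := by
    intro n
    simp only [hF]
    split_ifs
    · exact mul_nonneg (LambdaIdeal_nonneg K n) (hp0 n)
    · exact le_rfl
  have hR0 : ∀ n, 0 ≤ R n := by
    intro n
    simp only [hR]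
    split_ifs
    · exact le_rfl
    · exact hF0 n
  have hFGR : ∀ n, F n = G n + R n := by
    intro n
    by_cases hn : n ∈ PrSet K
    · simp only [hR, hG, Set.indicator_of_mem hn, if_pos hn, add_zero]
      simp only [hF]
      rw [if_pos hn.1, LambdaIdeal_prime K n hn]
    · simp only [hR, hG, Set.indicator_of_notMem hn, if_neg hn, zero_add]
  have hB := Bmaj_summable K hdeg N hN0
  have hBt := Bmaj_tsum K hdeg N hN0
  have hterm : ∀ n ∈ PrSet K, _ := fun n (hn : n ∈ PrSet K) =>
    prime_term (Ideal.absNorm n) (by exact_mod_cast two_le_absNorm K n hn) N hN (psi n) c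
      (hp0 n) (hpsi n hn.1)
  have hBeq : ∀ n ∈ PrSet K, Bmaj K N n =
      Real.log (Ideal.absNorm n) * wmaj (Ideal.absNorm n / N) := fun n hn =>
    Set.indicator_of_mem hn _
  have hAs : Summable A := by
    refine Summable.of_nonneg_of_le (Set.indicator_nonneg fun n _ => hp0 n) ?_ (hB.mul_left (2 * c))
    intro n
    by_cases hn : n ∈ PrSet K
    · rw [hA, Set.indicator_of_mem hn, hBeq n hn]
      exact (hterm n hn).1
    · rw [hA, Set.indicator_of_notMem hn]
      exact mul_nonneg (by positivity) (Bmaj_nonneg K N n)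
  have hGs : Summable G := by
    refine Summable.of_nonneg_of_le (Set.indicator_nonneg fun n _ =>
      mul_nonneg (Real.log_natCast_nonneg _) (hp0 n)) ?_ (hB.mul_left c)
    intro n
    by_cases hn : n ∈ PrSet K
    · rw [hG, Set.indicator_of_mem hn, hBeq n hn]
      exact (hterm n hn).2.1
    · rw [hG, Set.indicator_of_notMem hn]
      exact mul_nonneg hc (Bmaj_nonneg K N n)
  have hdiff : ∀ n, |A n - 1 / Real.log N * G n| ≤ (2 * c / Real.log N ^ 2) * Bmaj K N n := by
    intro n
    by_cases hn : n ∈ PrSet K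
    · rw [hA, hG, Set.indicator_of_mem hn, Set.indicator_of_mem hn, hBeq n hn]
      exact (hterm n hn).2.2
    · rw [hA, hG, Set.indicator_of_notMem hn, Set.indicator_of_notMem hn]
      simp only [mul_zero, sub_zero, abs_zero]
      exact mul_nonneg (by positivity) (Bmaj_nonneg K N n)
  -- the prime powers
  have hH : Summable (fun x : Ideal (𝓞 K) × ℕ => Bmaj K 1 x.1 * Dmaj x.2) :=
    (Bmaj_summable K hdeg 1 one_pos).mul_of_nonneg Dmaj_summable (Bmaj_nonneg K 1) Dmaj_nonneg
  set T := ∑' x : Ideal (𝓞 K) × ℕ, Bmaj K 1 x.1 * Dmaj x.2 with hT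
  have hRsum : ∀ S : Finset (Ideal (𝓞 K)), ∑ n ∈ S, R n ≤ (4 * c * N / Real.log N) * T := by
    intro S
    have key : ∀ n, R n ≠ 0 → ∃ x : Ideal (𝓞 K) × ℕ, n = x.1 ^ (x.2 + 2) ∧
        R n ≤ (4 * c * N / Real.log N) * (Bmaj K 1 x.1 * Dmaj x.2) := by
      intro n hn
      have h1 : n ∉ PrSet K := fun h => hn (by simp only [hR, if_pos h])
      have h2 : R n = F n := by simp only [hR, if_neg h1]
      have h3 : n ≠ ⊥ := fun h => hn (by rw [h2]; simp [hF, h])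
      have h4 : F n = LambdaIdeal K n * psi n := by simp only [hF]; rw [if_pos h3]
      have h5 : LambdaIdeal K n ≠ 0 := fun h => hn (by rw [h2, h4, h, zero_mul])
      obtain ⟨P, hP, j, rfl, hl⟩ := LambdaIdeal_not_prime K n h1 h5
      refine ⟨(P, j), rfl, ?_⟩
      rw [h2, h4, hl]
      have e : Bmaj K 1 P = Real.log (Ideal.absNorm P) * wmaj (Ideal.absNorm P / 1) :=
        Set.indicator_of_mem hP _
      have hps := hpsi _ h3
      rw [map_pow, Nat.cast_pow] at hps
      simp only [e]
      exact prime_power_term (Ideal.absNorm P) (by exact_mod_cast two_le_absNorm K P hP) N hN j _ c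
        (hp0 _) hc hps
    choose! e he using key
    rw [← Finset.sum_filter_ne_zero]
    calc ∑ n ∈ S with R n ≠ 0, R n
        ≤ ∑ n ∈ S with R n ≠ 0, (4 * c * N / Real.log N) * (Bmaj K 1 (e n).1 * Dmaj (e n).2) :=
          Finset.sum_le_sum fun n hn => (he n (Finset.mem_filter.mp hn).2).2
      _ = (4 * c * N / Real.log N) * ∑ n ∈ S with R n ≠ 0, (Bmaj K 1 (e n).1 * Dmaj (e n).2) := by
          rw [Finset.mul_sum]
      _ = (4 * c * N / Real.log N) * ∑ x ∈ (S.filter (fun n => R n ≠ 0)).image e,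
            (Bmaj K 1 x.1 * Dmaj x.2) := by
          rw [Finset.sum_image]
          intro n hn m hm hnm
          rw [(he n (Finset.mem_filter.mp hn).2).1, (he m (Finset.mem_filter.mp hm).2).1, hnm]
      _ ≤ _ := by
          gcongr
          exact hH.sum_le_tsum _ (fun x _ => mul_nonneg (Bmaj_nonneg K 1 _) (Dmaj_nonneg _))
  have hRs : Summable R := summable_of_sum_le hR0 hRsum
  have hRt : ∑' n, R n ≤ (4 * c * N / Real.log N) * T := Real.tsum_le_of_sum_le hR0 hRsum
  have hRt0 : 0 ≤ ∑' n, R n := tsum_nonneg hR0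
  have hFt : ∑' n, F n = ∑' n, G n + ∑' n, R n := by
    rw [← hGs.tsum_add hRs]
    exact tsum_congr hFGR
  have e1 : ∑' n, A n - 1 / Real.log N * ∑' n, F n =
      ∑' n, (A n - 1 / Real.log N * G n) - 1 / Real.log N * ∑' n, R n := by
    rw [hAs.tsum_sub (hGs.mul_left _), tsum_mul_left, hFt]; ring
  rw [e1]
  have b1 : |∑' n, (A n - 1 / Real.log N * G n)| ≤
      (2 * c / Real.log N ^ 2) * (32 * Real.log 4 * N) := by
    have := tsum_of_norm_bounded (hB.mul_left (2 * c / Real.log N ^ 2)).hasSum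
      (fun n => (Real.norm_eq_abs _).trans_le (hdiff n))
    rw [Real.norm_eq_abs, tsum_mul_left] at this
    refine this.trans ?_
    gcongr
  have b2 : |1 / Real.log N * ∑' n, R n| ≤ 1 / Real.log N * ((4 * c * N / Real.log N) * T) := by
    rw [abs_of_nonneg (by positivity)]
    gcongr
  refine (abs_sub _ _).trans ((add_le_add b1 b2).trans_eq ?_)
  field_simp
  ring

/-- **Reduction of the prime-ideal sum of `Ψ` to the `Λ`-weighted sum:**
`∑_{𝔰∈ℙ} Ψ(𝔰) = (1/log N) ∑_{𝔫∈ℐ} Λ(𝔫)Ψ(𝔫) + O(N log log N / log² N)`. -/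
theorem psi_prime_sum_vs_lambda_sum
    (d : ℕ) (hd : 1 < d) (hdsq : Squarefree d) (hd4 : d % 4 = 3)
    (K : Subfield ℝ) [NumberField K]
    (hdeg : Module.finrank ℚ K = 2)
    (sq : 𝓞 K) (hsq : ((sq : K) : ℝ) = Real.sqrt d)
    (hclass : NumberField.classNumber K = 1)
    (σ₂ : K →+* ℝ) (hσ₂ : σ₂ (sq : K) = -Real.sqrt d)
    (C : ℕ) (hC : 0 < C) :
    ∃ c : ℝ, ∀ N : ℝ, 3 ≤ N →
      |(∑' s : {p : Ideal (𝓞 K) // p ≠ ⊥ ∧ p.IsPrime}, PsiW K σ₂ C N s.1) -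
          (1 / Real.log N) *
            ∑' n : Ideal (𝓞 K), if n ≠ ⊥ then LambdaIdeal K n * PsiW K σ₂ C N n else 0|
        ≤ c * N * Real.log (Real.log N) / (Real.log N)^2 := by
  have hne : σ₂ ≠ K.subtype := by
    intro h
    have hpos : 0 < Real.sqrt d := Real.sqrt_pos.mpr (by exact_mod_cast (by omega : 0 < d))
    rw [h] at hσ₂
    have h2 : ((sq : K) : ℝ) = -Real.sqrt d := hσ₂
    linarith
  obtain ⟨c, hc, hpsi⟩ := PsiW_bound K hdeg σ₂ hne C hC
  set D := 64 * c * Real.log 4 +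
    4 * c * (∑' x : Ideal (𝓞 K) × ℕ, Bmaj K 1 x.1 * Dmaj x.2) with hD
  have hD0 : 0 ≤ D := by
    have h1 : 0 ≤ Real.log 4 := Real.log_nonneg (by norm_num)
    have h2 : 0 ≤ ∑' x : Ideal (𝓞 K) × ℕ, Bmaj K 1 x.1 * Dmaj x.2 :=
      tsum_nonneg fun x => mul_nonneg (Bmaj_nonneg K 1 _) (Dmaj_nonneg _)
    positivity
  have hl3 : 1 < Real.log 3 := by
    rw [Real.lt_log_iff_exp_lt (by norm_num)]
    linarith [Real.exp_one_lt_d9]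
  have hll3 : 0 < Real.log (Real.log 3) := Real.log_pos hl3
  refine ⟨D / Real.log (Real.log 3), fun N hN => ?_⟩
  have hN0 : 0 < N := by linarith
  refine (final_bound K hdeg σ₂ C c hc N hN (hpsi N hN0)).trans ?_
  have hmono : Real.log (Real.log 3) ≤ Real.log (Real.log N) :=
    Real.log_le_log (by linarith) (Real.log_le_log (by norm_num) hN)
  have h1 : 1 ≤ Real.log (Real.log N) / Real.log (Real.log 3) := by
    rwa [one_le_div hll3]
  calc D * (N / Real.log N ^ 2) = D * (N / Real.log N ^ 2) * 1 := by ring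
    _ ≤ D * (N / Real.log N ^ 2) * (Real.log (Real.log N) / Real.log (Real.log 3)) := by gcongr
    _ = _ := by ring
end

section
/- Let 𝕂 be an imaginary quadratic number field of class number one and, for N ≥ 3, define W : ℐ → ℝ by W(𝔫) := π·exp(−π·𝒩(𝔫)/N). Then there is a constant c = c(𝕂) such that for every N ≥ 3 and every nonzero ideal 𝔯 with 𝒩(𝔯) ≤ N/2, |∑_{𝔰∈ℙ} W(𝔯𝔰) − (N/𝒩(𝔯))/log(N/𝒩(𝔯))| ≤ c · (N/𝒩(𝔯)) / log²(N/𝒩(𝔯)). -/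
open NumberField

section
open Real

namespace GW

theorem lattice_count {E ι : Type*} [NormedAddCommGroup E] [NormedSpace ℝ E] [FiniteDimensional ℝ E]
    [MeasurableSpace E] [BorelSpace E] [Fintype ι] (hE : Module.finrank ℝ E = 2)
    (b : Module.Basis ι ℝ E) : ∃ c C : ℝ, 0 < c ∧ ∀ R : ℝ, 1 ≤ R →
      {v : E | ‖v‖ ≤ R ∧ v ∈ Submodule.span ℤ (Set.range b)}.Finite ∧
      |(Set.ncard {v : E | ‖v‖ ≤ R ∧ v ∈ Submodule.span ℤ (Set.range b)} : ℝ) - c * R^2| ≤ C * R := by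
  set μ : MeasureTheory.Measure E := MeasureTheory.Measure.addHaar with hμ
  set F := ZSpan.fundamentalDomain b with hF
  have hFb := ZSpan.fundamentalDomain_isBounded b
  obtain ⟨d, hd0, hd⟩ := hFb.exists_pos_norm_le
  have hFm := ZSpan.fundamentalDomain_measurableSet b
  set m := μ.real F with hm
  set V := μ.real (Metric.ball (0:E) 1) with hV
  have hFfin : μ F ≠ ⊤ := hFb.measure_lt_top.ne
  have hm0 : 0 < m := by
    rw [hm, MeasureTheory.Measure.real, ENNReal.toReal_pos_iff]
    exact ⟨pos_iff_ne_zero.2 (ZSpan.measure_fundamentalDomain_ne_zero b), hFb.measure_lt_top⟩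
  have hV0 : 0 < V := by
    rw [hV, MeasureTheory.Measure.real, ENNReal.toReal_pos_iff]
    exact ⟨Metric.measure_ball_pos μ 0 one_pos, MeasureTheory.measure_ball_lt_top⟩
  have hball : ∀ r : ℝ, 0 ≤ r → μ.real (Metric.closedBall (0:E) r) = r^2 * V := by
    intro r hr
    rw [MeasureTheory.Measure.real, MeasureTheory.Measure.addHaar_closedBall μ 0 hr, hE,
      ENNReal.toReal_mul, ENNReal.toReal_ofReal (by positivity)]
    rfl
  refine ⟨V/m, V*(2*d+d^2)/m, by positivity, fun R hR => ?_⟩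
  have hfin : {v : E | ‖v‖ ≤ R ∧ v ∈ Submodule.span ℤ (Set.range b)}.Finite := by
    have := ZSpan.setFinite_inter b (s := Metric.closedBall (0:E) R) Metric.isBounded_closedBall
    refine this.subset fun v hv => ⟨by simpa using hv.1, hv.2⟩
  refine ⟨hfin, ?_⟩
  set S := hfin.toFinset with hS
  have hcard : (Set.ncard {v : E | ‖v‖ ≤ R ∧ v ∈ Submodule.span ℤ (Set.range b)} : ℝ) = S.card := by
    rw [Set.ncard_eq_toFinset_card _ hfin]
  set t : E → Set E := fun v => (fun x => x + (-v)) ⁻¹' F with ht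
  have hmem : ∀ v, v ∈ S ↔ ‖v‖ ≤ R ∧ v ∈ Submodule.span ℤ (Set.range b) := fun v => by simp [hS]
  have htm : ∀ v, MeasurableSet (t v) := fun v => (measurable_add_const (-v)) hFm
  have htμ : ∀ v, μ (t v) = μ F := fun v => MeasureTheory.measure_preimage_add_right μ (-v) F
  have hdisj : (S : Set E).PairwiseDisjoint t := by
    intro v hv w hw hvw
    rw [Function.onFun, Set.disjoint_left]
    intro x hxv hxw
    apply hvw
    have hv2 := ((hmem v).1 hv).2
    have hw2 := ((hmem w).1 hw).2
    have e1 : ZSpan.fract b (x + -v) = x + -v := ZSpan.fract_eq_self.2 hxv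
    have e2 : ZSpan.fract b (x + -w) = x + -w := ZSpan.fract_eq_self.2 hxw
    rw [ZSpan.fract_add_ZSpan b x (Submodule.neg_mem _ hv2)] at e1
    rw [ZSpan.fract_add_ZSpan b x (Submodule.neg_mem _ hw2)] at e2
    rw [e1] at e2
    simpa using e2
  have hU : μ.real (⋃ v ∈ S, t v) = S.card * m := by
    rw [MeasureTheory.Measure.real, MeasureTheory.measure_biUnion_finset hdisj (fun v _ => htm v)]
    simp_rw [htμ]
    rw [Finset.sum_const, nsmul_eq_mul, ENNReal.toReal_mul, ENNReal.toReal_natCast]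
    rfl
  have hUb : (⋃ v ∈ S, t v) ⊆ Metric.closedBall (0:E) (R + d) := by
    intro x hx
    simp only [Set.mem_iUnion] at hx
    obtain ⟨v, hv, hx⟩ := hx
    have h1 := hd _ hx
    have h2 := ((hmem v).1 hv).1
    rw [mem_closedBall_zero_iff]
    calc ‖x‖ = ‖v + (x + -v)‖ := by congr 1; abel
      _ ≤ ‖v‖ + ‖x + -v‖ := norm_add_le _ _
      _ ≤ _ := by linarith
  have hup : S.card * m ≤ (R+d)^2 * V := by
    rw [← hU, ← hball _ (by linarith)]
    exact MeasureTheory.measureReal_mono hUb MeasureTheory.measure_closedBall_lt_top.ne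
  have hlow : V * R^2 - V * (2*d + d^2) * R ≤ S.card * m := by
    by_cases hRd : R < d
    · have h0 : 0 ≤ S.card * m := by positivity
      have : V * R^2 ≤ V * (2*d + d^2) * R := by
        rw [mul_assoc]
        gcongr
        nlinarith
      linarith
    · push Not at hRd
      have hlb : Metric.closedBall (0:E) (R - d) ⊆ ⋃ v ∈ S, t v := by
        intro x hx
        rw [mem_closedBall_zero_iff] at hx
        simp only [Set.mem_iUnion]
        refine ⟨ZSpan.floor b x, ?_, ?_⟩
        · rw [hmem]
          refine ⟨?_, (ZSpan.floor b x).2⟩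
          have h1 := hd _ (ZSpan.fract_mem_fundamentalDomain b x)
          have h2 : (ZSpan.floor b x : E) = x - ZSpan.fract b x := by rw [ZSpan.fract_apply]; abel
          rw [h2]
          calc _ ≤ ‖x‖ + ‖ZSpan.fract b x‖ := norm_sub_le _ _
            _ ≤ _ := by linarith
        · have := ZSpan.fract_mem_fundamentalDomain b x
          rw [ZSpan.fract_apply, sub_eq_add_neg] at this
          exact this
      have h1 : (R-d)^2 * V ≤ S.card * m := by
        rw [← hU, ← hball _ (by linarith)]
        refine MeasureTheory.measureReal_mono hlb ?_
        exact ((MeasureTheory.measure_mono hUb).trans_lt MeasureTheory.measure_closedBall_lt_top).ne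
      have h2 : V * R^2 - V * (2*d + d^2) * R ≤ (R-d)^2 * V := by
        have : 0 ≤ V * (d^2 * R + d^2) := by positivity
        nlinarith
      linarith
  have hup2 : S.card * m ≤ V * R^2 + V * (2*d + d^2) * R := by
    have : 0 ≤ V * (d^2 * (R - 1)) := mul_nonneg hV0.le (mul_nonneg (by positivity) (by linarith))
    nlinarith
  rw [hcard, abs_le]
  have e : (S.card : ℝ) = S.card * m / m := by field_simp
  constructor
  · rw [e, neg_le_sub_iff_le_add, ← sub_nonneg]
    have : S.card * m / m + V*(2*d+d^2)/m * R - V/m * R^2 =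
      (S.card * m - (V * R^2 - V * (2*d + d^2) * R)) / m := by field_simp; ring
    rw [this]
    exact div_nonneg (by linarith) hm0.le
  · rw [e, ← sub_nonneg]
    have : V*(2*d+d^2)/m * R - (S.card * m / m - V/m * R^2) =
      ((V * R^2 + V * (2*d + d^2) * R) - S.card * m) / m := by field_simp; ring
    rw [this]
    exact div_nonneg (by linarith) hm0.le

end GW
end

section
open Real

namespace GW
open NumberField

section
variable (K : Type*) [Field K] [NumberField K]

open scoped Classical in
lemma place_unique (hdeg : Module.finrank ℚ K = 2) (himag : IsEmpty (K →+* ℝ)) :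
    ∃ w : InfinitePlace K, (∀ w', w' = w) ∧ w.mult = 2 := by
  have h0 : ∀ w : InfinitePlace K, ¬ w.IsReal := by
    intro w hw
    exact himag.false (InfinitePlace.embedding_of_isReal hw)
  have hr : InfinitePlace.nrRealPlaces K = 0 := by
    unfold InfinitePlace.nrRealPlaces
    rw [Fintype.card_eq_zero_iff]
    exact ⟨fun w => h0 w.1 w.2⟩
  have h1 := InfinitePlace.card_add_two_mul_card_eq_rank K
  rw [hr, hdeg] at h1
  have hc : Fintype.card (InfinitePlace K) = 1 := by
    rw [InfinitePlace.card_eq_nrRealPlaces_add_nrComplexPlaces]; omega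
  obtain ⟨w, hw⟩ := Fintype.card_eq_one_iff.1 hc
  refine ⟨w, hw, ?_⟩
  rw [InfinitePlace.mult, if_neg (h0 w)]

open scoped Classical in
lemma norm_sq_eq (hdeg : Module.finrank ℚ K = 2) (himag : IsEmpty (K →+* ℝ)) (a : 𝓞 K) :
    ‖mixedEmbedding K (a : K)‖^2 = ((Algebra.norm ℤ a).natAbs : ℝ) := by
  obtain ⟨w, hw, hm⟩ := place_unique K hdeg himag
  have huniv : (Finset.univ : Finset (InfinitePlace K)) = {w} := by
    ext w'; simp [hw w']
  have h1 : ‖mixedEmbedding K (a : K)‖ = mixedEmbedding.normAtPlace w (mixedEmbedding K (a : K)) := by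
    rw [mixedEmbedding.norm_eq_sup'_normAtPlace]
    simp [huniv]
  have h2 := mixedEmbedding.norm_eq_norm (a : K)
  rw [mixedEmbedding.norm_apply, huniv, Finset.prod_singleton, hm, ← h1] at h2
  rw [h2, ← Algebra.coe_norm_int a]
  push_cast
  rw [Nat.cast_natAbs]
  push_cast
  rfl

open scoped Classical in
lemma elem_count (hdeg : Module.finrank ℚ K = 2) (himag : IsEmpty (K →+* ℝ)) :
    ∃ c C : ℝ, 0 < c ∧ ∀ n : ℕ, 1 ≤ n → {a : 𝓞 K | (Algebra.norm ℤ a).natAbs ≤ n}.Finite ∧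
      |(Set.ncard {a : 𝓞 K | (Algebra.norm ℤ a).natAbs ≤ n} : ℝ) - c * n| ≤ C * √n := by
  obtain ⟨c, C, hc, h⟩ := lattice_count (E := mixedEmbedding.mixedSpace K)
    (by rw [mixedEmbedding.finrank, hdeg]) (mixedEmbedding.latticeBasis K)
  refine ⟨c, C, hc, fun n hn => ?_⟩
  have hn1 : (1:ℝ) ≤ n := by exact_mod_cast hn
  obtain ⟨hfin, hb⟩ := h (√n) (by rw [Real.one_le_sqrt]; exact hn1)
  have hset : {v : mixedEmbedding.mixedSpace K | ‖v‖ ≤ √n ∧ v ∈ Submodule.span ℤ (Set.range (mixedEmbedding.latticeBasis K))}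
      = (fun a : 𝓞 K => mixedEmbedding K (a : K)) '' {a : 𝓞 K | (Algebra.norm ℤ a).natAbs ≤ n} := by
    have key : ∀ a : 𝓞 K, ‖mixedEmbedding K (a : K)‖ ≤ √n ↔ (Algebra.norm ℤ a).natAbs ≤ n := by
      intro a
      rw [Real.le_sqrt (by positivity), norm_sq_eq K hdeg himag, Nat.cast_le]
      all_goals positivity
    ext v
    simp only [Set.mem_ofPred_eq, Set.mem_image, mixedEmbedding.mem_span_latticeBasis]
    constructor
    · rintro ⟨h1, h2⟩
      obtain ⟨a, rfl⟩ : ∃ a : 𝓞 K, mixedEmbedding K (a : K) = v := by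
        simpa [mixedEmbedding.integerLattice] using h2
      exact ⟨a, (key a).1 h1, rfl⟩
    · rintro ⟨a, h1, rfl⟩
      refine ⟨(key a).2 h1, ?_⟩
      simp [mixedEmbedding.integerLattice]
  have hinj : Function.Injective (fun a : 𝓞 K => mixedEmbedding K (a : K)) := by
    intro a b hab
    exact RingOfIntegers.ext (mixedEmbedding_injective K hab)
  rw [hset] at hfin hb
  refine ⟨Set.Finite.of_finite_image hfin hinj.injOn, ?_⟩
  rw [Set.ncard_image_of_injective _ hinj, Real.sq_sqrt (by positivity)] at hb
  exact hb

lemma ideal_elem (hpid : IsPrincipalIdealRing (𝓞 K)) (n : ℕ) :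
    Nat.card {a : 𝓞 K // a ≠ 0 ∧ (Algebra.norm ℤ a).natAbs ≤ n} =
    Nat.card {I : Ideal (𝓞 K) // I ≠ ⊥ ∧ Ideal.absNorm I ≤ n} * Nat.card (𝓞 K)ˣ := by
  rw [← Nat.card_prod]
  symm
  have hg : ∀ I : Ideal (𝓞 K), ∃ g : 𝓞 K, I = Ideal.span {g} := fun I =>
    (hpid.principal I).principal
  choose g hg using hg
  have hu : ∀ (I : Ideal (𝓞 K)) (u : (𝓞 K)ˣ), Ideal.span {(u : 𝓞 K) * g I} = I := by
    intro I u
    conv_rhs => rw [hg I]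
    exact Ideal.span_singleton_mul_left_unit u.isUnit _
  refine Nat.card_eq_of_bijective (fun x : {I : Ideal (𝓞 K) // I ≠ ⊥ ∧ Ideal.absNorm I ≤ n} × (𝓞 K)ˣ =>
    (⟨(x.2 : 𝓞 K) * g x.1.1, ?_, ?_⟩ : {a : 𝓞 K // a ≠ 0 ∧ (Algebra.norm ℤ a).natAbs ≤ n})) ⟨?_, ?_⟩
  · intro h
    have := hu x.1.1 x.2
    rw [h] at this
    apply x.1.2.1
    rw [← this]; simp
  · rw [← Ideal.absNorm_span_singleton, hu]
    exact x.1.2.2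
  · rintro ⟨⟨I, hI⟩, u⟩ ⟨⟨I', hI'⟩, u'⟩ h
    have h1 : (u : 𝓞 K) * g I = u' * g I' := congrArg Subtype.val h
    have h2 : I = I' := by rw [← hu I u, h1, hu]
    subst h2
    have h3 : g I ≠ 0 := by
      intro h0
      apply hI.1
      rw [hg I, h0]; simp
    have h4 := mul_right_cancel₀ h3 h1
    simp [Units.ext h4]
  · rintro ⟨a, ha, han⟩
    have h1 : Ideal.span {a} = Ideal.span {g (Ideal.span {a})} := hg _
    rw [Ideal.span_singleton_eq_span_singleton] at h1
    obtain ⟨u, hu⟩ := h1.symm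
    refine ⟨⟨⟨Ideal.span {a}, ?_, ?_⟩, u⟩, ?_⟩
    · simpa using ha
    · rw [Ideal.absNorm_span_singleton]; exact han
    · exact Subtype.ext ((mul_comm _ _).trans hu)

lemma ideal_sum (n : ℕ) : ∑ k ∈ Finset.Icc 1 n, (Nat.card {I : Ideal (𝓞 K) // Ideal.absNorm I = k}) =
    Nat.card {I : Ideal (𝓞 K) // I ≠ ⊥ ∧ Ideal.absNorm I ≤ n} := by
  classical
  have hfin : {I : Ideal (𝓞 K) | I ≠ ⊥ ∧ Ideal.absNorm I ≤ n}.Finite :=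
    (Ideal.finite_setOfPred_absNorm_le (S := 𝓞 K) n).subset fun I hI => hI.2
  set P := hfin.toFinset with hP
  have hmem : ∀ I, I ∈ P ↔ I ≠ ⊥ ∧ Ideal.absNorm I ≤ n := fun I => by simp [hP]
  have h1 : Nat.card {I : Ideal (𝓞 K) // I ≠ ⊥ ∧ Ideal.absNorm I ≤ n} = P.card := by
    rw [Nat.subtype_card P]
    exact hmem
  rw [h1, Finset.card_eq_sum_card_fiberwise (f := fun I => Ideal.absNorm I) (t := Finset.Icc 1 n)]
  · refine Finset.sum_congr rfl fun k hk => ?_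
    rw [Finset.mem_Icc] at hk
    rw [Nat.subtype_card]
    intro I
    rw [Finset.mem_filter, hmem]
    constructor
    · exact fun h => h.2
    · intro h
      refine ⟨⟨?_, by omega⟩, h⟩
      rintro rfl
      simp at h
      omega
  · intro I hI
    have hI' := (hmem I).1 hI
    simp only [Finset.coe_Icc, Set.mem_Icc]
    refine ⟨?_, hI'.2⟩
    rw [Nat.one_le_iff_ne_zero, Ne, Ideal.absNorm_eq_zero_iff]
    exact hI'.1

theorem ideal_count (hdeg : Module.finrank ℚ K = 2) (himag : IsEmpty (K →+* ℝ))
    (hpid : IsPrincipalIdealRing (𝓞 K)) :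
    ∃ κ C : ℝ, 0 < κ ∧ ∀ n : ℕ,
      |∑ k ∈ Finset.Icc 1 n, (Nat.card {I : Ideal (𝓞 K) // Ideal.absNorm I = k} : ℝ) - κ * n| ≤ C * √n := by
  obtain ⟨c, C, hc, h⟩ := elem_count K hdeg himag
  have hUfin : Finite (𝓞 K)ˣ := by
    have h1 := (h 1 le_rfl).1
    have : Finite {a : 𝓞 K | (Algebra.norm ℤ a).natAbs ≤ 1} := h1
    refine Finite.of_injective (β := {a : 𝓞 K | (Algebra.norm ℤ a).natAbs ≤ 1})
      (fun u => ⟨(u : 𝓞 K), ?_⟩) ?_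
    · have := (u.isUnit.map (Algebra.norm ℤ : 𝓞 K →* ℤ))
      rw [Int.isUnit_iff_natAbs_eq] at this
      exact this.le
    · intro u v huv
      exact Units.ext (congrArg Subtype.val huv)
  set w : ℝ := (Nat.card (𝓞 K)ˣ : ℝ) with hw
  have hw0 : 0 < w := by
    rw [hw]; exact_mod_cast Nat.card_pos
  refine ⟨c / w, (C + 1)/ w, by positivity, fun n => ?_⟩
  rcases Nat.eq_zero_or_pos n with rfl | hn
  · simp
  obtain ⟨hfin, hb⟩ := h n hn
  have hs : (∑ k ∈ Finset.Icc 1 n, (Nat.card {I : Ideal (𝓞 K) // Ideal.absNorm I = k} : ℝ)) =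
      (Nat.card {I : Ideal (𝓞 K) // I ≠ ⊥ ∧ Ideal.absNorm I ≤ n} : ℝ) := by
    rw [← ideal_sum]; push_cast; rfl
  rw [hs]
  have h2 : (Set.ncard {a : 𝓞 K | (Algebra.norm ℤ a).natAbs ≤ n} : ℝ) =
      Nat.card {a : 𝓞 K // a ≠ 0 ∧ (Algebra.norm ℤ a).natAbs ≤ n} + 1 := by
    have h3 : {a : 𝓞 K | (Algebra.norm ℤ a).natAbs ≤ n} =
        insert 0 {a : 𝓞 K | a ≠ 0 ∧ (Algebra.norm ℤ a).natAbs ≤ n} := by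
      ext a
      by_cases ha : a = 0
      · simp [ha]
      · simp [ha]
    have h4 : {a : 𝓞 K | a ≠ 0 ∧ (Algebra.norm ℤ a).natAbs ≤ n}.Finite :=
      hfin.subset fun a ha => ha.2
    rw [h3, Set.ncard_insert_of_notMem (by simp) h4]
    push_cast
    rfl
  rw [h2, ideal_elem K hpid n] at hb
  push_cast at hb
  rw [← hw] at hb
  set P : ℝ := (Nat.card {I : Ideal (𝓞 K) // I ≠ ⊥ ∧ Ideal.absNorm I ≤ n} : ℝ) with hP
  have hsq : 1 ≤ √(n:ℝ) := by rw [Real.one_le_sqrt]; exact_mod_cast hn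
  have e : P - c / w * n = (P * w - c * n)/w := by field_simp
  rw [e, abs_div, abs_of_pos hw0, div_mul_eq_mul_div]
  gcongr
  rw [abs_le] at hb ⊢
  constructor <;> nlinarith [hb.1, hb.2]

end
end GW
end

section
open Real

namespace GW
open NumberField

lemma hasSum_of_eq' {ι : Type*} {f g : ι → ℂ} {a : ℂ} (h : ∀ i, f i = g i) (hg : HasSum g a) :
    HasSum f a := by rwa [funext h]

section
variable (K : Type*) [Field K] [NumberField K]

lemma absNorm_pos' (I : {I : Ideal (𝓞 K) // I ≠ ⊥}) : 0 < Ideal.absNorm I.1 :=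
  Nat.pos_of_ne_zero fun h => I.2 (Ideal.absNorm_eq_zero_iff.1 h)

lemma fiber_card (n : ℕ) (hn : n ≠ 0) :
    Nat.card {I : {I : Ideal (𝓞 K) // I ≠ ⊥} // Ideal.absNorm I.1 = n} =
      Nat.card {I : Ideal (𝓞 K) // Ideal.absNorm I = n} := by
  refine Nat.card_congr ⟨fun I => ⟨I.1.1, I.2⟩, fun I => ⟨⟨I.1, ?_⟩, I.2⟩, fun _ => rfl, fun _ => rfl⟩
  intro h
  have := I.2
  rw [h] at this
  simp at this
  exact hn this.symm

lemma fiber_finite (n : ℕ) :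
    Finite {I : {I : Ideal (𝓞 K) // I ≠ ⊥} // Ideal.absNorm I.1 = n} := by
  have hfin := (Ideal.finite_setOfPred_absNorm_le (S := 𝓞 K) n)
  have : Finite {I : Ideal (𝓞 K) | Ideal.absNorm I ≤ n} := hfin
  refine Finite.of_injective (β := {I : Ideal (𝓞 K) | Ideal.absNorm I ≤ n})
    (fun I => ⟨I.1.1, I.2.le⟩) ?_
  intro a b h
  exact Subtype.ext (Subtype.ext (Subtype.mk.inj h))

lemma term_eq (s : ℂ) (n : ℕ) :
    ∑' I : {I : {I : Ideal (𝓞 K) // I ≠ ⊥} // Ideal.absNorm I.1 = n}, (Ideal.absNorm I.1.1 : ℂ)^(-s) =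
      LSeries.term (fun n => ((Nat.card {I : Ideal (𝓞 K) // Ideal.absNorm I = n} : ℝ) : ℂ)) s n := by
  have := fiber_finite K n
  have := Fintype.ofFinite {I : {I : Ideal (𝓞 K) // I ≠ ⊥} // Ideal.absNorm I.1 = n}
  have h1 : ∀ I : {I : {I : Ideal (𝓞 K) // I ≠ ⊥} // Ideal.absNorm I.1 = n},
      (Ideal.absNorm I.1.1 : ℂ)^(-s) = (n : ℂ)^(-s) := fun I => by rw [I.2]
  rw [tsum_congr h1, tsum_fintype, Finset.sum_const, Finset.card_univ, ← Nat.card_eq_fintype_card]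
  rcases eq_or_ne n 0 with rfl | hn
  · rw [LSeries.term_zero]
    have : IsEmpty {I : {I : Ideal (𝓞 K) // I ≠ ⊥} // Ideal.absNorm I.1 = 0} :=
      ⟨fun I => (absNorm_pos' K I.1).ne' I.2⟩
    simp
  · rw [LSeries.term_of_ne_zero hn, fiber_card K n hn, Complex.cpow_neg]
    simp [div_eq_mul_inv]

lemma norm_cpow_ideal (I : {I : Ideal (𝓞 K) // I ≠ ⊥}) (s : ℂ) :
    ‖(Ideal.absNorm I.1 : ℂ)^(-s)‖ = (Ideal.absNorm I.1 : ℝ)^(-s.re) := by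
  rw [Complex.norm_natCast_cpow_of_pos (absNorm_pos' K I)]; simp

lemma ideal_hasSum (s : ℂ)
    (hs : LSeriesSummable (fun n => ((Nat.card {I : Ideal (𝓞 K) // Ideal.absNorm I = n} : ℝ) : ℂ)) s) :
    Summable (fun I : {I : Ideal (𝓞 K) // I ≠ ⊥} => (Ideal.absNorm I.1 : ℝ)^(-s.re)) ∧
    HasSum (fun I : {I : Ideal (𝓞 K) // I ≠ ⊥} => (Ideal.absNorm I.1 : ℂ)^(-s))
      (LSeries (fun n => ((Nat.card {I : Ideal (𝓞 K) // Ideal.absNorm I = n} : ℝ) : ℂ)) s) := by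
  set e := Equiv.sigmaFiberEquiv (fun I : {I : Ideal (𝓞 K) // I ≠ ⊥} => Ideal.absNorm I.1) with he
  have h1 : Summable (fun I : {I : Ideal (𝓞 K) // I ≠ ⊥} => (Ideal.absNorm I.1 : ℝ)^(-s.re)) := by
    rw [← e.summable_iff, summable_sigma_of_nonneg (fun x => by simp only [Function.comp]; positivity)]
    constructor
    · intro n
      have := fiber_finite K n
      exact Summable.of_finite
    · have h2 := hs.norm
      refine h2.congr fun n => ?_
      have e1 := term_eq K (s.re : ℂ) n
      have e2 : ‖LSeries.term (fun n => ((Nat.card {I : Ideal (𝓞 K) // Ideal.absNorm I = n} : ℝ) : ℂ)) s n‖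
        = ‖LSeries.term (fun n => ((Nat.card {I : Ideal (𝓞 K) // Ideal.absNorm I = n} : ℝ) : ℂ)) (s.re : ℂ) n‖ := by
        rw [LSeries.norm_term_eq, LSeries.norm_term_eq]; simp
      rw [e2, ← e1]
      have e3 : ∀ I : {I : {I : Ideal (𝓞 K) // I ≠ ⊥} // Ideal.absNorm I.1 = n},
        (Ideal.absNorm I.1.1 : ℂ)^(-(s.re : ℂ)) = (((Ideal.absNorm I.1.1 : ℝ)^(-s.re) : ℝ) : ℂ) := by
        intro I
        rw [Complex.ofReal_cpow (by positivity)]; simp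
      rw [tsum_congr e3, ← Complex.ofReal_tsum, Complex.norm_real, Real.norm_of_nonneg]
      · rfl
      · exact tsum_nonneg fun I => by positivity
  refine ⟨h1, ?_⟩
  have h2 : Summable (fun I : {I : Ideal (𝓞 K) // I ≠ ⊥} => (Ideal.absNorm I.1 : ℂ)^(-s)) := by
    apply Summable.of_norm
    simpa only [norm_cpow_ideal] using h1
  have h3 : LSeries (fun n => ((Nat.card {I : Ideal (𝓞 K) // Ideal.absNorm I = n} : ℝ) : ℂ)) s
      = ∑' I : {I : Ideal (𝓞 K) // I ≠ ⊥}, (Ideal.absNorm I.1 : ℂ)^(-s) := by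
    rw [← e.tsum_eq]
    refine Eq.trans ?_ (e.summable_iff.2 h2).tsum_sigma.symm
    unfold LSeries
    refine tsum_congr fun n => ?_
    rw [← term_eq K s n]
    rfl
  rw [h3]
  exact h2.hasSum

open scoped Classical in
lemma euler_finite (s Z : ℂ)
    (hZ : HasSum (fun I : {I : Ideal (𝓞 K) // I ≠ ⊥} => (Ideal.absNorm I.1 : ℂ)^(-s)) Z)
    (S : Finset {p : Ideal (𝓞 K) // p ≠ ⊥ ∧ p.IsPrime}) :
    HasSum (fun I : {I : Ideal (𝓞 K) // I ≠ ⊥} =>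
      if ∀ p ∈ S, ¬ p.1 ∣ I.1 then (Ideal.absNorm I.1 : ℂ)^(-s) else 0)
      ((∏ p ∈ S, (1 - (Ideal.absNorm p.1 : ℂ)^(-s))) * Z) := by
  induction S using Finset.induction_on with
  | empty => simpa using hZ
  | insert p S hp ih =>
    have hpp : Prime p.1 := Ideal.prime_of_isPrime p.2.1 p.2.2
    let m : {I : Ideal (𝓞 K) // I ≠ ⊥} → {I : Ideal (𝓞 K) // I ≠ ⊥} :=
      fun J => ⟨p.1 * J.1, mul_ne_zero p.2.1 J.2⟩
    have hm : Function.Injective m := by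
      intro a b hab
      have : p.1 * a.1 = p.1 * b.1 := congrArg Subtype.val hab
      exact Subtype.ext (mul_left_cancel₀ (show p.1 ≠ 0 from p.2.1) this)
    have h1 : HasSum (fun I : {I : Ideal (𝓞 K) // I ≠ ⊥} =>
        if p.1 ∣ I.1 ∧ ∀ p ∈ S, ¬ p.1 ∣ I.1 then (Ideal.absNorm I.1 : ℂ)^(-s) else 0)
        ((Ideal.absNorm p.1 : ℂ)^(-s) * ((∏ p ∈ S, (1 - (Ideal.absNorm p.1 : ℂ)^(-s))) * Z)) := by
      rw [← hm.hasSum_iff]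
      · refine hasSum_of_eq' (fun J => ?_) (ih.mul_left ((Ideal.absNorm p.1 : ℂ)^(-s)))
        have hiff : (∀ p' ∈ S, ¬ p'.1 ∣ p.1 * J.1) ↔ ∀ p' ∈ S, ¬ p'.1 ∣ J.1 := by
          refine forall₂_congr fun p' hp' => ?_
          rw [not_iff_not]
          have hpp' : Prime p'.1 := Ideal.prime_of_isPrime p'.2.1 p'.2.2
          constructor
          · intro h
            rcases hpp'.dvd_or_dvd h with h | h
            · exfalso
              apply hp
              have h2 := (hpp'.dvd_prime_iff_associated hpp).1 h
              rw [associated_iff_eq] at h2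
              have : p' = p := Subtype.ext h2
              rwa [← this]
            · exact h
          · exact fun h => h.mul_left _
        simp only [Function.comp, m, dvd_mul_right, true_and, hiff]
        split_ifs
        · rw [map_mul]
          push_cast
          rw [Complex.natCast_mul_natCast_cpow]
        · simp
      · intro I hI
        rw [if_neg]
        rintro ⟨⟨J, hJ⟩, -⟩
        apply hI
        refine ⟨⟨J, ?_⟩, ?_⟩
        · rintro rfl
          apply I.2
          rw [hJ]; simp
        · exact Subtype.ext hJ.symm
    have h2 := ih.sub h1
    rw [Finset.prod_insert hp]
    have e3 : ((1 - (Ideal.absNorm p.1 : ℂ)^(-s)) * ∏ p ∈ S, (1 - (Ideal.absNorm p.1 : ℂ)^(-s))) * Z =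
      (∏ p ∈ S, (1 - (Ideal.absNorm p.1 : ℂ)^(-s))) * Z - (Ideal.absNorm p.1 : ℂ)^(-s) *
        ((∏ p ∈ S, (1 - (Ideal.absNorm p.1 : ℂ)^(-s))) * Z) := by ring
    rw [e3]
    refine hasSum_of_eq' (fun I => ?_) h2
    · simp only [Finset.forall_mem_insert]
      by_cases ha : p.1 ∣ I.1 <;> by_cases hb : ∀ p ∈ S, ¬ p.1 ∣ I.1 <;> simp [ha, hb]

theorem euler_part (s : ℂ)
    (hs : LSeriesSummable (fun n => ((Nat.card {I : Ideal (𝓞 K) // Ideal.absNorm I = n} : ℝ) : ℂ)) s) :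
    LSeries (fun n => ((Nat.card {I : Ideal (𝓞 K) // Ideal.absNorm I = n} : ℝ) : ℂ)) s ≠ 0 ∧
    HasProd (fun p : {p : Ideal (𝓞 K) // p ≠ ⊥ ∧ p.IsPrime} => 1 - (Ideal.absNorm p.1 : ℂ)^(-s))
      (LSeries (fun n => ((Nat.card {I : Ideal (𝓞 K) // Ideal.absNorm I = n} : ℝ) : ℂ)) s)⁻¹ ∧
    Summable (fun p : {p : Ideal (𝓞 K) // p ≠ ⊥ ∧ p.IsPrime} => (Ideal.absNorm p.1 : ℝ)^(-s.re)) := by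
  classical
  obtain ⟨hsum, hZ⟩ := ideal_hasSum K s hs
  set Z := LSeries (fun n => ((Nat.card {I : Ideal (𝓞 K) // Ideal.absNorm I = n} : ℝ) : ℂ)) s
  have hlim : Filter.Tendsto (fun S : Finset {p : Ideal (𝓞 K) // p ≠ ⊥ ∧ p.IsPrime} =>
      ∑' I : {I : Ideal (𝓞 K) // I ≠ ⊥},
        if ∀ p ∈ S, ¬ p.1 ∣ I.1 then (Ideal.absNorm I.1 : ℂ)^(-s) else 0) Filter.atTop
      (nhds (∑' I : {I : Ideal (𝓞 K) // I ≠ ⊥}, if I = ⟨⊤, top_ne_bot⟩ then 1 else 0)) := by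
    refine tendsto_tsum_of_dominated_convergence hsum ?_ ?_
    · intro I
      by_cases hI : I = ⟨⊤, top_ne_bot⟩
      · rw [if_pos hI]
        subst hI
        refine tendsto_const_nhds.congr fun S => ?_
        rw [if_pos]
        · simp
        · intro p hp h
          rw [Ideal.dvd_iff_le, top_le_iff] at h
          exact p.2.2.ne_top h
      · rw [if_neg hI]
        have hI' : I.1 ≠ ⊤ := fun h => hI (Subtype.ext h)
        obtain ⟨M, hM, hIM⟩ := Ideal.exists_le_maximal I.1 hI'
        have hM0 : M ≠ ⊥ := by
          rintro rfl
          exact I.2 (le_bot_iff.1 hIM)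
        refine tendsto_const_nhds.congr' ?_
        filter_upwards [Filter.eventually_ge_atTop {(⟨M, hM0, hM.isPrime⟩ : {p : Ideal (𝓞 K) // p ≠ ⊥ ∧ p.IsPrime})}] with S hS
        rw [if_neg]
        intro h
        exact h _ (hS (Finset.mem_singleton_self _)) (Ideal.dvd_iff_le.2 hIM)
    · refine Filter.Eventually.of_forall fun S I => ?_
      split_ifs
      · rw [norm_cpow_ideal]
      · rw [norm_zero]; positivity
  rw [tsum_ite_eq] at hlim
  have hlim2 : Filter.Tendsto (fun S : Finset {p : Ideal (𝓞 K) // p ≠ ⊥ ∧ p.IsPrime} =>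
      (∏ p ∈ S, (1 - (Ideal.absNorm p.1 : ℂ)^(-s))) * Z) Filter.atTop (nhds 1) := by
    refine hlim.congr fun S => ?_
    convert (euler_finite K s Z hZ S).tsum_eq
  have hZ0 : Z ≠ 0 := by
    intro h0
    rw [h0] at hlim2
    simp only [mul_zero] at hlim2
    exact zero_ne_one (tendsto_nhds_unique tendsto_const_nhds hlim2)
  refine ⟨hZ0, ?_, ?_⟩
  · have h := hlim2.mul_const Z⁻¹
    simp only [mul_assoc, mul_inv_cancel₀ hZ0, mul_one, one_mul] at h
    simpa [HasProd] using h
  · refine hsum.comp_injective (i := fun p : {p : Ideal (𝓞 K) // p ≠ ⊥ ∧ p.IsPrime} =>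
      (⟨p.1, p.2.1⟩ : {I : Ideal (𝓞 K) // I ≠ ⊥})) ?_
    intro a b h
    exact Subtype.ext (Subtype.mk.inj h)

end
end GW
end

section
open Real

namespace GW

theorem abel_part (f : ℕ → ℝ) (hf : ∀ n, 0 ≤ f n) (κ C : ℝ)
    (h : ∀ n : ℕ, |∑ k ∈ Finset.Icc 1 n, f k - κ * n| ≤ C * √n) :
    ∃ (J : ℂ → ℂ) (B : ℝ), 0 ≤ B ∧ (∀ s : ℂ, 1/2 < s.re → DifferentiableAt ℂ J s) ∧
      (∀ s : ℂ, 3/4 ≤ s.re → ‖J s‖ ≤ B * (1 + ‖s‖)) ∧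
      (∀ s : ℂ, 1 < s.re → LSeriesSummable (fun n => (f n : ℂ)) s ∧
        LSeries (fun n => (f n : ℂ)) s = κ / (s - 1) + J s) := by
  set E : ℝ → ℝ := fun t => ∑ k ∈ Finset.Icc 1 ⌊t⌋₊, f k - κ * t with hE
  set C1 : ℝ := |C| + |κ| with hC1
  have hC1p : 0 ≤ C1 := by positivity
  have hEb : ∀ t : ℝ, 1 ≤ t → |E t| ≤ C1 * t ^ (1/2 : ℝ) := by
    intro t ht
    rw [← Real.sqrt_eq_rpow]
    have h1 := h ⌊t⌋₊
    have h2 : E t = (∑ k ∈ Finset.Icc 1 ⌊t⌋₊, f k - κ * ⌊t⌋₊) - κ * (t - ⌊t⌋₊) := by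
      rw [hE]; ring
    have h3 : |t - ⌊t⌋₊| ≤ 1 := by
      rw [abs_le]
      have := Nat.floor_le (show 0 ≤ t by linarith)
      have := Nat.lt_floor_add_one t
      constructor <;> linarith
    have hsq : 1 ≤ √t := Real.one_le_sqrt.2 ht
    rw [h2]
    calc _ ≤ _ := abs_sub _ _
      _ ≤ C * √⌊t⌋₊ + |κ| * 1 := by
        rw [abs_mul]; gcongr
      _ ≤ |C| * √t + |κ| * √t := by
        gcongr
        · exact le_abs_self C
        · exact Nat.floor_le (by linarith)
      _ = _ := by rw [hC1]; ring
  have hEm : Measurable E := by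
    apply Measurable.sub
    · exact (measurable_from_nat (f := fun n => ∑ k ∈ Finset.Icc 1 n, f k)).comp Nat.measurable_floor
    · fun_prop
  set F : ℝ → ℂ := Set.indicator (Set.Ioi 1) (fun t => (E t : ℂ)) with hF
  have hFm : Measurable F := (Complex.measurable_ofReal.comp hEm).indicator measurableSet_Ioi
  have hFb : ∀ t : ℝ, 0 < t → ‖F t‖ ≤ C1 * t ^ (1/2 : ℝ) := by
    intro t ht
    by_cases h1 : t ∈ Set.Ioi (1:ℝ)
    · rw [hF, Set.indicator_of_mem h1, Complex.norm_real]
      exact hEb t (le_of_lt h1)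
    · rw [hF, Set.indicator_of_notMem h1, norm_zero]
      positivity
  have hFloc : MeasureTheory.LocallyIntegrableOn F (Set.Ioi 0) := by
    have h1 : MeasureTheory.LocallyIntegrableOn (fun t : ℝ => C1 * t ^ (1/2:ℝ)) (Set.Ioi 0) := by
      apply ContinuousOn.locallyIntegrableOn _ measurableSet_Ioi
      apply ContinuousOn.mul continuousOn_const
      exact (Real.continuous_rpow_const (by norm_num)).continuousOn
    refine h1.mono hFm.aestronglyMeasurable ?_
    refine Filter.Eventually.of_forall ?_
    intro t
    by_cases ht : 0 < t
    · rw [Real.norm_eq_abs, abs_of_nonneg (by positivity)]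
      exact hFb t ht
    · have : t ∉ Set.Ioi (1:ℝ) := by simp at ht ⊢; linarith
      rw [hF, Set.indicator_of_notMem this, norm_zero]
      positivity
  have hmd : ∀ s : ℂ, 1/2 < s.re → DifferentiableAt ℂ (mellin F) (-s) := by
    intro s hs
    refine mellin_differentiableAt_of_isBigO_rpow (a := -(1/2)) (b := -s.re - 1) hFloc ?_ ?_ ?_ ?_
    · refine Asymptotics.IsBigO.of_bound C1 ?_
      filter_upwards [Filter.eventually_gt_atTop 0] with t ht
      rw [Real.norm_eq_abs, abs_of_nonneg (by positivity), neg_neg]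
      exact hFb t ht
    · simp; linarith
    · refine Asymptotics.IsBigO.of_bound 0 ?_
      have : Set.Ioo (0:ℝ) 1 ∈ nhdsWithin 0 (Set.Ioi 0) := Ioo_mem_nhdsGT (by norm_num)
      filter_upwards [this] with t ht
      have : t ∉ Set.Ioi (1:ℝ) := by simp; linarith [ht.2]
      rw [hF, Set.indicator_of_notMem this]
      simp
    · simp
  have hmell : ∀ s : ℂ, mellin F (-s) = ∫ t in Set.Ioi (1:ℝ), (E t : ℂ) * (t:ℂ) ^ (-(s+1)) := by
    intro s
    rw [mellin, hF]
    have h1 : ∀ t : ℝ, ((t:ℂ) ^ (-s-1)) • Set.indicator (Set.Ioi 1) (fun t => (E t : ℂ)) t =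
        Set.indicator (Set.Ioi 1) (fun t : ℝ => (E t : ℂ) * (t:ℂ) ^ (-(s+1))) t := by
      intro t
      by_cases h1 : t ∈ Set.Ioi (1:ℝ)
      · rw [Set.indicator_of_mem h1, Set.indicator_of_mem h1, smul_eq_mul, mul_comm]
        congr 2; ring
      · rw [Set.indicator_of_notMem h1, Set.indicator_of_notMem h1]; simp
    simp_rw [h1]
    rw [MeasureTheory.setIntegral_indicator measurableSet_Ioi]
    congr 2
    ext t; simp; try (intro ht; linarith)
  have hnb : ∀ s : ℂ, ∀ t ∈ Set.Ioi (1:ℝ), ‖(E t : ℂ) * (t:ℂ) ^ (-(s+1))‖ ≤ C1 * t ^ (-s.re - 1/2) := by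
    intro s t ht
    have ht0 : 0 < t := lt_trans one_pos ht
    rw [norm_mul, Complex.norm_real, Complex.norm_cpow_eq_rpow_re_of_pos ht0]
    have h1 : t ^ (-s.re - 1/2) = t ^ (1/2:ℝ) * t ^ (-(s+1)).re := by
      rw [← Real.rpow_add ht0]; congr 1; simp; ring
    rw [h1, ← mul_assoc]
    gcongr
    exact hEb t (le_of_lt ht)
  have hgi : ∀ s : ℂ, 1/2 < s.re → MeasureTheory.IntegrableOn (fun t : ℝ => C1 * t ^ (-s.re - 1/2)) (Set.Ioi 1) := by
    intro s hs
    exact (integrableOn_Ioi_rpow_of_lt (by linarith) one_pos).const_mul _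
  have hEi : ∀ s : ℂ, 1/2 < s.re →
      MeasureTheory.IntegrableOn (fun t : ℝ => (E t : ℂ) * (t:ℂ) ^ (-(s+1))) (Set.Ioi 1) := by
    intro s hs
    refine MeasureTheory.Integrable.mono' (hgi s hs) ?_ ?_
    · apply Measurable.aestronglyMeasurable
      apply Measurable.mul (by fun_prop)
      exact (Complex.measurable_ofReal.pow_const _)
    · refine (MeasureTheory.ae_restrict_mem measurableSet_Ioi).mono ?_
      exact hnb s
  refine ⟨fun s => κ + s * mellin F (-s), |κ| + 4 * C1, by positivity, ?_, ?_, ?_⟩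
  · intro s hs
    have h1 : DifferentiableAt ℂ (fun s => mellin F (-s)) s :=
      DifferentiableAt.comp (g := mellin F) (f := fun s : ℂ => -s) s (hmd s hs)
        differentiable_neg.differentiableAt
    exact (differentiableAt_const _).add (differentiableAt_id.mul h1)
  · intro s hs
    have h1 : ‖mellin F (-s)‖ ≤ 4 * C1 := by
      rw [hmell]
      calc _ ≤ ∫ t in Set.Ioi (1:ℝ), C1 * t ^ (-s.re - 1/2) :=
            MeasureTheory.norm_integral_le_of_norm_le (hgi s (by linarith))
              ((MeasureTheory.ae_restrict_mem measurableSet_Ioi).mono (hnb s))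
        _ = C1 * (1/(s.re - 1/2)) := by
            rw [MeasureTheory.integral_const_mul, integral_Ioi_rpow_of_lt (by linarith) one_pos,
              Real.one_rpow]
            congr 1
            rw [← neg_div_neg_eq]
            congr 1 <;> ring
        _ ≤ C1 * 4 := by
            gcongr
            rw [div_le_iff₀ (by linarith)]; linarith
        _ = _ := by ring
    calc _ ≤ ‖(κ:ℂ)‖ + ‖s * mellin F (-s)‖ := norm_add_le _ _
      _ ≤ |κ| + ‖s‖ * (4 * C1) := by
        rw [norm_mul, Complex.norm_real, Real.norm_eq_abs]; gcongr
      _ ≤ _ := by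
        have : 0 ≤ |κ| * ‖s‖ := by positivity
        nlinarith
  · intro s hs
    have hO : (fun n : ℕ ↦ ∑ k ∈ Finset.Icc 1 n, f k) =O[Filter.atTop] fun n ↦ (n : ℝ) ^ (1:ℝ) := by
      refine Asymptotics.IsBigO.of_bound (|C| + |κ|) ?_
      filter_upwards [Filter.eventually_ge_atTop 1] with n hn
      have hn1 : (1:ℝ) ≤ n := by exact_mod_cast hn
      rw [Real.rpow_one, Real.norm_eq_abs, Real.norm_eq_abs, Nat.abs_cast]
      have h1 := h n
      have h2 : √(n:ℝ) ≤ n := by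
        rw [Real.sqrt_le_left (by linarith)]; nlinarith
      calc _ = |(∑ k ∈ Finset.Icc 1 n, f k - κ * n) + κ * n| := by ring_nf
        _ ≤ _ := abs_add_le _ _
        _ ≤ |C| * n + |κ| * n := by
          rw [abs_mul, Nat.abs_cast]
          gcongr
          exact h1.trans (by gcongr; exact le_abs_self C)
        _ = _ := by ring
    refine ⟨?_, ?_⟩
    · exact LSeriesSummable_of_sum_norm_bigO_and_nonneg hO hf zero_le_one hs
    · beta_reduce
      rw [LSeries_eq_mul_integral_of_nonneg f zero_le_one hs hO hf, hmell]
      have hs1 : s - 1 ≠ 0 := by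
        intro h0
        have : s = 1 := by linear_combination h0
        rw [this] at hs; simp at hs
      have h2 : ∀ t ∈ Set.Ioi (1:ℝ), (∑ k ∈ Finset.Icc 1 ⌊t⌋₊, (f k : ℂ)) * (t:ℂ) ^ (-(s+1)) =
          κ * (t:ℂ)^(-s) + (E t : ℂ) * (t:ℂ) ^ (-(s+1)) := by
        intro t ht
        have ht0 : (t:ℂ) ≠ 0 := by
          have : 0 < t := lt_trans one_pos ht
          exact_mod_cast this.ne'
        have h3 : (t:ℂ)^(-s) = t * (t:ℂ) ^ (-(s+1)) := by
          rw [show -s = 1 + -(s+1) by ring, Complex.cpow_add _ _ ht0, Complex.cpow_one]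
        rw [h3, hE]
        push_cast
        ring
      rw [MeasureTheory.setIntegral_congr_fun measurableSet_Ioi h2, MeasureTheory.integral_add,
        MeasureTheory.integral_const_mul, integral_Ioi_cpow_of_lt (by simpa using hs) one_pos]
      · simp only [Complex.ofReal_one, Complex.one_cpow]
        have hs2 : -s + 1 ≠ 0 := by
          intro h0; apply hs1; linear_combination -h0
        field_simp
        ring
      · exact (integrableOn_Ioi_cpow_of_lt (by simpa using hs) one_pos).const_mul _
      · exact hEi s (by linarith)

end GW
end

section
open Real

namespace GW

lemma euler_factor_341 {a : ℝ} (ha₀ : 0 ≤ a) (ha₁ : a < 1) {z : ℂ} (hz : ‖z‖ = 1) :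
    ‖1 - (a:ℂ)‖^3 * ‖1 - a * z‖^4 * ‖1 - a * z^2‖ ≤ 1 := by
  have hac₀ : ‖(a : ℂ)‖ < 1 := by
    simp only [Complex.norm_of_nonneg ha₀, ha₁]
  have hac₁ : ‖a * z‖ < 1 := by rwa [norm_mul, hz, mul_one]
  have hac₂ : ‖a * z ^ 2‖ < 1 := by rwa [norm_mul, norm_pow, hz, one_pow, mul_one]
  have key : 0 ≤ 3 * (-Complex.log (1 - a)).re + 4 * (-Complex.log (1 - a * z)).re
      + (-Complex.log (1 - a * z ^ 2)).re := by
    rw [← ((Complex.hasSum_re <| Complex.hasSum_taylorSeries_neg_log hac₀).mul_left 3).add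
      ((Complex.hasSum_re <| Complex.hasSum_taylorSeries_neg_log hac₁).mul_left 4) |>.add
      (Complex.hasSum_re <| Complex.hasSum_taylorSeries_neg_log hac₂) |>.tsum_eq]
    refine tsum_nonneg fun n ↦ ?_
    simp only [← Complex.ofReal_pow, Complex.div_natCast_re, Complex.ofReal_re, mul_pow,
      Complex.mul_re, Complex.ofReal_im, zero_mul, sub_zero]
    rcases n.eq_zero_or_pos with rfl | hn
    · simp
    · simp only [← mul_div_assoc, ← add_div]
      refine div_nonneg ?_ n.cast_nonneg
      rw [← pow_mul, pow_mul', sq, Complex.mul_re, ← sq, ← sq, ← Complex.sq_norm_sub_sq_re,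
        norm_pow, hz]
      have : (0:ℝ) ≤ 2 * a ^ n * ((z ^ n).re + 1) ^ 2 := by positivity
      rw [one_pow]
      nlinarith
  have hne : ∀ w : ℂ, ‖w‖ < 1 → 0 < ‖1 - w‖ := by
    intro w hw
    rw [norm_pos_iff, sub_ne_zero]
    rintro rfl
    simp at hw
  have p0 := hne _ hac₀
  have p1 := hne _ hac₁
  have p2 := hne _ hac₂
  simp only [Complex.neg_re, Complex.log_re] at key
  have hpos : 0 < ‖1 - (a:ℂ)‖^3 * ‖1 - a * z‖^4 * ‖1 - a * z^2‖ := by positivity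
  have : Real.log (‖1 - (a:ℂ)‖^3 * ‖1 - a * z‖^4 * ‖1 - a * z^2‖) ≤ 0 := by
    rw [Real.log_mul (by positivity) p2.ne', Real.log_mul (by positivity) (by positivity),
      Real.log_pow, Real.log_pow]
    push_cast
    linarith
  exact (Real.log_nonpos_iff hpos.le).1 this

theorem euler_341 {ι : Type*} (q : ι → ℝ) (hq : ∀ i, 2 ≤ q i) (Z : ℂ → ℂ)
    (hZ : ∀ s : ℂ, 1 < s.re → Z s ≠ 0)
    (hprod : ∀ s : ℂ, 1 < s.re → HasProd (fun i => 1 - (q i : ℂ)^(-s)) (Z s)⁻¹)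
    (s : ℂ) (hs : 1 < s.re) :
    1 ≤ ‖Z (s.re : ℂ)‖^3 * ‖Z s‖^4 * ‖Z (s.re + 2 * s.im * Complex.I)‖ := by
  have e1 : 1 < ((s.re : ℂ)).re := by simpa using hs
  have e2 : 1 < ((s.re : ℂ) + 2 * s.im * Complex.I).re := by simpa using hs
  have h0 := (hprod _ e1).norm
  have h1 := (hprod _ hs).norm
  have h2 := (hprod _ e2).norm
  have h3 := ((h0.pow 3).mul (h1.pow 4)).mul h2
  have h4 : ‖(Z (s.re : ℂ))⁻¹‖^3 * ‖(Z s)⁻¹‖^4 * ‖(Z (s.re + 2 * s.im * Complex.I))⁻¹‖ ≤ 1 := by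
    refine le_of_tendsto h3 ?_
    refine Filter.Eventually.of_forall fun S => ?_
    refine Finset.prod_le_one (fun i _ => by positivity) (fun i _ => ?_)
    have hq0 : 0 < q i := by have := hq i; linarith
    have hqc : (q i : ℂ) ≠ 0 := by exact_mod_cast hq0.ne'
    have a0 : (q i : ℂ)^(-(s.re : ℂ)) = ((q i ^ (-s.re) : ℝ) : ℂ) := by
      rw [Complex.ofReal_cpow hq0.le]; simp
    set z := (q i : ℂ)^(-(s.im * Complex.I)) with hz
    have hz1 : ‖z‖ = 1 := by
      rw [hz, Complex.norm_cpow_eq_rpow_re_of_pos hq0]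
      simp
    have a1 : (q i : ℂ)^(-s) = ((q i ^ (-s.re) : ℝ) : ℂ) * z := by
      rw [← a0, hz, ← Complex.cpow_add _ _ hqc]
      congr 1
      conv_lhs => rw [← Complex.re_add_im s]
      ring
    have a2 : (q i : ℂ)^(-((s.re : ℂ) + 2 * s.im * Complex.I)) = ((q i ^ (-s.re) : ℝ) : ℂ) * z^2 := by
      rw [← a0, hz, ← Complex.cpow_nat_mul, ← Complex.cpow_add _ _ hqc]
      congr 1
      push_cast
      ring
    rw [a0, a1, a2]
    apply euler_factor_341 (by positivity) _ hz1
    apply Real.rpow_lt_one_of_one_lt_of_neg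
    · have := hq i; linarith
    · linarith
  simp only [norm_inv] at h4
  have p0 := norm_pos_iff.2 (hZ _ e1)
  have p1 := norm_pos_iff.2 (hZ _ hs)
  have p2 := norm_pos_iff.2 (hZ _ e2)
  rw [inv_pow, inv_pow, ← mul_inv, ← mul_inv, inv_le_one₀ (by positivity)] at h4
  exact h4

lemma cauchy_bound (F : ℂ → ℂ) (a r B : ℝ) (k : ℕ) (hB : 0 ≤ B) (hr : 0 < r) (hr1 : r ≤ 1)
    (hd : ∀ s : ℂ, a ≤ s.re → DifferentiableAt ℂ F s)
    (hb : ∀ s : ℂ, a ≤ s.re → ‖F s‖ ≤ B * (1 + ‖s‖)^k) :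
    ∀ s : ℂ, a + r ≤ s.re → ‖deriv F s‖ ≤ (B * 2^k / r) * (1 + ‖s‖)^k := by
  intro s hs
  have hcl : ∀ z ∈ Metric.closedBall s r, a ≤ z.re := by
    intro z hz
    rw [Metric.mem_closedBall, dist_eq_norm] at hz
    have := Complex.abs_re_le_norm (z - s)
    have h2 := (abs_le.1 (this.trans hz)).1
    simp at h2
    linarith
  have h1 : DiffContOnCl ℂ F (Metric.ball s r) := by
    apply DifferentiableOn.diffContOnCl
    rw [closure_ball _ hr.ne']
    intro z hz
    exact (hd z (hcl z hz)).differentiableWithinAt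
  have h2 := Complex.norm_deriv_le_of_forall_mem_sphere_norm_le (C := B * (2 * (1 + ‖s‖))^k) hr h1 (by
    intro z hz
    have hz' := Metric.sphere_subset_closedBall hz
    refine (hb z (hcl z hz')).trans ?_
    gcongr
    rw [Metric.mem_closedBall, dist_eq_norm] at hz'
    have : ‖z‖ ≤ ‖s‖ + ‖z - s‖ := by
      calc ‖z‖ = ‖s + (z - s)‖ := by ring_nf
        _ ≤ _ := norm_add_le _ _
    have := norm_nonneg s
    linarith)
  refine h2.trans (le_of_eq ?_)
  rw [mul_pow]; ring

theorem lower_bound {ι : Type*} (q : ι → ℝ) (hq : ∀ i, 2 ≤ q i) (Z J : ℂ → ℂ) (κ B : ℝ)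
    (hκ : 0 < κ) (hB : 0 ≤ B)
    (hJd : ∀ s : ℂ, 1/2 < s.re → DifferentiableAt ℂ J s)
    (hJb : ∀ s : ℂ, 3/4 ≤ s.re → ‖J s‖ ≤ B * (1 + ‖s‖))
    (hZJ : ∀ s : ℂ, 1 < s.re → Z s = κ / (s - 1) + J s)
    (hZ : ∀ s : ℂ, 1 < s.re → Z s ≠ 0)
    (hprod : ∀ s : ℂ, 1 < s.re → HasProd (fun i => 1 - (q i : ℂ)^(-s)) (Z s)⁻¹) :
    ∃ c : ℝ, 0 < c ∧ ∀ s : ℂ, 1 < s.re → s.re ≤ 2 → c / (1 + ‖s‖)^7 ≤ ‖κ + (s - 1) * J s‖ := by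
  set G : ℂ → ℂ := fun s => κ + (s - 1) * J s with hG
  have hGd : ∀ s : ℂ, 1/2 < s.re → DifferentiableAt ℂ G s := by
    intro s hs
    have := hJd s hs
    rw [hG]
    fun_prop
  have hGb : ∀ s : ℂ, 3/4 ≤ s.re → ‖G s‖ ≤ (κ + B) * (1 + ‖s‖)^2 := by
    intro s hs
    have h1 := hJb s hs
    have h0 := norm_nonneg s
    have h2 : ‖s - 1‖ ≤ 1 + ‖s‖ := by
      have := norm_sub_le s 1; simp at this; linarith
    calc ‖G s‖ ≤ ‖(κ:ℂ)‖ + ‖(s-1) * J s‖ := norm_add_le _ _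
      _ ≤ κ + (1 + ‖s‖) * (B * (1 + ‖s‖)) := by
        rw [norm_mul, Complex.norm_of_nonneg hκ.le]; gcongr
      _ ≤ _ := by nlinarith [mul_nonneg hκ.le h0, mul_nonneg hκ.le (sq_nonneg ‖s‖)]
  obtain ⟨D, hD0, hD⟩ : ∃ D : ℝ, 0 < D ∧ ∀ s : ℂ, 1 ≤ s.re → ‖deriv G s‖ ≤ D * (1 + ‖s‖)^2 := by
    refine ⟨(κ + B) * 2^2 / (1/4), by positivity, fun s hs => ?_⟩
    exact cauchy_bound G (3/4) (1/4) (κ + B) 2 (by positivity) (by norm_num) (by norm_num)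
      (fun s hs => hGd s (by linarith)) hGb s (by linarith)
  obtain ⟨δ, hδ0, hδ⟩ : ∃ δ > 0, ∀ s : ℂ, ‖s - 1‖ < δ → κ/2 ≤ ‖G s‖ := by
    have hc : ContinuousAt G 1 := (hGd 1 (by norm_num)).continuousAt
    obtain ⟨δ, hδ0, hδ⟩ := Metric.continuousAt_iff.1 hc (κ/2) (by linarith)
    refine ⟨δ, hδ0, fun s hs => ?_⟩
    have h1 := hδ (show dist s 1 < δ by rw [dist_eq_norm]; exact hs)
    have h2 : G 1 = κ := by simp [hG]
    rw [h2, dist_eq_norm] at h1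
    have h3 := norm_sub_norm_le (κ:ℂ) (G s)
    rw [norm_sub_rev, Complex.norm_of_nonneg hκ.le] at h3
    linarith
  set M : ℝ := κ + κ/δ + 4*B + 1 with hM
  have hM0 : 0 < M := by positivity
  set ε : ℝ := min 1 (δ/(8*D*M)) with hε
  have hε0 : 0 < ε := by positivity
  have hε1 : ε ≤ 1 := min_le_left _ _
  have hε2 : ε * (8 * D * M) ≤ δ := by
    have : ε ≤ δ/(8*D*M) := min_le_right _ _
    rwa [le_div_iff₀ (by positivity)] at this
  have hGZ : ∀ s : ℂ, 1 < s.re → G s = (s - 1) * Z s := by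
    intro s hs
    have hs1 : s - 1 ≠ 0 := by
      intro h0
      have : s = 1 := by linear_combination h0
      rw [this] at hs; simp at hs
    rw [hZJ s hs, hG]
    field_simp
  refine ⟨min (κ/2) (ε^3 * δ/(2*M)), by positivity, fun s hs hs2 => ?_⟩
  set T : ℝ := 1 + ‖s‖ with hT
  have hsn := norm_nonneg s
  have hT1 : 1 ≤ T := by linarith
  have hT0 : 0 < T := by linarith
  rcases lt_or_ge ‖s - 1‖ δ with h | h
  · refine le_trans ?_ (hδ s h)
    refine (div_le_self (by positivity) (one_le_pow₀ hT1)).trans (min_le_left _ _)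
  set η : ℝ := ε^4/T^9 with hη
  have hη0 : 0 < η := by positivity
  have hη1 : η ≤ 1 := by
    rw [hη, div_le_one (by positivity)]
    exact (pow_le_one₀ hε0.le hε1).trans (one_le_pow₀ hT1)
  set s' : ℂ := s + η with hs'
  have hre' : s'.re = s.re + η := by simp [hs']
  have him' : s'.im = s.im := by simp [hs']
  have hs'1 : 1 < s'.re := by linarith
  set s2 : ℂ := s'.re + 2 * s'.im * Complex.I with hs2def
  have hre2 : s2.re = s.re + η := by simp [hs2def, hre']
  have him2 : s2.im = 2 * s.im := by simp [hs2def, him']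
  have hn' : ‖s'‖ ≤ ‖s‖ + 1 := by
    refine (norm_add_le _ _).trans ?_
    rw [Complex.norm_of_nonneg hη0.le]; linarith
  have h341 := euler_341 q hq Z hZ hprod s' hs'1
  have mono_norm : ∀ w z : ℂ, |w.re| ≤ |z.re| → |w.im| ≤ |z.im| → ‖w‖ ≤ ‖z‖ := by
    intro w z h1 h2
    rw [Complex.norm_eq_sqrt_sq_add_sq, Complex.norm_eq_sqrt_sq_add_sq]
    apply Real.sqrt_le_sqrt
    exact add_le_add (sq_le_sq.2 h1) (sq_le_sq.2 h2)
  have hd' : δ ≤ ‖s' - 1‖ := by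
    refine h.trans (mono_norm _ _ ?_ ?_)
    · simp [hre']; rw [abs_of_pos (by linarith), abs_of_pos (by linarith)]; linarith
    · simp [him']
  have hd2 : δ ≤ ‖s2 - 1‖ := by
    refine h.trans (mono_norm _ _ ?_ ?_)
    · simp only [Complex.sub_re, hre2, Complex.one_re]
      rw [abs_of_pos (by linarith), abs_of_pos (by linarith)]; linarith
    · simp only [Complex.sub_im, him2, Complex.one_im, sub_zero]
      rw [abs_mul]; norm_num; linarith [abs_nonneg s.im]
  -- bound at real point
  have b1 : ‖Z (s'.re : ℂ)‖ ≤ M/η := by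
    rw [hZJ _ (by simpa using hs'1)]
    have h1 : ‖((κ:ℂ) / ((s'.re : ℂ) - 1))‖ ≤ κ/η := by
      rw [norm_div, Complex.norm_of_nonneg hκ.le]
      have : ((s'.re : ℂ) - 1) = ((s'.re - 1 : ℝ) : ℂ) := by push_cast; ring
      rw [this, Complex.norm_of_nonneg (by linarith)]
      gcongr
      linarith
    have h2 : ‖J (s'.re : ℂ)‖ ≤ B * 4 := by
      refine (hJb _ (by simp; linarith)).trans ?_
      gcongr
      rw [Complex.norm_of_nonneg (by linarith)]
      linarith
    have h3 : B * 4 ≤ (4*B)/η := by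
      rw [le_div_iff₀ hη0]
      nlinarith
    calc _ ≤ _ := norm_add_le _ _
      _ ≤ κ/η + 4*B/η := by linarith
      _ = (κ + 4*B)/η := by ring
      _ ≤ M/η := by
        gcongr
        rw [hM]
        have : 0 < κ/δ := by positivity
        linarith
  have b2 : ‖Z s2‖ ≤ M * T := by
    rw [hZJ _ (by rw [hre2]; linarith)]
    have h1 : ‖((κ:ℂ) / (s2 - 1))‖ ≤ κ/δ := by
      rw [norm_div, Complex.norm_of_nonneg hκ.le]
      gcongr
    have h2 : ‖J s2‖ ≤ B * (4 * T) := by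
      refine (hJb _ (by rw [hre2]; linarith)).trans ?_
      gcongr
      have : ‖s2‖ ≤ ‖2 * s'‖ := by
        apply mono_norm
        · simp [hs2def]; rw [abs_of_pos (by linarith : 0 < s'.re)]; linarith
        · simp [hs2def]
      rw [norm_mul] at this
      norm_num at this
      linarith
    calc _ ≤ _ := norm_add_le _ _
      _ ≤ κ/δ * T + 4*B*T := by
        have : κ/δ ≤ κ/δ * T := le_mul_of_one_le_right (by positivity) hT1
        linarith
      _ = (κ/δ + 4*B) * T := by ring
      _ ≤ M * T := by
        gcongr
        rw [hM]
        linarith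
  have b3 : 1 ≤ (M/η)^3 * ‖Z s'‖^4 * (M * T) := by
    refine h341.trans ?_
    gcongr
  have b4 : (ε^3/T^7)^4 ≤ (‖Z s'‖ * M)^4 := by
    have h1 : (M/η)^3 * ‖Z s'‖^4 * (M * T) = (‖Z s'‖ * M)^4 * (T^28/ε^12) := by
      rw [hη]; field_simp
    rw [h1] at b3
    have h2 : (ε^3/T^7)^4 = 1 * (ε^12/T^28) := by field_simp
    rw [h2]
    calc 1 * (ε^12/T^28) ≤ ((‖Z s'‖ * M)^4 * (T^28/ε^12)) * (ε^12/T^28) := by gcongr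
      _ = _ := by field_simp
  have b5 : ε^3/T^7 ≤ ‖Z s'‖ * M := le_of_pow_le_pow_left₀ (by norm_num) (by positivity) b4
  have b6 : δ * (ε^3/T^7)/M ≤ ‖G s'‖ := by
    rw [hGZ s' hs'1, norm_mul, div_le_iff₀ hM0, mul_assoc]
    gcongr
  have b7 : ‖G s' - G s‖ ≤ 4 * D * ε * (ε^3/T^7) := by
    have hconv : Convex ℝ ({z : ℂ | 1 ≤ z.re} ∩ Metric.closedBall 0 (‖s‖+1)) :=
      (convex_halfSpace_re_ge 1).inter (convex_closedBall _ _)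
    have := hconv.norm_image_sub_le_of_norm_deriv_le (f := G) (C := D * (2*T)^2) (x := s) (y := s')
      (fun z hz => hGd z (by have : 1 ≤ z.re := hz.1; linarith)) (fun z hz => by
        refine (hD z hz.1).trans ?_
        have : ‖z‖ ≤ ‖s‖ + 1 := by simpa using hz.2
        gcongr
        linarith) ⟨hs.le, by simp⟩ ⟨hs'1.le, by simpa using hn'⟩
    refine this.trans (le_of_eq ?_)
    rw [show s' - s = (η:ℂ) by simp [hs'], Complex.norm_of_nonneg hη0.le, hη]
    field_simp
    ring
  have b8 : ‖G s'‖ - ‖G s' - G s‖ ≤ ‖G s‖ := by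
    have := norm_sub_norm_le (G s') (G s)
    linarith
  have b9 : min (κ/2) (ε^3 * δ/(2*M)) / T^7 ≤ (ε^3 * δ/(2*M))/T^7 := by
    gcongr; exact min_le_right _ _
  have b10 : 4 * D * ε * (ε^3/T^7) ≤ δ/(2*M) * (ε^3/T^7) := by
    gcongr
    rw [le_div_iff₀ (by positivity)]
    linarith
  have b11 : (ε^3 * δ/(2*M))/T^7 = δ * (ε^3/T^7)/M - δ/(2*M) * (ε^3/T^7) := by
    field_simp
    ring
  show _ ≤ ‖G s‖
  linarith

lemma summable_log_rpow {ι : Type*} (q : ι → ℝ) (hq : ∀ i, 2 ≤ q i)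
    (hsum : ∀ σ : ℝ, 1 < σ → Summable fun i => (q i)^(-σ)) (σ : ℝ) (hσ : 1 < σ) :
    Summable fun i => Real.log (q i) * (q i)^(-σ) := by
  set ε := (σ-1)/2 with hε
  have hε0 : 0 < ε := by rw [hε]; linarith
  refine Summable.of_nonneg_of_le (fun i => ?_) (fun i => ?_)
    ((hsum ((1+σ)/2) (by linarith)).mul_left (1/ε))
  · have := hq i
    have : 0 ≤ Real.log (q i) := Real.log_nonneg (by linarith)
    positivity
  · have hq0 : 0 < q i := by have := hq i; linarith
    have h1 := Real.log_le_rpow_div hq0.le hε0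
    have h2 : 1/ε * (q i)^(-((1+σ)/2)) = (q i)^ε/ε * (q i)^(-σ) := by
      have h3 : (q i)^(-((1+σ)/2)) = (q i)^ε * (q i)^(-σ) := by
        rw [← Real.rpow_add hq0]
        congr 1
        rw [hε]; ring
      rw [h3]; ring
    rw [h2]
    gcongr

lemma cpow_factor_ne {q : ℝ} (hq : 2 ≤ q) {s : ℂ} (hs : 3/4 ≤ s.re) :
    1/4 ≤ ‖1 - (q:ℂ)^(-s)‖ := by
  have hq0 : 0 < q := by linarith
  have h1 : ‖(q:ℂ)^(-s)‖ ≤ 3/4 := by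
    rw [Complex.norm_cpow_eq_rpow_re_of_pos hq0, Complex.neg_re]
    calc q ^ (-s.re) ≤ q^(-(1/2:ℝ)) := by
          apply Real.rpow_le_rpow_of_exponent_le <;> linarith
      _ ≤ 2^(-(1/2:ℝ)) := Real.rpow_le_rpow_of_nonpos (by norm_num) hq (by norm_num)
      _ = (√2)⁻¹ := by rw [Real.rpow_neg (by norm_num), Real.sqrt_eq_rpow]
      _ ≤ 3/4 := by
        rw [inv_le_comm₀ (by positivity) (by norm_num)]
        apply Real.le_sqrt_of_sq_le; norm_num
  have h2 := norm_sub_norm_le (1:ℂ) ((q:ℂ)^(-s))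
  rw [norm_one] at h2
  linarith

theorem theta_part {ι : Type*} (q : ι → ℝ) (hq : ∀ i, 2 ≤ q i)
    (hsum : ∀ σ : ℝ, 1 < σ → Summable fun i => (q i)^(-σ)) (Z J J1 : ℂ → ℂ) (κ B B1 : ℝ)
    (hκ : 0 < κ) (hB : 0 ≤ B) (hB1 : 0 ≤ B1)
    (hJd : ∀ s : ℂ, 1/2 < s.re → DifferentiableAt ℂ J s)
    (hJb : ∀ s : ℂ, 3/4 ≤ s.re → ‖J s‖ ≤ B * (1 + ‖s‖))
    (hZJ : ∀ s : ℂ, 1 < s.re → Z s = κ / (s - 1) + J s)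
    (hJ1d : ∀ s : ℂ, 1/2 < s.re → DifferentiableAt ℂ J1 s)
    (hJ1b : ∀ s : ℂ, 3/4 ≤ s.re → ‖J1 s‖ ≤ B1 * (1 + ‖s‖))
    (hZ : ∀ s : ℂ, 1 < s.re → Z s ≠ 0)
    (hprod : ∀ s : ℂ, 1 < s.re → HasProd (fun i => 1 - (q i : ℂ)^(-s)) (Z s)⁻¹) :
    ∃ (H : ℂ → ℂ) (A : ℝ), 0 ≤ A ∧ (∀ s : ℂ, 1 < s.re → DifferentiableAt ℂ H s ∧
        H s = (∑' i, (Real.log (q i) : ℂ) * (q i : ℂ)^(-s)) - (1/(s-1) + J1 s)) ∧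
      (∀ s : ℂ, 1 < s.re → s.re ≤ 2 → ‖H s‖ ≤ A * (1 + ‖s‖)^18 ∧
        ‖deriv H s‖ ≤ A * (1 + ‖s‖)^18) := by
  obtain ⟨c, hc0, hc⟩ := lower_bound q hq Z J κ B hκ hB hJd hJb hZJ hZ hprod
  set G : ℂ → ℂ := fun s => κ + (s - 1) * J s with hG
  have hGd : ∀ s : ℂ, 1/2 < s.re → DifferentiableAt ℂ G s := by
    intro s hs
    have := hJd s hs
    rw [hG]
    fun_prop
  have hGb : ∀ s : ℂ, 3/4 ≤ s.re → ‖G s‖ ≤ (κ + B) * (1 + ‖s‖)^2 := by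
    intro s hs
    have h1 := hJb s hs
    have h0 := norm_nonneg s
    have h2 : ‖s - 1‖ ≤ 1 + ‖s‖ := by
      have := norm_sub_le s 1; simp at this; linarith
    calc ‖G s‖ ≤ ‖(κ:ℂ)‖ + ‖(s-1) * J s‖ := norm_add_le _ _
      _ ≤ κ + (1 + ‖s‖) * (B * (1 + ‖s‖)) := by
        rw [norm_mul, Complex.norm_of_nonneg hκ.le]; gcongr
      _ ≤ _ := by nlinarith [mul_nonneg hκ.le h0, mul_nonneg hκ.le (sq_nonneg ‖s‖)]
  have hGZ : ∀ s : ℂ, 1 < s.re → G s = (s - 1) * Z s := by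
    intro s hs
    have hs1 : s - 1 ≠ 0 := by
      intro h0
      have : s = 1 := by linear_combination h0
      rw [this] at hs; simp at hs
    rw [hZJ s hs, hG]
    field_simp
  have hopen : ∀ a : ℝ, IsOpen {z : ℂ | a < z.re} := fun a =>
    isOpen_lt continuous_const Complex.continuous_re
  have hGd1 : ∀ s : ℂ, 1/2 < s.re → DifferentiableAt ℂ (deriv G) s := by
    intro s hs
    have h1 : DifferentiableOn ℂ G {z : ℂ | 1/2 < z.re} := fun z hz =>
      (hGd z hz).differentiableWithinAt
    exact (h1.deriv (hopen _)).differentiableAt ((hopen _).mem_nhds hs)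
  set D : ℝ := (κ + B) * 2^2/(1/8) with hD
  have hD0 : 0 < D := by positivity
  have hG1 : ∀ s : ℂ, 7/8 ≤ s.re → ‖deriv G s‖ ≤ D * (1 + ‖s‖)^2 := fun s hs =>
    cauchy_bound G (3/4) (1/8) (κ + B) 2 (by positivity) (by norm_num) (by norm_num)
      (fun s hs => hGd s (by linarith)) hGb s (by linarith)
  set D2 : ℝ := D * 2^2/(1/8) with hD2
  have hD20 : 0 < D2 := by positivity
  have hG2 : ∀ s : ℂ, 1 ≤ s.re → ‖deriv (deriv G) s‖ ≤ D2 * (1 + ‖s‖)^2 := fun s hs =>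
    cauchy_bound (deriv G) (7/8) (1/8) D 2 (by positivity) (by norm_num) (by norm_num)
      (fun s hs => hGd1 s (by linarith)) hG1 s (by linarith)
  -- the prime power part
  set r : ι → ℂ → ℂ := fun i s => (Real.log (q i) : ℂ) * ((q i : ℂ)^(-s))^2 / (1 - (q i : ℂ)^(-s)) with hr
  set u : ι → ℝ := fun i => 4 * (Real.log (q i) * (q i)^(-(3/2:ℝ))) with hu
  have hus : Summable u := (summable_log_rpow q hq hsum (3/2) (by norm_num)).mul_left 4
  have hq0 : ∀ i, 0 < q i := fun i => by have := hq i; linarith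
  have hqc : ∀ i, (q i : ℂ) ≠ 0 := fun i => by exact_mod_cast (hq0 i).ne'
  have hlq : ∀ i, 0 ≤ Real.log (q i) := fun i => Real.log_nonneg (by have := hq i; linarith)
  have hfac : ∀ i, ∀ s : ℂ, 3/4 ≤ s.re → 1 - (q i : ℂ)^(-s) ≠ 0 := by
    intro i s hs
    have := cpow_factor_ne (hq i) hs
    rw [← norm_pos_iff]; linarith
  have hrb : ∀ i, ∀ s : ℂ, 3/4 ≤ s.re → ‖r i s‖ ≤ u i := by
    intro i s hs
    have h1 := cpow_factor_ne (hq i) hs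
    rw [hr, hu]
    simp only [norm_div, norm_mul, norm_pow]
    rw [Complex.norm_of_nonneg (hlq i), div_le_iff₀ (by linarith)]
    have h2 : ‖(q i : ℂ)^(-s)‖^2 ≤ (q i)^(-(3/2:ℝ)) := by
      rw [Complex.norm_cpow_eq_rpow_re_of_pos (hq0 i), ← Real.rpow_mul_natCast (hq0 i).le]
      apply Real.rpow_le_rpow_of_exponent_le
      · have := hq i; linarith
      · simp; linarith
    calc Real.log (q i) * ‖(q i : ℂ)^(-s)‖^2 ≤ Real.log (q i) * (q i)^(-(3/2:ℝ)) := by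
          gcongr; exact hlq i
      _ ≤ (Real.log (q i) * (q i)^(-(3/2:ℝ))) * (4 * ‖1 - (q i : ℂ)^(-s)‖) := by
          apply le_mul_of_one_le_right
          · have := hlq i
            have := hq0 i
            positivity
          · linarith
      _ = _ := by ring
  have hcd : ∀ i, Differentiable ℂ (fun s : ℂ => (q i : ℂ)^(-s)) := by
    intro i s
    exact (differentiable_neg.differentiableAt).const_cpow (Or.inl (hqc i))
  set R : ℂ → ℂ := fun s => ∑' i, r i s with hR
  have hRd : ∀ s : ℂ, 3/4 < s.re → DifferentiableAt ℂ R s := by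
    intro s hs
    have : DifferentiableOn ℂ R {z : ℂ | 3/4 < z.re} := by
      refine Complex.differentiableOn_tsum_of_summable_norm hus ?_ (hopen _) (fun i w hw => hrb i w (le_of_lt hw))
      intro i z hz
      apply DifferentiableAt.differentiableWithinAt
      rw [hr]
      have := hcd i z
      apply DifferentiableAt.div
      · fun_prop
      · fun_prop
      · exact hfac i z (le_of_lt hz)
    exact this.differentiableAt ((hopen _).mem_nhds hs)
  set U : ℝ := ∑' i, u i with hU
  have hU0 : 0 ≤ U := tsum_nonneg fun i => by
    have := hlq i
    have := hq0 i
    positivity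
  have hRb : ∀ s : ℂ, 3/4 ≤ s.re → ‖R s‖ ≤ U := by
    intro s hs
    exact tsum_of_norm_bounded hus.hasSum (fun i => hrb i s hs)
  have hRb' : ∀ s : ℂ, 1 ≤ s.re → ‖deriv R s‖ ≤ (U * 2^0/(1/8)) * (1 + ‖s‖)^0 := fun s hs =>
    cauchy_bound R (7/8) (1/8) U 0 hU0 (by norm_num) (by norm_num)
      (fun s hs => hRd s (by linarith)) (fun s hs => by simpa using hRb s (by linarith)) s (by linarith)
  have hJ1b' : ∀ s : ℂ, 1 ≤ s.re → ‖deriv J1 s‖ ≤ (B1 * 2^1/(1/4)) * (1 + ‖s‖)^1 := fun s hs =>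
    cauchy_bound J1 (3/4) (1/4) B1 1 hB1 (by norm_num) (by norm_num)
      (fun s hs => hJ1d s (by linarith)) (fun s hs => by simpa using hJ1b s hs) s (by linarith)
  have hGne : ∀ s : ℂ, 1 < s.re → G s ≠ 0 := by
    intro s hs
    rw [hGZ s hs]
    refine mul_ne_zero ?_ (hZ s hs)
    intro h0
    have : s = 1 := by linear_combination h0
    rw [this] at hs; simp at hs
  -- log derivative
  have hlogder : ∀ s : ℂ, 1 < s.re → deriv G s / G s = 1/(s-1) -
      ∑' i, (Real.log (q i) : ℂ) * (q i : ℂ)^(-s) / (1 - (q i : ℂ)^(-s)) := by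
    intro s hs
    have hs1 : s - 1 ≠ 0 := by
      intro h0
      have : s = 1 := by linear_combination h0
      rw [this] at hs; simp at hs
    set σ := (1 + s.re)/2 with hσ
    have hσ1 : 1 < σ := by rw [hσ]; linarith
    have hsσ : σ < s.re := by rw [hσ]; linarith
    have hmem : {z : ℂ | σ < z.re} ∈ nhds s := (hopen σ).mem_nhds hsσ
    have hZd : DifferentiableAt ℂ Z s := by
      have h1 : Z =ᶠ[nhds s] fun z => κ/(z-1) + J z := by
        filter_upwards [hmem] with z hz
        exact hZJ z (hσ1.trans hz)
      have h2 : DifferentiableAt ℂ (fun z : ℂ => κ/(z-1) + J z) s := by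
        have := hJd s (by linarith)
        apply DifferentiableAt.add _ this
        exact (differentiableAt_const _).fun_div (by fun_prop) hs1
      exact h2.congr_of_eventuallyEq h1
    have e1 : logDeriv G s = 1/(s-1) + logDeriv Z s := by
      have h1 : G =ᶠ[nhds s] fun z => (z-1) * Z z := by
        filter_upwards [hmem] with z hz
        exact hGZ z (hσ1.trans hz)
      rw [logDeriv_apply, h1.deriv_eq, h1.eq_of_nhds, ← logDeriv_apply (fun z => (z-1) * Z z), logDeriv_mul s hs1 (hZ s hs) (by fun_prop) hZd]
      congr 1
      rw [logDeriv_apply]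
      simp
    set f : ι → ℂ → ℂ := fun i z => 1 + (-(q i : ℂ)^(-z)) with hf
    have hfp : ∀ z : ℂ, 1 < z.re → ∏' i, f i z = (Z z)⁻¹ := by
      intro z hz
      have := (hprod z hz).tprod_eq
      simpa [hf, sub_eq_add_neg] using this
    have hld : ∀ i, logDeriv (f i) s =
        (Real.log (q i) : ℂ) * (q i : ℂ)^(-s) / (1 - (q i : ℂ)^(-s)) := by
      intro i
      rw [logDeriv_apply]
      have h1 : HasDerivAt (f i) ((Real.log (q i) : ℂ) * (q i : ℂ)^(-s)) s := by
        have h2 : HasDerivAt (fun z : ℂ => (q i : ℂ)^(-z)) ((q i : ℂ)^(-s) * Complex.log (q i) * (-1)) s :=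
          (hasDerivAt_neg s).const_cpow (Or.inl (hqc i))
        have h3 := (h2.neg).const_add 1
        refine h3.congr_deriv ?_
        rw [Complex.ofReal_log (hq0 i).le]; ring
      rw [h1.deriv, hf]
      simp [sub_eq_add_neg]
    have hsumld : Summable fun i => logDeriv (f i) s := by
      simp_rw [hld]
      refine Summable.of_norm_bounded (g := fun i => 4 * (Real.log (q i) * (q i)^(-s.re)))
        ((summable_log_rpow q hq hsum s.re hs).mul_left 4) (fun i => ?_)
      have h1 := cpow_factor_ne (hq i) (show 3/4 ≤ s.re by linarith)
      rw [norm_div, norm_mul, Complex.norm_of_nonneg (hlq i),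
        Complex.norm_cpow_eq_rpow_re_of_pos (hq0 i), div_le_iff₀ (by linarith), Complex.neg_re]
      have h2 : 0 ≤ Real.log (q i) * (q i)^(-s.re) := by
        have := hlq i
        have := hq0 i
        positivity
      nlinarith
    have hmul : MultipliableLocallyUniformlyOn f {z : ℂ | σ < z.re} := by
      refine Summable.multipliableLocallyUniformlyOn_one_add (hopen σ) (hsum σ hσ1) ?_ ?_
      · refine Filter.Eventually.of_forall fun i z hz => ?_
        rw [norm_neg, Complex.norm_cpow_eq_rpow_re_of_pos (hq0 i)]
        apply Real.rpow_le_rpow_of_exponent_le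
        · have := hq i; linarith
        · simp; exact le_of_lt hz
      · intro i
        exact (hcd i).continuous.neg.continuousOn
    have e2 := logDeriv_tprod_eq_tsum (hopen σ) hsσ (f := f) (fun i => by
        have := hfac i s (by linarith)
        simpa [hf, sub_eq_add_neg] using this)
      (fun i => ((differentiable_const _).add (hcd i).neg).differentiableOn) hsumld hmul
      (by rw [hfp s hs]; exact inv_ne_zero (hZ s hs))
    have e3 : logDeriv (fun z => ∏' i, f i z) s = - logDeriv Z s := by
      have h1 : (fun z => ∏' i, f i z) =ᶠ[nhds s] Z⁻¹ := by
        filter_upwards [hmem] with z hz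
        exact hfp z (hσ1.trans hz)
      rw [logDeriv_apply, logDeriv_apply, h1.deriv_eq, h1.eq_of_nhds,
        (hZd.hasDerivAt.inv (hZ s hs)).deriv, Pi.inv_apply]
      have := hZ s hs
      field_simp
    rw [e3] at e2
    simp_rw [hld] at e2
    rw [← e2, ← logDeriv_apply, e1]
    ring
  have hTheta : ∀ s : ℂ, 1 < s.re → ∑' i, (Real.log (q i) : ℂ) * (q i : ℂ)^(-s) =
      1/(s-1) - deriv G s / G s - R s := by
    intro s hs
    rw [hlogder s hs]
    have hsr : Summable fun i => r i s := Summable.of_norm_bounded hus (fun i => hrb i s (by linarith))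
    have hst : Summable fun i => (Real.log (q i) : ℂ) * (q i : ℂ)^(-s) := by
      refine Summable.of_norm_bounded (summable_log_rpow q hq hsum s.re hs) (fun i => ?_)
      rw [norm_mul, Complex.norm_of_nonneg (hlq i), Complex.norm_cpow_eq_rpow_re_of_pos (hq0 i)]
      simp
    have h1 : ∀ i, (Real.log (q i) : ℂ) * (q i : ℂ)^(-s) / (1 - (q i : ℂ)^(-s)) =
        (Real.log (q i) : ℂ) * (q i : ℂ)^(-s) + r i s := by
      intro i
      have := hfac i s (by linarith)
      rw [hr]
      field_simp
      ring
    simp_rw [h1]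
    rw [hst.tsum_add hsr, hR]
    ring
  refine ⟨fun s => - (deriv G s / G s) - R s - J1 s,
    D/c + D2/c + (D/c)^2 + 9 * U + 9 * B1, by positivity, ?_, ?_⟩
  · intro s hs
    refine ⟨?_, ?_⟩
    · have h1 := hGd1 s (by linarith)
      have h2 := hGd s (by linarith)
      have h3 := hRd s (by linarith)
      have h4 := hJ1d s (by linarith)
      exact (((h1.div h2 (hGne s hs)).neg).sub h3).sub h4
    · rw [hTheta s hs]; ring
  · intro s hs hs2
    have h1 := hGd1 s (by linarith)
    have h2 := hGd s (by linarith)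
    have h3 := hRd s (by linarith)
    have h4 := hJ1d s (by linarith)
    have hder : deriv (fun s => - (deriv G s / G s) - R s - J1 s) s =
        - ((deriv (deriv G) s * G s - deriv G s * deriv G s)/(G s)^2) - deriv R s - deriv J1 s :=
      ((((h1.hasDerivAt.div h2.hasDerivAt (hGne s hs)).neg).sub h3.hasDerivAt).sub h4.hasDerivAt).deriv
    rw [hder]
    set T : ℝ := 1 + ‖s‖ with hT
    have hT1 : 1 ≤ T := by have := norm_nonneg s; linarith
    have hT0 : 0 < T := by linarith
    have hGl : c / T^7 ≤ ‖G s‖ := hc s hs hs2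
    have hGpos : 0 < ‖G s‖ := lt_of_lt_of_le (by positivity) hGl
    have hT18 : 1 ≤ T^18 := one_le_pow₀ hT1
    have hTk : ∀ k, k ≤ 18 → T^k ≤ T^18 := fun k hk => pow_le_pow_right₀ hT1 hk
    have i1 : ‖deriv G s / G s‖ ≤ (D/c) * T^9 := by
      rw [norm_div, div_le_iff₀ hGpos]
      calc ‖deriv G s‖ ≤ D * T^2 := hG1 s (by linarith)
        _ = (D/c) * T^9 * (c/T^7) := by field_simp
        _ ≤ _ := by gcongr
    have i2 : ‖deriv (deriv G) s / G s‖ ≤ (D2/c) * T^9 := by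
      rw [norm_div, div_le_iff₀ hGpos]
      calc ‖deriv (deriv G) s‖ ≤ D2 * T^2 := hG2 s (by linarith)
        _ = (D2/c) * T^9 * (c/T^7) := by field_simp
        _ ≤ _ := by gcongr
    have i3 : ‖R s‖ ≤ U * T^18 := (hRb s (by linarith)).trans (le_mul_of_one_le_right hU0 hT18)
    have i4 : ‖deriv R s‖ ≤ 8 * U * T^18 := by
      refine (hRb' s (by linarith)).trans ?_
      rw [pow_zero, pow_zero, mul_one, mul_one]
      have := le_mul_of_one_le_right hU0 hT18
      linarith
    have i5 : ‖J1 s‖ ≤ B1 * T^18 := by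
      refine (hJ1b s (by linarith)).trans ?_
      have := hTk 1 (by norm_num)
      rw [pow_one] at this
      gcongr
    have i6 : ‖deriv J1 s‖ ≤ 8 * B1 * T^18 := by
      refine (hJ1b' s (by linarith)).trans ?_
      have := hTk 1 (by norm_num)
      have := mul_le_mul_of_nonneg_left this hB1
      linarith
    have t9 := hTk 9 (by norm_num)
    have hDc : 0 < D/c := by positivity
    have hD2c : 0 < D2/c := by positivity
    have tri : ∀ a b d : ℂ, ‖-a - b - d‖ ≤ ‖a‖ + ‖b‖ + ‖d‖ := by
      intro a b d
      calc _ ≤ ‖-a-b‖ + ‖d‖ := norm_sub_le _ _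
        _ ≤ ‖-a‖ + ‖b‖ + ‖d‖ := by gcongr; exact norm_sub_le _ _
        _ = _ := by rw [norm_neg]
    have j1 : (D/c) * T^9 ≤ (D/c) * T^18 := by gcongr
    have j2 : (D2/c) * T^9 ≤ (D2/c) * T^18 := by gcongr
    have z1 : 0 ≤ (D/c)*T^18 := by positivity
    have z2 : 0 ≤ (D2/c)*T^18 := by positivity
    have z3 : 0 ≤ (D/c)^2*T^18 := by positivity
    have z4 : 0 ≤ U*T^18 := by positivity
    have z5 : 0 ≤ B1*T^18 := by positivity
    have hexp : (D/c + D2/c + (D/c)^2 + 9 * U + 9 * B1) * T^18 = (D/c)*T^18 + (D2/c)*T^18 +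
      (D/c)^2*T^18 + 9 * (U*T^18) + 9 * (B1*T^18) := by ring
    rw [hexp]
    constructor
    · refine (tri _ _ _).trans ?_
      linarith
    · refine (tri _ _ _).trans ?_
      have i7 : ‖(deriv (deriv G) s * G s - deriv G s * deriv G s)/(G s)^2‖ ≤
          (D2/c) * T^18 + (D/c)^2 * T^18 := by
        have : (deriv (deriv G) s * G s - deriv G s * deriv G s)/(G s)^2 =
            deriv (deriv G) s / G s - (deriv G s / G s)^2 := by
          have := hGne s hs
          field_simp
        rw [this]
        calc _ ≤ ‖deriv (deriv G) s / G s‖ + ‖(deriv G s / G s)^2‖ := norm_sub_le _ _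
          _ ≤ (D2/c) * T^9 + ((D/c) * T^9)^2 := by
            rw [norm_pow]; gcongr
          _ ≤ _ := by
            rw [mul_pow, ← pow_mul]
            norm_num
            linarith
      linarith

end GW
end

section
open Real

namespace GW

lemma norm_Gamma_le {s : ℂ} (hs : 0 < s.re) : ‖Complex.Gamma s‖ ≤ Real.Gamma s.re := by
  rw [Complex.Gamma_eq_integral hs, Real.Gamma_eq_integral hs, Complex.GammaIntegral]
  refine (MeasureTheory.norm_integral_le_integral_norm _).trans (le_of_eq ?_)
  refine MeasureTheory.setIntegral_congr_fun measurableSet_Ioi (fun x hx => ?_)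
  have hx : 0 < x := hx
  simp only [norm_mul]
  rw [Complex.norm_of_nonneg (Real.exp_pos _).le, Complex.norm_cpow_eq_rpow_re_of_pos hx]
  simp

lemma gamma_diffAt {s : ℂ} (hs : 0 < s.re) : DifferentiableAt ℂ Complex.Gamma s := by
  apply Complex.differentiableAt_Gamma
  intro m h
  rw [h] at hs
  simp at hs
  have : (0:ℝ) ≤ m := Nat.cast_nonneg m
  linarith

lemma gamma_decay (n : ℕ) : ∀ M : ℝ, ∃ C : ℝ, 0 ≤ C ∧ ∀ s : ℂ, 1/2 ≤ s.re → s.re ≤ M →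
    ‖Complex.Gamma s‖ * (1 + ‖s‖)^n ≤ C := by
  induction n with
  | zero =>
    intro M
    have hc : ContinuousOn Real.Gamma (Set.Icc (1/2) M) := by
      intro x hx
      apply ContinuousAt.continuousWithinAt
      apply DifferentiableAt.continuousAt (𝕜 := ℝ)
      apply Real.differentiableAt_Gamma
      intro m h
      have h1 := hx.1
      rw [h] at h1
      have : (0:ℝ) ≤ m := Nat.cast_nonneg m
      linarith
    obtain ⟨C, hC⟩ := isCompact_Icc.exists_bound_of_continuousOn hc
    refine ⟨max C 0, le_max_right _ _, fun s h1 h2 => ?_⟩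
    have h3 := hC s.re ⟨h1, h2⟩
    have h4 := norm_Gamma_le (show 0 < s.re by linarith)
    have h5 := Real.le_norm_self (Real.Gamma s.re)
    rw [pow_zero, mul_one]
    exact (h4.trans (h5.trans h3)).trans (le_max_left _ _)
  | succ n ih =>
    intro M
    obtain ⟨C, hC0, hC⟩ := ih (M+1)
    refine ⟨3 * C, by positivity, fun s h1 h2 => ?_⟩
    have h3 := hC (s+1) (by simp; linarith) (by simp; linarith)
    have hs0 : s ≠ 0 := by rintro rfl; simp at h1; linarith
    rw [Complex.Gamma_add_one s hs0, norm_mul] at h3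
    have h4 : s.re ≤ ‖s‖ := Complex.re_le_norm s
    have h5 : ‖s‖ ≤ ‖s+1‖ := by
      rw [Complex.norm_def, Complex.norm_def]
      apply Real.sqrt_le_sqrt
      rw [Complex.normSq_apply, Complex.normSq_apply]
      simp
      nlinarith
    have h6 : ‖Complex.Gamma s‖ * (1 + ‖s‖)^(n+1) ≤ 3 * (‖s‖ * ‖Complex.Gamma s‖ * (1 + ‖s+1‖)^n) := by
      calc ‖Complex.Gamma s‖ * (1 + ‖s‖)^(n+1) = ‖Complex.Gamma s‖ * (1 + ‖s‖)^n * (1 + ‖s‖) := by ring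
        _ ≤ ‖Complex.Gamma s‖ * (1 + ‖s+1‖)^n * (3 * ‖s‖) := by
          gcongr; linarith
        _ = _ := by ring
    linarith

lemma gamma_bounds : ∃ C : ℝ, 0 ≤ C ∧ ∀ s : ℂ, 1 ≤ s.re → s.re ≤ 2 →
    ‖Complex.Gamma s‖ * (1 + ‖s‖)^20 ≤ C ∧ ‖deriv Complex.Gamma s‖ * (1 + ‖s‖)^20 ≤ C := by
  obtain ⟨C, hC0, hC⟩ := gamma_decay 20 3
  refine ⟨2^22 * C, by positivity, fun s h1 h2 => ⟨?_, ?_⟩⟩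
  · have := hC s (by linarith) (by linarith)
    linarith
  · have hcl : ∀ z ∈ Metric.closedBall s (1/4), 1/2 ≤ z.re ∧ z.re ≤ 3 ∧ 1 + ‖s‖ ≤ 2 * (1 + ‖z‖) := by
      intro z hz
      rw [mem_closedBall_iff_norm] at hz
      have h3 := Complex.abs_re_le_norm (z - s)
      rw [Complex.sub_re] at h3
      have h4 := abs_le.1 (h3.trans hz)
      have h5 := norm_sub_norm_le s z
      rw [norm_sub_rev] at h5
      have := norm_nonneg z
      exact ⟨by linarith, by linarith, by linarith⟩
    have hT : 0 < (1 + ‖s‖)^20 := by positivity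
    have key := Complex.norm_deriv_le_of_forall_mem_sphere_norm_le (f := Complex.Gamma) (c := s)
      (R := 1/4) (C := 2^20 * C / (1 + ‖s‖)^20) (by norm_num) ?_ ?_
    · rw [le_div_iff₀ (by norm_num)] at key
      rw [le_div_iff₀ hT] at key
      linarith
    · apply DifferentiableOn.diffContOnCl
      rw [closure_ball s (by norm_num)]
      intro z hz
      exact (gamma_diffAt (by have := (hcl z hz).1; linarith)).differentiableWithinAt
    · intro z hz
      obtain ⟨a, b, c⟩ := hcl z (Metric.sphere_subset_closedBall hz)
      have h3 := hC z a b
      rw [le_div_iff₀ hT]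
      calc ‖Complex.Gamma z‖ * (1 + ‖s‖)^20 ≤ ‖Complex.Gamma z‖ * (2 * (1 + ‖z‖))^20 := by gcongr
        _ = 2^20 * (‖Complex.Gamma z‖ * (1 + ‖z‖)^20) := by ring
        _ ≤ _ := by gcongr

lemma sq_le_line (σ t : ℝ) : 1 + t^2 ≤ (1 + ‖(σ:ℂ) + t * Complex.I‖)^2 := by
  have h1 : |t| ≤ ‖(σ:ℂ) + t * Complex.I‖ := by
    have := Complex.abs_im_le_norm ((σ:ℂ) + t * Complex.I)
    simpa using this
  have h2 := abs_nonneg t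
  have h3 := sq_abs t
  nlinarith

lemma line_deriv (σ t : ℝ) : HasDerivAt (fun t : ℝ => (σ:ℂ) + t * Complex.I) Complex.I t := by
  have := ((Complex.ofRealCLM.hasDerivAt (x := t)).mul_const Complex.I).const_add (σ:ℂ)
  simpa using this

lemma gamma_line_integrable {σ : ℝ} (h1 : 1 ≤ σ) (h2 : σ ≤ 2) :
    MeasureTheory.Integrable (fun t : ℝ => Complex.Gamma ((σ:ℂ) + t * Complex.I)) := by
  obtain ⟨C, hC0, hC⟩ := gamma_bounds
  refine MeasureTheory.Integrable.mono' (integrable_inv_one_add_sq.const_mul C) ?_ ?_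
  · apply Continuous.aestronglyMeasurable
    rw [continuous_iff_continuousAt]
    intro t
    have h3 : DifferentiableAt ℂ Complex.Gamma ((σ:ℂ) + t * Complex.I) :=
      gamma_diffAt (by simp; linarith)
    exact ContinuousAt.comp (f := fun t : ℝ => (σ:ℂ) + t * Complex.I) h3.continuousAt (line_deriv σ t).continuousAt
  · refine Filter.Eventually.of_forall fun t => ?_
    have h3 := (hC ((σ:ℂ) + t * Complex.I) (by simpa using h1) (by simpa using h2)).1
    have h4 := sq_le_line σ t
    rw [← div_eq_mul_inv, le_div_iff₀ (by positivity)]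
    refine le_trans ?_ h3
    gcongr
    refine h4.trans (pow_le_pow_right₀ ?_ (by norm_num))
    have := norm_nonneg ((σ:ℂ) + t * Complex.I)
    linarith

lemma exp_mellin {σ : ℝ} (h1 : 1 ≤ σ) (h2 : σ ≤ 2) {x : ℝ} (hx : 0 < x) :
    ((Real.exp (-x) : ℝ) : ℂ) = (1/(2*π) : ℝ) * ∫ t : ℝ, (x:ℂ)^(-((σ:ℂ) + t * Complex.I)) *
      Complex.Gamma ((σ:ℂ) + t * Complex.I) := by
  have hre : ∀ t : ℝ, 0 < ((σ:ℂ) + t * Complex.I).re := fun t => by simp; linarith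
  have hm : ∀ t : ℝ, mellin (fun x : ℝ => ((Real.exp (-x) : ℝ) : ℂ)) ((σ:ℂ) + t * Complex.I) =
      Complex.Gamma ((σ:ℂ) + t * Complex.I) := by
    intro t
    rw [Complex.Gamma_eq_integral (hre t), Complex.GammaIntegral_eq_mellin]
  have key := mellinInv_mellin_eq σ (fun x : ℝ => ((Real.exp (-x) : ℝ) : ℂ)) hx ?_ ?_ ?_
  · rw [← key, mellinInv]
    simp_rw [hm]
    rw [Complex.real_smul]
    rfl
  · have := Complex.GammaIntegral_convergent (s := σ) (by simp; linarith)
    refine this.congr_fun (fun t _ => ?_) measurableSet_Ioi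
    simp [mul_comm]
  · unfold Complex.VerticalIntegrable
    simp_rw [hm]
    exact gamma_line_integrable h1 h2
  · fun_prop

lemma mellin_sum {ι : Type*} [Countable ι] (b l : ι → ℝ) (hb : ∀ i, 0 ≤ b i) (hl : ∀ i, 0 < l i)
    {σ : ℝ} (h1 : 1 ≤ σ) (h2 : σ ≤ 2) (hs : Summable fun i => b i * (l i)^(-σ)) {X : ℝ} (hX : 0 < X) :
    HasSum (fun i => ((b i * Real.exp (-l i / X) : ℝ) : ℂ)) ((1/(2*π) : ℝ) * ∫ t : ℝ,
      Complex.Gamma ((σ:ℂ) + t * Complex.I) * (X:ℂ)^((σ:ℂ) + t * Complex.I) *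
        ∑' i, (b i : ℂ) * (l i : ℂ)^(-((σ:ℂ) + t * Complex.I))) := by
  set F : ι → ℝ → ℂ := fun i t => Complex.Gamma ((σ:ℂ) + t * Complex.I) * (X:ℂ)^((σ:ℂ) + t * Complex.I) *
     ((b i : ℂ) * (l i : ℂ)^(-((σ:ℂ) + t * Complex.I))) with hF
  have hXc : (X:ℂ) ≠ 0 := by exact_mod_cast hX.ne'
  have hlc : ∀ i, (l i:ℂ) ≠ 0 := fun i => by exact_mod_cast (hl i).ne'
  have hFn : ∀ i t, ‖F i t‖ = ‖Complex.Gamma ((σ:ℂ) + t * Complex.I)‖ * (X^σ * (b i * (l i)^(-σ))) := by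
    intro i t
    rw [hF]
    simp only [norm_mul]
    rw [Complex.norm_cpow_eq_rpow_re_of_pos hX, Complex.norm_cpow_eq_rpow_re_of_pos (hl i),
      Complex.norm_of_nonneg (hb i)]
    simp
    ring
  have hG := gamma_line_integrable h1 h2
  have hFc : ∀ i, Continuous fun t : ℝ => (X:ℂ)^((σ:ℂ) + t * Complex.I) *
     ((b i : ℂ) * (l i : ℂ)^(-((σ:ℂ) + t * Complex.I))) := by
    intro i
    refine Continuous.mul ?_ (continuous_const.mul ?_)
    · exact Continuous.const_cpow (by fun_prop) (Or.inl hXc)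
    · exact Continuous.const_cpow (by fun_prop) (Or.inl (hlc i))
  have hFi : ∀ i, MeasureTheory.Integrable (F i) := by
    intro i
    refine MeasureTheory.Integrable.mono' (hG.norm.mul_const (X^σ * (b i * (l i)^(-σ)))) ?_ ?_
    · have := hG.aestronglyMeasurable.mul (hFc i).aestronglyMeasurable
      refine this.congr (Filter.Eventually.of_forall fun t => ?_)
      simp [hF, mul_assoc]
    · exact Filter.Eventually.of_forall fun t => (hFn i t).le
  have hsum : Summable fun i => ∫ t, ‖F i t‖ := by
    simp_rw [hFn, MeasureTheory.integral_mul_const]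
    exact (hs.mul_left _).mul_left _
  have key := (MeasureTheory.hasSum_integral_of_summable_integral_norm hFi hsum).mul_left
    (((1/(2*π) : ℝ)) : ℂ)
  have e1 : ∀ t, ∑' i, F i t = Complex.Gamma ((σ:ℂ) + t * Complex.I) * (X:ℂ)^((σ:ℂ) + t * Complex.I) *
        ∑' i, (b i : ℂ) * (l i : ℂ)^(-((σ:ℂ) + t * Complex.I)) := by
    intro t
    rw [← tsum_mul_left]
  simp_rw [e1] at key
  have e2 : (fun i => ((b i * Real.exp (-l i / X) : ℝ) : ℂ)) =
      fun i => (((1/(2*π) : ℝ)) : ℂ) * ∫ t, F i t := by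
    funext i
    have h3 := exp_mellin h1 h2 (div_pos (hl i) hX)
    rw [neg_div, Complex.ofReal_mul, h3, mul_left_comm, ← MeasureTheory.integral_const_mul]
    congr 1
    apply MeasureTheory.integral_congr_ae
    refine Filter.Eventually.of_forall fun t => ?_
    simp only [hF]
    rw [Complex.ofReal_div, Complex.div_cpow_ofReal_nonneg (hl i).le hX.le, Complex.cpow_neg (X:ℂ)]
    rw [div_inv_eq_mul]
    ring
  rw [e2]
  exact key

/-- Fourier-type decay by one integration by parts. -/
lemma fourier_bound (g g' : ℝ → ℂ) (hg : ∀ t, HasDerivAt g (g' t) t) (E : ℝ)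
    (hb : ∀ t, ‖g t‖ ≤ E * (1 + t^2)⁻¹) (hb' : ∀ t, ‖g' t‖ ≤ E * (1 + t^2)⁻¹) {L : ℝ} (hL : 0 < L) :
    ‖∫ t : ℝ, g t * Complex.exp (L * t * Complex.I)‖ ≤ E * π / L := by
  set v : ℝ → ℂ := fun t => Complex.exp (L * t * Complex.I) / (L * Complex.I) with hv
  have hLc : (L:ℂ) ≠ 0 := by exact_mod_cast hL.ne'
  have hden : (L:ℂ) * Complex.I ≠ 0 := mul_ne_zero hLc Complex.I_ne_zero
  have hvd : ∀ t : ℝ, HasDerivAt v (Complex.exp (L * t * Complex.I)) t := by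
    intro t
    have h1 : HasDerivAt (fun t : ℝ => (L:ℂ) * t * Complex.I) (L * Complex.I) t := by
      have := ((Complex.ofRealCLM.hasDerivAt (x := t)).const_mul (L:ℂ)).mul_const Complex.I
      simpa using this
    have h2 := h1.cexp.div_const (L * Complex.I)
    refine h2.congr_deriv ?_
    field_simp
  have hen : ∀ t : ℝ, ‖Complex.exp (L * t * Complex.I)‖ = 1 := by
    intro t
    have := Complex.norm_exp_ofReal_mul_I (L * t)
    rwa [Complex.ofReal_mul] at this
  have hvn : ∀ t, ‖v t‖ = 1 / L := by
    intro t
    simp only [hv]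
    rw [norm_div, hen, norm_mul, Complex.norm_I, mul_one, Complex.norm_of_nonneg hL.le]
  have hgc : Continuous g := continuous_iff_continuousAt.2 fun t => (hg t).continuousAt
  have hvc : Continuous v := continuous_iff_continuousAt.2 fun t => (hvd t).continuousAt
  have hec : Continuous fun t : ℝ => Complex.exp (L * t * Complex.I) := by fun_prop
  have hg'd : g' = deriv g := funext fun t => (hg t).deriv.symm
  have hg'm : MeasureTheory.AEStronglyMeasurable g' MeasureTheory.volume := by
    rw [hg'd]; exact aestronglyMeasurable_deriv g _
  have hI := integrable_inv_one_add_sq.const_mul E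
  have i1 : MeasureTheory.Integrable (g * fun t : ℝ => Complex.exp (L * t * Complex.I)) := by
    refine hI.mono' (hgc.mul hec).aestronglyMeasurable (Filter.Eventually.of_forall fun t => ?_)
    rw [Pi.mul_apply, norm_mul, hen, mul_one]
    exact hb t
  have i2 : MeasureTheory.Integrable (g' * v) := by
    refine (hI.mul_const (1/L)).mono' (hg'm.mul hvc.aestronglyMeasurable) (Filter.Eventually.of_forall fun t => ?_)
    rw [Pi.mul_apply, norm_mul, hvn]
    exact mul_le_mul_of_nonneg_right (hb' t) (by positivity)
  have i3 : MeasureTheory.Integrable (g * v) := by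
    refine (hI.mul_const (1/L)).mono' (hgc.mul hvc).aestronglyMeasurable (Filter.Eventually.of_forall fun t => ?_)
    rw [Pi.mul_apply, norm_mul, hvn]
    exact mul_le_mul_of_nonneg_right (hb t) (by positivity)
  rw [MeasureTheory.integral_mul_deriv_eq_deriv_mul_of_integrable (fun t _ => hg t) (fun t _ => hvd t) i1 i2 i3,
    norm_neg]
  refine (MeasureTheory.norm_integral_le_of_norm_le (hI.mul_const (1/L)) (Filter.Eventually.of_forall fun t => ?_)).trans ?_
  · rw [norm_mul, hvn]
    exact mul_le_mul_of_nonneg_right (hb' t) (by positivity)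
  · rw [MeasureTheory.integral_mul_const, MeasureTheory.integral_const_mul, integral_univ_inv_one_add_sq]
    exact le_of_eq (by ring)

lemma sum_exp_nat {X : ℝ} (hX : 0 < X) : HasSum (fun n : ℕ => Real.exp (-((n:ℝ)+1)/X)) (1/(Real.exp (1/X) - 1)) := by
  have h1 : Real.exp (-1/X) < 1 := by
    rw [Real.exp_lt_one_iff]
    exact div_neg_of_neg_of_pos (by norm_num) hX
  have h2 := (hasSum_geometric_of_lt_one (Real.exp_pos _).le h1).mul_left (Real.exp (-1/X))
  have h3 : 1 < Real.exp (1/X) := by rw [Real.one_lt_exp_iff]; positivity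
  have h4 : Real.exp (-1/X) = (Real.exp (1/X))⁻¹ := by rw [← Real.exp_neg]; congr 1; ring
  have e1 : (fun n : ℕ => Real.exp (-((n:ℝ)+1)/X)) =
      fun n : ℕ => Real.exp (-1/X) * Real.exp (-1/X)^n := by
    funext n
    rw [← Real.exp_nat_mul, ← Real.exp_add]
    congr 1
    field_simp
    ring
  have e2 : 1/(Real.exp (1/X) - 1) = Real.exp (-1/X) * (1 - Real.exp (-1/X))⁻¹ := by
    rw [h4]
    have h5 : Real.exp (1/X) - 1 ≠ 0 := by linarith
    have h6 := (Real.exp_pos (1/X)).ne'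
    have h7 : 1 - (Real.exp (1/X))⁻¹ = (Real.exp (1/X) - 1) / Real.exp (1/X) := by
      rw [sub_div, div_self h6, one_div (Real.exp (1/X))]
    rw [h7, inv_div, ← mul_div_assoc, inv_mul_cancel₀ h6]
  rw [e1, e2]
  exact h2

lemma geom_bound {X : ℝ} (hX : 1 ≤ X) : |1/(Real.exp (1/X) - 1) - X| ≤ 1 := by
  have hX0 : 0 < X := by linarith
  have h1 : 1/X + 1 ≤ Real.exp (1/X) := Real.add_one_le_exp _
  have h1' : 0 < 1/X := by positivity
  have h2 : 0 < Real.exp (1/X) - 1 := by linarith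
  have h3 : 1 - 1/(X+1) ≤ Real.exp (-(1/(X+1))) := by
    have := Real.add_one_le_exp (-(1/(X+1))); linarith
  rw [abs_le]
  constructor
  · -- need X - 1 ≤ 1/(exp(1/X)-1)
    have h4 : 1 - 1/X ≤ Real.exp (-(1/X)) := by
      have := Real.add_one_le_exp (-(1/X)); linarith
    have h5 : (1 - 1/X) * Real.exp (1/X) ≤ 1 := by
      calc _ ≤ Real.exp (-(1/X)) * Real.exp (1/X) := by gcongr
        _ = 1 := by rw [← Real.exp_add]; simp
    have h6 : (X - 1) * (Real.exp (1/X) - 1) ≤ 1 := by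
      have h7 : (X-1) * Real.exp (1/X) = X * ((1 - 1/X) * Real.exp (1/X)) := by field_simp
      nlinarith
    have := (le_div_iff₀ h2).2 h6
    linarith
  · have : 1/(Real.exp (1/X) - 1) ≤ X := by
      rw [div_le_iff₀ h2]
      have : X * (1/X) ≤ X * (Real.exp (1/X) - 1) := by gcongr; linarith
      have h8 : X * (1/X) = 1 := by field_simp
      linarith
    linarith

lemma line_integrable {σ : ℝ} (h1 : 1 ≤ σ) (h2 : σ ≤ 2) {X : ℝ} (hX : 0 < X) (Φ : ℝ → ℂ)
    (hΦ : Continuous Φ) (M : ℝ) (hM : ∀ t, ‖Φ t‖ ≤ M) :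
    MeasureTheory.Integrable fun t : ℝ => Complex.Gamma ((σ:ℂ) + t * Complex.I) *
      (X:ℂ)^((σ:ℂ) + t * Complex.I) * Φ t := by
  have hG := gamma_line_integrable h1 h2
  have hXc : (X:ℂ) ≠ 0 := by exact_mod_cast hX.ne'
  have hc : Continuous fun t : ℝ => (X:ℂ)^((σ:ℂ) + t * Complex.I) :=
    Continuous.const_cpow (by fun_prop) (Or.inl hXc)
  refine (hG.norm.mul_const (X^σ * M)).mono'
    ((hG.aestronglyMeasurable.mul hc.aestronglyMeasurable).mul hΦ.aestronglyMeasurable)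
    (Filter.Eventually.of_forall fun t => ?_)
  rw [norm_mul, norm_mul, Complex.norm_cpow_eq_rpow_re_of_pos hX, mul_assoc]
  have : ((σ:ℂ) + t * Complex.I).re = σ := by simp
  rw [this]
  gcongr
  exact hM t

theorem perron_part {ι : Type*} [Countable ι] (q : ι → ℝ) (hq : ∀ i, 2 ≤ q i)
    (hsum : ∀ σ : ℝ, 1 < σ → Summable fun i => Real.log (q i) * (q i)^(-σ)) (J1 H : ℂ → ℂ) (A : ℝ) (hA : 0 ≤ A)
    (hJ1 : ∀ s : ℂ, 1 < s.re → riemannZeta s = 1 / (s - 1) + J1 s)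
    (hH : ∀ s : ℂ, 1 < s.re → DifferentiableAt ℂ H s ∧
        H s = (∑' i, (Real.log (q i) : ℂ) * (q i : ℂ)^(-s)) - (1/(s-1) + J1 s))
    (hHb : ∀ s : ℂ, 1 < s.re → s.re ≤ 2 → ‖H s‖ ≤ A * (1 + ‖s‖)^18 ∧
        ‖deriv H s‖ ≤ A * (1 + ‖s‖)^18) :
    (∀ X : ℝ, 0 < X → Summable fun i => Real.log (q i) * Real.exp (-q i / X)) ∧
    ∃ C : ℝ, ∀ X : ℝ, 3 ≤ X → |∑' i, Real.log (q i) * Real.exp (-q i / X) - X| ≤ C * X / Real.log X := by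
  have hq0 : ∀ i, 0 < q i := fun i => by have := hq i; linarith
  have hlq : ∀ i, 0 ≤ Real.log (q i) := fun i => Real.log_nonneg (by have := hq i; linarith)
  have hsummable : ∀ X : ℝ, 0 < X → Summable fun i => Real.log (q i) * Real.exp (-q i / X) := by
    intro X hX
    have := (mellin_sum (fun i => Real.log (q i)) q hlq hq0 (σ := 2) (by norm_num) le_rfl
      (hsum 2 (by norm_num)) hX).summable
    exact_mod_cast this
  refine ⟨hsummable, ?_⟩
  obtain ⟨Cg, hCg0, hCg⟩ := gamma_bounds
  set E : ℝ := 2 * (Cg * A) with hE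
  have hCA : 0 ≤ Cg * A := by positivity
  -- uniform bound
  have main : ∀ σ : ℝ, 1 < σ → σ ≤ 2 → ∀ X : ℝ, 1 < X →
      |∑' i, Real.log (q i) * Real.exp (-q i / X) - 1/(Real.exp (1/X) - 1)| ≤ X^σ * (E * π / Real.log X) := by
    intro σ hσ1 hσ2 X hX1
    have hX : 0 < X := by linarith
    have hL : 0 < Real.log X := Real.log_pos hX1
    have m1 := mellin_sum (fun i => Real.log (q i)) q hlq hq0 hσ1.le hσ2 (hsum σ hσ1) hX
    have m2 := mellin_sum (fun _ : ℕ => (1:ℝ)) (fun n => (n:ℝ)+1) (fun _ => zero_le_one)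
      (fun n => by positivity) hσ1.le hσ2 (by
        have := (summable_nat_add_iff 1).2 (Real.summable_nat_rpow.2 (show -σ < -1 by linarith))
        simpa using this) hX
    have hre : ∀ t : ℝ, ((σ:ℂ) + t * Complex.I).re = σ := fun t => by simp
    have n1 : HasSum (fun i => ((Real.log (q i) * Real.exp (-q i / X) : ℝ):ℂ))
        ((∑' i, Real.log (q i) * Real.exp (-q i / X) : ℝ) : ℂ) := by
      exact_mod_cast (hsummable X hX).hasSum
    have n2 : HasSum (fun n : ℕ => ((1 * Real.exp (-((n:ℝ)+1) / X) : ℝ):ℂ))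
        ((1/(Real.exp (1/X) - 1) : ℝ) : ℂ) := by
      simp_rw [one_mul]
      exact_mod_cast (sum_exp_nat hX)
    have e1 := n1.unique m1
    have e2 := n2.unique m2
    have hz : ∀ t : ℝ, ∑' n : ℕ, ((1:ℝ):ℂ) * (((n:ℝ)+1 : ℝ) : ℂ)^(-((σ:ℂ) + t * Complex.I)) =
        1/(((σ:ℂ) + t * Complex.I) - 1) + J1 ((σ:ℂ) + t * Complex.I) := by
      intro t
      rw [← hJ1 _ (by rw [hre]; exact hσ1), zeta_eq_tsum_one_div_nat_add_one_cpow (by rw [hre]; exact hσ1)]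
      congr 1
      funext n
      rw [Complex.cpow_neg]
      push_cast
      rw [one_mul, one_div]
    have hlc : ∀ (F : ℂ → ℂ), (∀ s : ℂ, 1 < s.re → DifferentiableAt ℂ F s) →
        Continuous fun t : ℝ => F ((σ:ℂ) + t * Complex.I) := by
      intro F hF
      rw [continuous_iff_continuousAt]
      intro t
      exact ContinuousAt.comp (f := fun t : ℝ => (σ:ℂ) + t * Complex.I)
        (hF _ (by rw [hre]; exact hσ1)).continuousAt (line_deriv σ t).continuousAt
    have hcz := hlc riemannZeta (fun s hs => differentiableAt_riemannZeta (by
      rintro rfl; simp at hs))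
    have hcH := hlc H (fun s hs => (hH s hs).1)
    have hTh : ∀ t : ℝ, ∑' i, (Real.log (q i) : ℂ) * (q i : ℂ)^(-((σ:ℂ) + t * Complex.I)) =
        H ((σ:ℂ) + t * Complex.I) + riemannZeta ((σ:ℂ) + t * Complex.I) := by
      intro t
      have hs : 1 < ((σ:ℂ) + t * Complex.I).re := by rw [hre]; exact hσ1
      rw [(hH _ hs).2, hJ1 _ hs]; ring
    have I1 := line_integrable hσ1.le hσ2 hX
      (fun t : ℝ => ∑' i, (Real.log (q i) : ℂ) * (q i : ℂ)^(-((σ:ℂ) + t * Complex.I)))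
      (by simp_rw [hTh]; exact hcH.add hcz) (∑' i, Real.log (q i) * (q i)^(-σ)) (fun t => by
        refine tsum_of_norm_bounded (hsum σ hσ1).hasSum (fun i => ?_)
        rw [norm_mul, Complex.norm_of_nonneg (hlq i), Complex.norm_cpow_eq_rpow_re_of_pos (hq0 i),
          Complex.neg_re, hre])
    have I2 := line_integrable hσ1.le hσ2 hX
      (fun t : ℝ => ∑' n : ℕ, ((1:ℝ):ℂ) * (((n:ℝ)+1 : ℝ) : ℂ)^(-((σ:ℂ) + t * Complex.I)))
      (by
        have : (fun t : ℝ => ∑' n : ℕ, ((1:ℝ):ℂ) * (((n:ℝ)+1 : ℝ) : ℂ)^(-((σ:ℂ) + t * Complex.I))) =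
            fun t : ℝ => riemannZeta ((σ:ℂ) + t * Complex.I) := by
          funext t
          rw [hz, hJ1 _ (by rw [hre]; exact hσ1)]
        rw [this]; exact hcz) (∑' n : ℕ, ((n:ℝ)+1)^(-σ)) (fun t => by
        have h3 : Summable fun n : ℕ => ((n:ℝ)+1)^(-σ) := by
          have := (summable_nat_add_iff 1).2 (Real.summable_nat_rpow.2 (show -σ < -1 by linarith))
          simpa using this
        refine tsum_of_norm_bounded h3.hasSum (fun n => ?_)
        have h4 : (0:ℝ) < (n:ℝ)+1 := by positivity
        rw [norm_mul, Complex.norm_of_nonneg zero_le_one, one_mul,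
          Complex.norm_cpow_eq_rpow_re_of_pos h4,
          Complex.neg_re, hre])
    have hdiff : ((∑' i, Real.log (q i) * Real.exp (-q i / X) - 1/(Real.exp (1/X) - 1) : ℝ) : ℂ) =
        (1/(2*π) : ℝ) * ((X^σ : ℝ) * ∫ t : ℝ, (Complex.Gamma ((σ:ℂ) + t * Complex.I) *
          H ((σ:ℂ) + t * Complex.I)) * Complex.exp ((Real.log X : ℝ) * t * Complex.I)) := by
      rw [Complex.ofReal_sub, e1, e2, ← mul_sub, ← MeasureTheory.integral_sub I1 I2,
        ← MeasureTheory.integral_const_mul (((X^σ : ℝ)) : ℂ)]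
      congr 2
      funext t
      rw [hTh, hz, ← hJ1 _ (by rw [hre]; exact hσ1), ← mul_sub, add_sub_cancel_right]
      have hXc : (X:ℂ) ≠ 0 := by exact_mod_cast hX.ne'
      rw [Complex.cpow_add _ _ hXc, Complex.ofReal_cpow hX.le, Complex.cpow_def_of_ne_zero hXc (t * Complex.I),
        ← Complex.ofReal_log hX.le]
      have : ((Real.log X : ℝ) : ℂ) * (t * Complex.I) = (Real.log X : ℝ) * t * Complex.I := by ring
      rw [this]
      ring
    have hnorm : |∑' i, Real.log (q i) * Real.exp (-q i / X) - 1/(Real.exp (1/X) - 1)| =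
      ‖((∑' i, Real.log (q i) * Real.exp (-q i / X) - 1/(Real.exp (1/X) - 1) : ℝ) : ℂ)‖ := by
      rw [Complex.norm_real, Real.norm_eq_abs]
    rw [hnorm, hdiff, norm_mul, norm_mul, Complex.norm_of_nonneg (by positivity),
      Complex.norm_of_nonneg (by positivity)]
    set g : ℝ → ℂ := fun t => Complex.Gamma ((σ:ℂ) + t * Complex.I) * H ((σ:ℂ) + t * Complex.I) with hg
    set g' : ℝ → ℂ := fun t => (deriv Complex.Gamma ((σ:ℂ) + t * Complex.I) * H ((σ:ℂ) + t * Complex.I) +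
      Complex.Gamma ((σ:ℂ) + t * Complex.I) * deriv H ((σ:ℂ) + t * Complex.I)) * Complex.I with hg'
    have key : ∀ t : ℝ, ∀ a b : ℂ, ‖a‖ * (1 + ‖(σ:ℂ) + t * Complex.I‖)^20 ≤ Cg →
        ‖b‖ ≤ A * (1 + ‖(σ:ℂ) + t * Complex.I‖)^18 → ‖a * b‖ ≤ Cg * A * (1 + t^2)⁻¹ := by
      intro t a b ha hb
      have h4 := sq_le_line σ t
      set T := 1 + ‖(σ:ℂ) + t * Complex.I‖ with hT
      have hT0 : 0 < T := by positivity
      rw [← div_eq_mul_inv, le_div_iff₀ (by positivity), norm_mul]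
      calc ‖a‖ * ‖b‖ * (1 + t^2) ≤ ‖a‖ * (A * T^18) * T^2 := by gcongr
        _ = (‖a‖ * T^20) * A := by ring
        _ ≤ Cg * A := by gcongr
    have fb := fourier_bound g g' (fun t => by
        have hs : 1 < ((σ:ℂ) + t * Complex.I).re := by rw [hre]; exact hσ1
        have d1 := (gamma_diffAt (show 0 < ((σ:ℂ) + t * Complex.I).re by linarith)).hasDerivAt
        have d2 := (hH _ hs).1.hasDerivAt
        exact (d1.mul d2).comp_of_eq t (line_deriv σ t) rfl) E
      (fun t => by
        have hs : 1 < ((σ:ℂ) + t * Complex.I).re := by rw [hre]; exact hσ1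
        have hs2 : ((σ:ℂ) + t * Complex.I).re ≤ 2 := by rw [hre]; exact hσ2
        refine (key t _ _ (hCg _ hs.le hs2).1 (hHb _ hs hs2).1).trans ?_
        gcongr
        linarith)
      (fun t => by
        have hs : 1 < ((σ:ℂ) + t * Complex.I).re := by rw [hre]; exact hσ1
        have hs2 : ((σ:ℂ) + t * Complex.I).re ≤ 2 := by rw [hre]; exact hσ2
        have k1 := key t _ _ (hCg _ hs.le hs2).2 (hHb _ hs hs2).1
        have k2 := key t _ _ (hCg _ hs.le hs2).1 (hHb _ hs hs2).2
        simp only [hg']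
        rw [norm_mul, Complex.norm_I, mul_one]
        refine (norm_add_le _ _).trans ((add_le_add k1 k2).trans (le_of_eq ?_))
        rw [hE]; ring) hL
    have hpi : 1/(2*π) ≤ 1 := by
      rw [div_le_one (by positivity)]
      have := Real.pi_gt_three
      linarith
    calc 1/(2*π) * (X^σ * ‖∫ t : ℝ, g t * Complex.exp ((Real.log X : ℝ) * t * Complex.I)‖)
        ≤ 1 * (X^σ * (E * π / Real.log X)) := by gcongr
      _ = _ := one_mul _
  refine ⟨Real.exp 1 * E * π + 1, fun X hX => ?_⟩
  have hX0 : 0 < X := by linarith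
  have hlog1 : 1 ≤ Real.log X := by
    rw [Real.le_log_iff_exp_le hX0]
    have := Real.exp_one_lt_d9
    linarith
  have hL0 : 0 < Real.log X := by linarith
  have hm := main (1 + 1/Real.log X) (by have : 0 < 1/Real.log X := by positivity
                                         linarith) (by
    have : 1/Real.log X ≤ 1 := by rw [div_le_one hL0]; exact hlog1
    linarith) X (by linarith)
  have hXσ : X^(1 + 1/Real.log X) = X * Real.exp 1 := by
    rw [Real.rpow_add hX0, Real.rpow_one, Real.rpow_def_of_pos hX0]
    congr 2
    field_simp
  rw [hXσ] at hm
  have hgb := geom_bound (show 1 ≤ X by linarith)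
  have hXL : 1 ≤ X / Real.log X := by
    rw [le_div_iff₀ hL0, one_mul]
    have := Real.log_le_sub_one_of_pos hX0
    linarith
  have tri := abs_sub_le (∑' i, Real.log (q i) * Real.exp (-q i / X)) (1/(Real.exp (1/X) - 1)) X
  have : (Real.exp 1 * E * π + 1) * X / Real.log X = X * Real.exp 1 * (E * π / Real.log X) + X / Real.log X := by
    ring
  rw [this]
  linarith

end GW
end

section
open Real

namespace GW

lemma p8_sum_dyadic (n : ℕ) : ∑ k ∈ Finset.range n, ((k:ℝ)+1)/2^k ≤ 4 := by
  have : ∑ k ∈ Finset.range n, ((k:ℝ)+1)/2^k = 4 - (2*n+4)/2^n := by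
    induction n with
    | zero => norm_num
    | succ n ih =>
      rw [Finset.sum_range_succ, ih]
      push_cast
      field_simp
      ring
  rw [this]
  have : (0:ℝ) ≤ (2*n+4)/2^n := by positivity
  linarith

lemma p8_pointwise (X q : ℝ) (hX : 1 ≤ X) (hq : 2 ≤ q) :
    |Real.log X - Real.log q| * exp (-q/X) ≤ exp (-q/(2*X)) +
      exp 1 * ∑ k ∈ Finset.range (Nat.log 2 ⌊X⌋₊ + 1), exp (-q/(X/2^k)) := by
  have hX0 : 0 < X := by linarith
  have hq0 : 0 < q := by linarith
  rcases le_total q X with h | h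
  · have hy : 1 ≤ X / q := by rw [le_div_iff₀ hq0]; linarith
    have hlog : Real.log X - Real.log q = Real.log (X/q) := (Real.log_div hX0.ne' hq0.ne').symm
    set m := Nat.log 2 ⌊X/q⌋₊ with hm
    have hfl : ⌊X/q⌋₊ ≠ 0 := by
      have := Nat.floor_pos.2 hy
      omega
    have h1 : X/q < 2^(m+1) := by
      have h2 : ⌊X/q⌋₊ < 2^(m+1) := Nat.lt_pow_succ_log_self (by norm_num) _
      have h3 := Nat.lt_of_floor_lt h2
      exact_mod_cast h3
    have hmK : m ≤ Nat.log 2 ⌊X⌋₊ := by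
      apply Nat.log_mono_right
      apply Nat.floor_le_floor
      exact div_le_self hX0.le (by linarith)
    have h4 : Real.log (X/q) ≤ (m:ℝ)+1 := by
      calc Real.log (X/q) ≤ Real.log (2^(m+1)) := Real.log_le_log (by positivity) h1.le
        _ = (m+1) * Real.log 2 := by rw [Real.log_pow]; push_cast; ring
        _ ≤ (m+1) * 1 := by
            gcongr
            have := Real.log_two_lt_d9
            linarith
        _ = _ := by ring
    have h5 : (m:ℝ)+1 ≤ exp 1 * ∑ k ∈ Finset.range (Nat.log 2 ⌊X⌋₊ + 1), exp (-q/(X/2^k)) := by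
      rw [Finset.mul_sum]
      calc (m:ℝ)+1 = ∑ k ∈ Finset.range (m+1), (1:ℝ) := by simp
        _ ≤ ∑ k ∈ Finset.range (m+1), exp 1 * exp (-q/(X/2^k)) := by
            apply Finset.sum_le_sum
            intro k hk
            rw [← Real.exp_add, Real.one_le_exp_iff]
            have hk' : k ≤ m := by simp at hk; omega
            have h6 : (2:ℝ)^k ≤ X/q := by
              have h7 : 2^m ≤ ⌊X/q⌋₊ := Nat.pow_log_le_self 2 hfl
              calc (2:ℝ)^k ≤ 2^m := pow_le_pow_right₀ (by norm_num) hk'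
                _ ≤ (⌊X/q⌋₊ : ℝ) := by exact_mod_cast h7
                _ ≤ X/q := Nat.floor_le (by positivity)
            rw [neg_div]
            have : q/(X/2^k) ≤ 1 := by
              rw [div_le_one (by positivity), le_div_iff₀ (by positivity)]
              rw [le_div_iff₀ hq0] at h6
              linarith
            linarith
        _ ≤ _ := by
            apply Finset.sum_le_sum_of_subset_of_nonneg
            · intro k hk
              simp at hk ⊢
              omega
            · intros; positivity
    rw [hlog, abs_of_nonneg (Real.log_nonneg hy)]
    have h6 : exp (-q/X) ≤ 1 := by
      rw [Real.exp_le_one_iff, neg_div]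
      have : 0 ≤ q/X := by positivity
      linarith
    have h7 : 0 ≤ Real.log (X/q) := Real.log_nonneg hy
    have h8 : 0 < exp (-q/(2*X)) := Real.exp_pos _
    nlinarith
  · have hy : 1 ≤ q / X := by rw [le_div_iff₀ hX0]; linarith
    have hlog : Real.log X - Real.log q = -Real.log (q/X) := by
      rw [Real.log_div hq0.ne' hX0.ne']; ring
    rw [hlog, abs_neg, abs_of_nonneg (Real.log_nonneg hy)]
    have h1 : Real.log (q/X) ≤ exp (q/(2*X)) := by
      have := Real.log_le_sub_one_of_pos (x := q/X) (by positivity)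
      have h2 := Real.quadratic_le_exp_of_nonneg (x := q/(2*X)) (by positivity)
      have h3 : q/X = 2 * (q/(2*X)) := by field_simp
      nlinarith [sq_nonneg (q/(2*X) - 1)]
    have h2 : exp (-q/(2*X)) = exp (q/(2*X)) * exp (-q/X) := by
      rw [← Real.exp_add]; congr 1; field_simp; ring
    have h3 : 0 ≤ exp 1 * ∑ k ∈ Finset.range (Nat.log 2 ⌊X⌋₊ + 1), exp (-q/(X/2^k)) := by positivity
    rw [h2]
    have := mul_le_mul_of_nonneg_right h1 (Real.exp_pos (-q/X)).le
    linarith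

theorem real_part {ι : Type*} (q : ι → ℝ) (hq : ∀ i, 2 ≤ q i)
    (hs : ∀ X : ℝ, 0 < X → Summable fun i => Real.log (q i) * exp (-q i / X)) (C : ℝ)
    (hC : ∀ X, 3 ≤ X → |∑' i, Real.log (q i) * exp (-q i / X) - X| ≤ C * X / Real.log X) :
    ∃ c, ∀ x, 2 ≤ x → |∑' i, π * exp (-π * q i / x) - x / Real.log x| ≤ c * x / (Real.log x)^2 := by
  have hl2 : (1:ℝ)/2 ≤ Real.log 2 := by have := Real.log_two_gt_d9; linarith
  have hlq : ∀ i, 1/2 ≤ Real.log (q i) := fun i =>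
    hl2.trans (Real.log_le_log (by norm_num) (hq i))
  have hlog3 : ∀ X : ℝ, 3 ≤ X → 1 ≤ Real.log X := by
    intro X hX
    rw [Real.le_log_iff_exp_le (by linarith)]
    have := Real.exp_one_lt_d9
    linarith
  have hsP : ∀ X : ℝ, 0 < X → Summable fun i => exp (-q i / X) := by
    intro X hX
    refine Summable.of_nonneg_of_le (fun i => (Real.exp_pos _).le) (fun i => ?_) ((hs X hX).mul_left 2)
    have := hlq i
    have := Real.exp_pos (-q i / X)
    nlinarith
  set P : ℝ → ℝ := fun X => ∑' i, exp (-q i / X) with hP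
  set S : ℝ → ℝ := fun X => ∑' i, Real.log (q i) * exp (-q i / X) with hS
  have hexpmono : ∀ X Y : ℝ, 0 < X → X ≤ Y → ∀ i, exp (-q i / X) ≤ exp (-q i / Y) := by
    intro X Y hX hXY i
    rw [Real.exp_le_exp, neg_div, neg_div, neg_le_neg_iff]
    have := hq i
    gcongr
  have hPmono : ∀ X Y : ℝ, 0 < X → X ≤ Y → P X ≤ P Y := fun X Y hX hXY =>
    (hsP X hX).tsum_le_tsum (hexpmono X Y hX hXY) (hsP Y (hX.trans_le hXY))
  have hSmono : ∀ X Y : ℝ, 0 < X → X ≤ Y → S X ≤ S Y := fun X Y hX hXY =>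
    (hs X hX).tsum_le_tsum (fun i => mul_le_mul_of_nonneg_left (hexpmono X Y hX hXY i)
      (by have := hlq i; linarith)) (hs Y (hX.trans_le hXY))
  have hPnn : ∀ X, 0 ≤ P X := fun X => tsum_nonneg fun i => (Real.exp_pos _).le
  -- `S X ≤ C1 X`
  set C1 : ℝ := 1 + |C| with hC1
  have hC1p : 0 < C1 := by positivity
  have hS3 : ∀ X, 3 ≤ X → S X ≤ C1 * X := by
    intro X hX
    have h1 := (abs_le.1 (hC X hX)).2
    have h2 : C * X / Real.log X ≤ |C| * X := by
      rw [div_le_iff₀ (by have := hlog3 X hX; linarith)]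
      have := hlog3 X hX
      have h3 : C * X ≤ |C| * X := mul_le_mul_of_nonneg_right (le_abs_self C) (by linarith)
      have h4 : 0 ≤ |C| * X := by positivity
      nlinarith
    have : S X - X ≤ C * X / Real.log X := h1
    rw [hC1]; linarith
  have hS1 : ∀ X, 1 ≤ X → S X ≤ 3 * C1 * X := by
    intro X hX
    have := hSmono X (3*X) (by linarith) (by linarith)
    have := hS3 (3*X) (by linarith)
    linarith
  have hPS : ∀ X, 0 < X → P X ≤ 2 * S X := by
    intro X hX
    rw [hS, ← tsum_mul_left]
    refine (hsP X hX).tsum_le_tsum (fun i => ?_) ((hs X hX).mul_left 2)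
    have := hlq i
    have := Real.exp_pos (-q i / X)
    nlinarith
  have hP1 : ∀ X, 1 ≤ X → P X ≤ 6 * C1 * X := by
    intro X hX
    have := hPS X (by linarith)
    have := hS1 X hX
    linarith
  set C3 : ℝ := (12 * exp 1 + 12) * C1 with hC3
  have hC3p : 0 < C3 := by positivity
  have hPlog : ∀ Y, 1 ≤ Y → P Y ≤ C3 * Y / (1 + Real.log Y) := by
    intro Y hY
    have hL : 0 ≤ Real.log Y := Real.log_nonneg hY
    have hsq : 1 ≤ √Y := Real.one_le_sqrt.2 hY
    have h1 : P Y ≤ exp 1 * P (√Y) + 4/(1+Real.log Y) * S Y := by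
      rw [hS, hP, ← tsum_mul_left, ← tsum_mul_left,
        ← ((hsP (√Y) (by linarith)).mul_left _).tsum_add ((hs Y (by linarith)).mul_left _)]
      refine (hsP Y (by linarith)).tsum_le_tsum (fun i => ?_)
        (((hsP (√Y) (by linarith)).mul_left _).add ((hs Y (by linarith)).mul_left _))
      have hq0 : 0 < q i := by have := hq i; linarith
      have he := Real.exp_pos (-q i / Y)
      rcases le_total (q i) (√Y) with h | h
      · have h2 : 1 ≤ exp 1 * exp (-q i/√Y) := by
          rw [← Real.exp_add, Real.one_le_exp_iff, neg_div]
          have : q i / √Y ≤ 1 := by rw [div_le_one (by linarith)]; exact h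
          linarith
        have h3 : exp (-q i/Y) ≤ 1 := by
          rw [Real.exp_le_one_iff, neg_div]
          have : 0 ≤ q i/Y := by positivity
          linarith
        have : 0 ≤ 4/(1+Real.log Y) * (Real.log (q i) * exp (-q i/Y)) := by
          have := hlq i
          have : 0 ≤ Real.log (q i) := by linarith
          positivity
        linarith
      · have h2 : Real.log Y / 2 ≤ Real.log (q i) := by
          rw [← Real.log_sqrt (by linarith)]
          exact Real.log_le_log (by linarith) h
        have h3 := hlq i
        have h4 : 1 ≤ 4/(1+Real.log Y) * Real.log (q i) := by
          rw [div_mul_eq_mul_div, le_div_iff₀ (by linarith)]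
          linarith
        have h5 : 0 < exp 1 * exp (-q i/√Y) := by positivity
        have := mul_le_mul_of_nonneg_right h4 he.le
        linarith
    have h2 := hP1 (√Y) hsq
    have h3 := hS1 Y hY
    have h4 : √Y ≤ 2 * Y / (1 + Real.log Y) := by
      rw [le_div_iff₀ (by linarith)]
      have h5 : Real.log Y = 2 * Real.log (√Y) := by rw [Real.log_sqrt (by linarith)]; ring
      have h6 := Real.log_le_sub_one_of_pos (x := √Y) (by linarith)
      have h7 : √Y * √Y = Y := Real.mul_self_sqrt (by linarith)
      nlinarith
    calc P Y ≤ exp 1 * P (√Y) + 4/(1+Real.log Y) * S Y := h1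
      _ ≤ exp 1 * (6 * C1 * (2 * Y / (1 + Real.log Y))) + 4/(1+Real.log Y) * (3 * C1 * Y) := by
          gcongr
          exact h2.trans (by gcongr)
      _ = _ := by rw [hC3]; field_simp; ring
  set C4 : ℝ := C3 * (2 + 4 * exp 1) with hC4
  have hC4p : 0 < C4 := by positivity
  have hT : ∀ X, 3 ≤ X → |Real.log X * P X - S X| ≤ C4 * X / (1 + Real.log X) := by
    intro X hX
    have hX0 : 0 < X := by linarith
    have hL := hlog3 X hX
    have hsd : Summable fun i => (Real.log X - Real.log (q i)) * exp (-q i/X) := by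
      simp_rw [sub_mul]
      exact ((hsP X hX0).mul_left _).sub (hs X hX0)
    have h1 : Real.log X * P X - S X = ∑' i, (Real.log X - Real.log (q i)) * exp (-q i/X) := by
      rw [hS, hP, ← tsum_mul_left, ← ((hsP X hX0).mul_left _).tsum_sub (hs X hX0)]
      simp_rw [sub_mul]
    have hk : ∀ k ∈ Finset.range (Nat.log 2 ⌊X⌋₊ + 1), 1 ≤ X/2^k := by
      intro k hk
      rw [one_le_div (by positivity)]
      have hk' : k ≤ Nat.log 2 ⌊X⌋₊ := by simp at hk; omega
      have hfl : ⌊X⌋₊ ≠ 0 := by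
        have := Nat.floor_pos.2 (show 1 ≤ X by linarith)
        omega
      have h7 : 2^(Nat.log 2 ⌊X⌋₊) ≤ ⌊X⌋₊ := Nat.pow_log_le_self 2 hfl
      calc (2:ℝ)^k ≤ 2^(Nat.log 2 ⌊X⌋₊) := pow_le_pow_right₀ (by norm_num) hk'
        _ ≤ (⌊X⌋₊ : ℝ) := by exact_mod_cast h7
        _ ≤ X := Nat.floor_le (by positivity)
    have hsk : ∀ k ∈ Finset.range (Nat.log 2 ⌊X⌋₊ + 1), Summable fun i => exp (-q i/(X/2^k)) :=
      fun k _ => hsP _ (by positivity)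
    have hss := ((summable_sum hsk).mul_left (exp 1))
    have h2 : |Real.log X * P X - S X| ≤ P (2*X) + exp 1 *
        ∑ k ∈ Finset.range (Nat.log 2 ⌊X⌋₊ + 1), P (X/2^k) := by
      rw [h1, hP, ← Summable.tsum_finsetSum hsk, ← tsum_mul_left,
        ← (hsP (2*X) (by linarith)).tsum_add hss]
      have h3 : |∑' i, (Real.log X - Real.log (q i)) * exp (-q i/X)| ≤
          ∑' i, |(Real.log X - Real.log (q i)) * exp (-q i/X)| := by
        have := norm_tsum_le_tsum_norm hsd.norm
        simpa only [Real.norm_eq_abs] using this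
      refine h3.trans (hsd.abs.tsum_le_tsum (fun i => ?_) ((hsP (2*X) (by linarith)).add hss))
      rw [abs_mul, abs_of_pos (Real.exp_pos _)]
      exact p8_pointwise X (q i) (by linarith) (hq i)
    have h3 : ∑ k ∈ Finset.range (Nat.log 2 ⌊X⌋₊ + 1), P (X/2^k) ≤ C3 * X/(1+Real.log X) * 4 := by
      calc _ ≤ ∑ k ∈ Finset.range (Nat.log 2 ⌊X⌋₊ + 1), C3 * X/(1+Real.log X) * (((k:ℝ)+1)/2^k) := by
            apply Finset.sum_le_sum
            intro k hk1
            refine (hPlog _ (hk k hk1)).trans ?_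
            have hk2 := Real.log_nonneg (hk k hk1)
            have h5 : Real.log X = Real.log (X/2^k) + k * Real.log 2 := by
              rw [Real.log_div hX0.ne' (by positivity), Real.log_pow]; ring
            have h6 : Real.log 2 ≤ 1 := by have := Real.log_two_lt_d9; linarith
            have h7 : 1 + Real.log X ≤ (1 + Real.log (X/2^k)) * (k+1) := by
              have h8 : (k:ℝ) * Real.log 2 ≤ k * 1 := by gcongr
              have h9 : 0 ≤ Real.log (X/2^k) * k := by positivity
              nlinarith
            rw [div_mul_div_comm, div_le_div_iff₀ (by linarith) (by positivity)]
            calc C3 * (X/2^k) * ((1+Real.log X) * 2^k) = C3 * X * (1 + Real.log X) := by field_simp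
              _ ≤ C3 * X * ((1 + Real.log (X/2^k)) * (k+1)) := by gcongr
              _ = _ := by ring
        _ ≤ _ := by
          rw [← Finset.mul_sum]
          gcongr
          exact p8_sum_dyadic _
    have h4 : P (2*X) ≤ C3 * X/(1+Real.log X) * 2 := by
      refine (hPlog _ (by linarith)).trans ?_
      have : Real.log X ≤ Real.log (2*X) := Real.log_le_log hX0 (by linarith)
      calc C3 * (2*X)/(1+Real.log (2*X)) ≤ C3 * (2*X)/(1+Real.log X) := by gcongr
        _ = _ := by ring
    calc _ ≤ _ := h2
      _ ≤ C3 * X/(1+Real.log X) * 2 + exp 1 * (C3 * X/(1+Real.log X) * 4) := by gcongr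
      _ = _ := by rw [hC4]; ring
  set C5 : ℝ := C4 + |C| with hC5
  have hC5p : 0 < C5 := by positivity
  have hPX : ∀ X, 3 ≤ X → |P X - X/Real.log X| ≤ C5 * X/(Real.log X)^2 := by
    intro X hX
    have hL := hlog3 X hX
    have hL0 : 0 < Real.log X := by linarith
    have h1 := hT X hX
    have h2 : |S X - X| ≤ C * X / Real.log X := hC X hX
    have h3 : |Real.log X * P X - X| ≤ C5 * X / Real.log X := by
      have h4 : Real.log X * P X - X = (Real.log X * P X - S X) + (S X - X) := by ring
      rw [h4]
      refine (abs_add_le _ _).trans ?_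
      calc _ ≤ C4 * X / (1 + Real.log X) + C * X / Real.log X := add_le_add h1 h2
        _ ≤ C4 * X / Real.log X + |C| * X / Real.log X := by
            gcongr
            · linarith
            · exact le_abs_self C
        _ = _ := by rw [hC5]; ring
    have h4 : P X - X/Real.log X = (Real.log X * P X - X)/Real.log X := by field_simp
    rw [h4, abs_div, abs_of_pos hL0, div_le_iff₀ hL0]
    refine h3.trans (le_of_eq ?_)
    field_simp
  have hpi3 := Real.pi_gt_three
  have hpi4 := Real.pi_lt_four
  refine ⟨(9 * C5 + 6) + (9 + 81 * π * P 3), fun x hx => ?_⟩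
  have hlx : 0 < Real.log x := Real.log_pos (by linarith)
  have hrw : ∑' i, π * exp (-π * q i / x) = π * P (x/π) := by
    rw [hP, ← tsum_mul_left]
    congr 1; ext i; congr 2
    field_simp
  rw [hrw]
  rcases le_total (3*π) x with h | h
  · set X := x/π with hXdef
    have hX : 3 ≤ X := by rw [hXdef, le_div_iff₀ (by linarith)]; exact h
    have hxX : x = π * X := by rw [hXdef]; field_simp
    have hd := hlog3 X hX
    have hlpi : Real.log π ≤ 2 := by
      have := Real.log_le_log (by linarith) hpi4.le
      have h4 : Real.log 4 = 2 * Real.log 2 := by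
        rw [show (4:ℝ) = 2^2 by norm_num, Real.log_pow]; norm_num
      have := Real.log_two_lt_d9
      linarith
    have hlpi0 : 0 ≤ Real.log π := Real.log_nonneg (by linarith)
    have hl : Real.log x = Real.log π + Real.log X := by
      rw [hxX, Real.log_mul (by linarith) (by linarith)]
    have h3d : Real.log x ≤ 3 * Real.log X := by rw [hl]; linarith
    have hx0 : 0 < x := by linarith
    have h1 : |π * P X - x/Real.log X| ≤ 9 * C5 * x / (Real.log x)^2 := by
      have h2 : π * P X - x/Real.log X = π * (P X - X/Real.log X) := by rw [hxX]; ring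
      rw [h2, abs_mul, abs_of_pos (by linarith : 0 < π)]
      calc _ ≤ π * (C5 * X/(Real.log X)^2) := by gcongr; exact hPX X hX
        _ = C5 * x / (Real.log X)^2 := by rw [hxX]; ring
        _ ≤ 9 * C5 * x / (Real.log x)^2 := by
          rw [div_le_div_iff₀ (by positivity) (by positivity)]
          calc C5 * x * (Real.log x)^2 ≤ C5 * x * (3 * Real.log X)^2 := by gcongr
            _ = _ := by ring
    have h2 : |x/Real.log X - x/Real.log x| ≤ 6 * x/(Real.log x)^2 := by
      have h3 : x/Real.log X - x/Real.log x = x * Real.log π / (Real.log X * Real.log x) := by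
        have : Real.log X ≠ 0 := by linarith
        field_simp
        rw [hl]; ring
      rw [h3, abs_of_nonneg (by positivity), div_le_div_iff₀ (by positivity) (by positivity)]
      calc x * Real.log π * (Real.log x)^2 ≤ x * 2 * (Real.log x * (3 * Real.log X)) := by
            rw [sq]; gcongr
        _ = _ := by ring
    have h3 : π * P X - x/Real.log x = (π * P X - x/Real.log X) + (x/Real.log X - x/Real.log x) := by ring
    rw [h3]
    refine (abs_add_le _ _).trans ((add_le_add h1 h2).trans ?_)
    rw [← add_div]
    have := hPnn 3
    have h9 : 0 ≤ (9 + 81 * π * P 3) * x := by positivity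
    gcongr
    nlinarith
  · have hlog9 : Real.log x ≤ 9 := by
      have h1 : x ≤ 12 := by linarith
      have h2 : Real.log x ≤ Real.log (2^4) := Real.log_le_log (by linarith) (by linarith)
      rw [Real.log_pow] at h2
      have := Real.log_two_lt_d9
      push_cast at h2
      linarith
    have h1 : P (x/π) ≤ P 3 := hPmono _ _ (by positivity) (by rw [div_le_iff₀ (by linarith)]; exact h)
    have h2 := hPnn (x/π)
    have hx0 : 0 < x := by linarith
    have h3 : |π * P (x/π) - x/Real.log x| ≤ π * P 3 + x/Real.log x := by
      rw [abs_le]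
      have h4 : 0 ≤ x/Real.log x := by positivity
      have h5 : π * P (x/π) ≤ π * P 3 := by gcongr
      have h6 : 0 ≤ π * P (x/π) := by positivity
      constructor <;> linarith
    refine h3.trans ?_
    rw [le_div_iff₀ (by positivity), add_mul]
    have h4 : x/Real.log x * (Real.log x)^2 = x * Real.log x := by field_simp
    rw [h4]
    have h5 : (Real.log x)^2 ≤ 81 := by nlinarith
    have h6 := hPnn 3
    have h7 : π * P 3 * (Real.log x)^2 ≤ π * P 3 * 81 := by gcongr
    have h8 : 0 ≤ π * P 3 := by positivity
    have h9 : x * Real.log x ≤ x * 9 := by gcongr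
    nlinarith [mul_nonneg h8 (by linarith : (0:ℝ) ≤ x - 1), mul_nonneg hC5p.le hx0.le]

end GW
end



/-- **Prime ideal average of the Gaussian weight in imaginary quadratic fields:**
with `W(𝔫) = π exp(−π 𝒩(𝔫)/N)`, for all `N ≥ 3` and nonzero ideals `𝔯` with
`𝒩(𝔯) ≤ N/2`, one has
`∑_{𝔰∈ℙ} W(𝔯𝔰) = (N/𝒩(𝔯))/log(N/𝒩(𝔯)) + O((N/𝒩(𝔯))/log²(N/𝒩(𝔯)))`. -/
theorem gaussian_weight_prime_sum
    (K : Type*) [Field K] [NumberField K]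
    (hdeg : Module.finrank ℚ K = 2)
    (himag : IsEmpty (K →+* ℝ))
    (hclass : NumberField.classNumber K = 1) :
    ∃ c : ℝ, ∀ N : ℝ, 3 ≤ N → ∀ r : Ideal (𝓞 K), r ≠ ⊥ → (Ideal.absNorm r : ℝ) ≤ N / 2 →
      |(∑' s : {p : Ideal (𝓞 K) // p ≠ ⊥ ∧ p.IsPrime},
            Real.pi * Real.exp (-Real.pi * (Ideal.absNorm (r * s.1) : ℝ) / N)) -
          (N / (Ideal.absNorm r : ℝ)) / Real.log (N / (Ideal.absNorm r : ℝ))|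
        ≤ c * (N / (Ideal.absNorm r : ℝ)) / (Real.log (N / (Ideal.absNorm r : ℝ)))^2 := by
  have hpid : IsPrincipalIdealRing (𝓞 K) := NumberField.classNumber_eq_one_iff.1 hclass
  obtain ⟨κ, C, hκ, hcount⟩ := GW.ideal_count K hdeg himag hpid
  obtain ⟨J, B, hB, hJd, hJb, hZJ⟩ := GW.abel_part
    (fun n => (Nat.card {I : Ideal (𝓞 K) // Ideal.absNorm I = n} : ℝ)) (fun n => by positivity) κ C hcount
  obtain ⟨J1, B1, hB1, hJ1d, hJ1b, hZ1⟩ := GW.abel_part (fun _ => 1) (fun _ => zero_le_one) 1 0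
    (fun n => by simp)
  let q : {p : Ideal (𝓞 K) // p ≠ ⊥ ∧ p.IsPrime} → ℝ := fun p => (Ideal.absNorm p.1 : ℝ)
  have hq : ∀ i, 2 ≤ q i := by
    intro p
    have h0 : Ideal.absNorm p.1 ≠ 0 := fun h => p.2.1 (Ideal.absNorm_eq_zero_iff.1 h)
    have h1 : Ideal.absNorm p.1 ≠ 1 := fun h => p.2.2.ne_top (Ideal.absNorm_eq_one_iff.1 h)
    have h2 : 2 ≤ Ideal.absNorm p.1 := by omega
    show (2:ℝ) ≤ (Ideal.absNorm p.1 : ℝ)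
    exact_mod_cast h2
  have heul := fun (s : ℂ) (hs : 1 < s.re) => GW.euler_part K s (hZJ s hs).1
  have hsum : ∀ σ : ℝ, 1 < σ → Summable fun i => (q i)^(-σ) := by
    intro σ hσ
    exact (heul (σ : ℂ) (by simpa using hσ)).2.2
  obtain ⟨H, A, hA, hH, hHb⟩ := GW.theta_part q hq hsum
    (LSeries (fun n => ((Nat.card {I : Ideal (𝓞 K) // Ideal.absNorm I = n} : ℝ) : ℂ))) J J1 κ B B1
    hκ hB hB1 hJd hJb (fun s hs => (hZJ s hs).2) hJ1d hJ1b (fun s hs => (heul s hs).1)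
    (fun s hs => by simpa [q] using (heul s hs).2.1)
  have hcI : Countable {p : Ideal (𝓞 K) // p ≠ ⊥ ∧ p.IsPrime} := by
    have hs2 := (hsum 2 (by norm_num)).countable_support
    have : Function.support (fun i => (q i)^(-(2:ℝ))) = Set.univ := by
      ext i
      have : 0 < q i := by have := hq i; linarith
      simp only [Function.mem_support, Set.mem_univ, iff_true]
      positivity
    rw [this, Set.countable_univ_iff] at hs2
    exact hs2
  obtain ⟨hs, C', hC'⟩ := GW.perron_part q hq (fun σ hσ => GW.summable_log_rpow q hq hsum σ hσ) J1 H A hA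
    (fun s hs => by
      rw [← LSeries_one_eq_riemannZeta hs]
      have := (hZ1 s hs).2
      simp only [Complex.ofReal_one] at this
      exact this) hH hHb
  obtain ⟨c, hc⟩ := GW.real_part q hq hs C' hC'
  refine ⟨c, fun N hN r hr hrN => ?_⟩
  have hr0 : (0:ℝ) < Ideal.absNorm r := by
    exact_mod_cast Nat.pos_of_ne_zero fun h => hr (Ideal.absNorm_eq_zero_iff.1 h)
  have hx : 2 ≤ N / (Ideal.absNorm r : ℝ) := by
    rw [le_div_iff₀ hr0]; linarith
  have := hc _ hx
  have e : ∀ s : {p : Ideal (𝓞 K) // p ≠ ⊥ ∧ p.IsPrime},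
      Real.pi * Real.exp (-Real.pi * (Ideal.absNorm (r * s.1) : ℝ) / N) =
      Real.pi * Real.exp (-Real.pi * q s / (N / (Ideal.absNorm r : ℝ))) := by
    intro s
    have hN0 : N ≠ 0 := by linarith
    congr 2
    rw [map_mul]
    simp only [q]
    push_cast
    field_simp
  rw [tsum_congr e]
  exact this
end
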